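/- arXiv:1308.3037 — 6 statements merged into one kernel-verified Lean document; each statement's English description precedes it below -/
import Mathlib

section
/- Let G be a graph of order n that contains no matching of t independent edges, where t ≤ ⌊n/2⌋. Then |E(G)| ≤ max{ (t-1)(2t-1), (t-1)(2n-t)/2 }. -/
/-- A matching of a graph: a pairwise disjoint set of its edges. -/
def IsMatchingOn {V : Type*} (G : SimpleGraph V) (M : Set (Sym2 V)) : Prop :=
  M ⊆ G.edgeSet ∧ M.Pairwise fun e f => ∀ v, v ∈ e → v ∉ f

open scoped FinsetFamily

/-- A set family has a matching of size `t`. -/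
def EGHasMatch (F : Finset (Finset ℕ)) (t : ℕ) : Prop :=
  ∃ M : Finset (Finset ℕ), M ⊆ F ∧ M.card = t ∧ ∀ e ∈ M, ∀ f ∈ M, e ≠ f → Disjoint e f

lemma eg_compress_pos {i j : ℕ} (hij : i ≠ j) {a : Finset ℕ} (hj : j ∈ a) (hi : i ∉ a) :
    UV.compress {i} {j} a = insert i (a.erase j) := by
  rw [UV.compress_of_disjoint_of_le (by simpa using hi) (by simpa using hj)]
  ext x
  simp only [Finset.sup_eq_union, Finset.mem_sdiff, Finset.mem_union, Finset.mem_singleton,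
    Finset.mem_insert, Finset.mem_erase]
  grind

lemma eg_compress_neg {i j : ℕ} {a : Finset ℕ} (h : ¬ (j ∈ a ∧ i ∉ a)) :
    UV.compress {i} {j} a = a := by
  unfold UV.compress
  rw [if_neg]
  rintro ⟨h1, h2⟩
  exact h ⟨by simpa using h2, by simpa using h1⟩

lemma eg_compress_match {i j : ℕ} (hij : i ≠ j) (F : Finset (Finset ℕ)) (t : ℕ)
    (h : EGHasMatch (𝓒 {i} {j} F) t) : EGHasMatch F t := by
  obtain ⟨M, hMF, hc, hd⟩ := h
  by_cases hsub : M ⊆ F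
  · exact ⟨M, hsub, hc, hd⟩
  obtain ⟨e, heM, heF⟩ := Finset.not_subset.1 hsub
  have key : ∀ a ∈ M, a ∉ F → i ∈ a ∧ j ∉ a ∧ insert j (a.erase i) ∈ F := by
    intro a ha haF
    have h0 := hMF ha
    have h1 := UV.le_of_mem_compression_of_notMem h0 haF
    have h2 := UV.disjoint_of_mem_compression_of_notMem h0 haF
    have h3 := UV.sup_sdiff_mem_of_mem_compression_of_notMem h0 haF
    have h1' : i ∈ a := by simpa using h1
    have h2' : j ∉ a := by simpa using h2
    refine ⟨h1', h2', ?_⟩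
    convert h3 using 1
    ext x
    simp only [Finset.sup_eq_union, Finset.mem_sdiff, Finset.mem_union, Finset.mem_singleton,
      Finset.mem_insert, Finset.mem_erase]
    grind
  have hinj : Function.Injective (fun a : Finset ℕ => a.image (Equiv.swap i j)) :=
    Finset.image_injective (Equiv.swap i j).injective
  refine ⟨M.image (fun a => a.image (Equiv.swap i j)), ?_, ?_, ?_⟩
  · intro b hb
    obtain ⟨a, ha, rfl⟩ := Finset.mem_image.1 hb
    obtain ⟨hie, hje, heF'⟩ := key e heM heF
    have hmem : ∀ x, x ∈ a.image (Equiv.swap i j) ↔ Equiv.swap i j x ∈ a := by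
      intro x
      rw [Finset.mem_image]
      constructor
      · rintro ⟨y, hy, rfl⟩
        simpa using hy
      · intro hx
        exact ⟨_, hx, by simp⟩
    by_cases hae : a = e
    · subst hae
      convert heF' using 1
      ext x
      rw [hmem, Equiv.swap_apply_def]
      simp only [Finset.mem_insert, Finset.mem_erase]
      grind
    · have hia : i ∉ a := fun h => (Finset.disjoint_left.1 (hd a ha e heM hae) h) hie
      have haF : a ∈ F := by
        by_contra h
        exact hia (key a ha h).1
      by_cases hja : j ∈ a
      · have h1 := UV.sup_sdiff_mem_of_mem_compression (hMF ha) (by simpa using hja)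
          (by simpa using hia)
        convert h1 using 1
        ext x
        rw [hmem, Equiv.swap_apply_def]
        simp only [Finset.sup_eq_union, Finset.mem_sdiff, Finset.mem_union, Finset.mem_singleton]
        grind
      · convert haF using 1
        ext x
        rw [hmem, Equiv.swap_apply_def]
        grind
  · rw [Finset.card_image_of_injective _ hinj, hc]
  · intro a ha b hb hab
    obtain ⟨a, haM, rfl⟩ := Finset.mem_image.1 ha
    obtain ⟨b, hbM, rfl⟩ := Finset.mem_image.1 hb
    have : a ≠ b := fun h => hab (by rw [h])
    exact (Finset.disjoint_image (Equiv.swap i j).injective).2 (hd a haM b hbM this)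

/-- Weight of a family. -/
def egW (F : Finset (Finset ℕ)) : ℕ := ∑ e ∈ F, ∑ x ∈ e, x

lemma eg_weight_move {i j : ℕ} (hij : i < j) {a : Finset ℕ} (hj : j ∈ a) (hi : i ∉ a) :
    ∑ x ∈ insert i (a.erase j), x < ∑ x ∈ a, x := by
  rw [Finset.sum_insert (by simp [hi]), ← Finset.add_sum_erase a (fun x => x) hj]
  omega

lemma eg_weight_lt {i j : ℕ} (hij : i < j) (F : Finset (Finset ℕ)) {a : Finset ℕ} (ha : a ∈ F)
    (hj : j ∈ a) (hi : i ∉ a) (hn : insert i (a.erase j) ∉ F) :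
    egW (𝓒 {i} {j} F) < egW F := by
  unfold egW UV.compression
  rw [Finset.sum_union UV.compress_disjoint, Finset.filter_image,
    Finset.sum_image UV.compress_injOn,
    ← Finset.sum_filter_add_sum_filter_not F (fun a => UV.compress {i} {j} a ∈ F)]
  refine Nat.add_lt_add_left ?_ _
  refine Finset.sum_lt_sum ?_ ⟨a, ?_, ?_⟩
  · intro b hb
    by_cases h : j ∈ b ∧ i ∉ b
    · rw [eg_compress_pos hij.ne h.1 h.2]
      exact (eg_weight_move hij h.1 h.2).le
    · rw [eg_compress_neg h]
  · rw [Finset.mem_filter, eg_compress_pos hij.ne hj hi]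
    exact ⟨ha, hn⟩
  · rw [eg_compress_pos hij.ne hj hi]
    exact eg_weight_move hij hj hi

lemma eg_compress_range {i j n : ℕ} (hij : i < j) (F : Finset (Finset ℕ))
    (hF : F ⊆ Finset.powersetCard 2 (Finset.range n)) :
    𝓒 {i} {j} F ⊆ Finset.powersetCard 2 (Finset.range n) := by
  intro a ha
  rw [UV.mem_compression] at ha
  rcases ha with ha | ⟨-, b, hb, rfl⟩
  · exact hF ha.1
  · have hb' := Finset.mem_powersetCard.1 (hF hb)
    by_cases h : j ∈ b ∧ i ∉ b
    · rw [Finset.mem_powersetCard]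
      refine ⟨?_, by rw [UV.card_compress (by simp)]; exact hb'.2⟩
      rw [eg_compress_pos hij.ne h.1 h.2]
      intro x hx
      have hjn := Finset.mem_range.1 (hb'.1 h.1)
      rcases Finset.mem_insert.1 hx with rfl | hx
      · exact Finset.mem_range.2 (by omega)
      · exact hb'.1 (Finset.mem_of_mem_erase hx)
    · rw [eg_compress_neg h]
      exact hF hb

lemma eg_shifted (n t : ℕ) : ∀ (w : ℕ) (F : Finset (Finset ℕ)), egW F = w →
    F ⊆ Finset.powersetCard 2 (Finset.range n) → ¬ EGHasMatch F t →
    ∃ F' : Finset (Finset ℕ), F'.card = F.card ∧ F' ⊆ Finset.powersetCard 2 (Finset.range n) ∧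
      ¬ EGHasMatch F' t ∧
      ∀ i j, i < j → ∀ a ∈ F', j ∈ a → i ∉ a → insert i (a.erase j) ∈ F' := by
  intro w
  induction w using Nat.strong_induction_on with
  | _ w ih =>
    intro F hw hF hM
    by_cases hs : ∀ i j, i < j → ∀ a ∈ F, j ∈ a → i ∉ a → insert i (a.erase j) ∈ F
    · exact ⟨F, rfl, hF, hM, hs⟩
    · push Not at hs
      obtain ⟨i, j, hij, a, ha, hj, hi, hn⟩ := hs
      have hlt := eg_weight_lt hij F ha hj hi hn
      obtain ⟨F', h1, h2, h3, h4⟩ := ih _ (hw ▸ hlt) (𝓒 {i} {j} F) rfl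
        (eg_compress_range hij F hF) (fun h => hM (eg_compress_match hij.ne F t h))
      exact ⟨F', h1.trans (UV.card_compression _ _ _), h2, h3, h4⟩

lemma eg_arith (n s k : ℕ) (hk : k ≤ s) (hn : 2 * (s + 1) ≤ n) (m : ℕ)
    (hm : m ≤ (2 * s + 1 - k).choose 2 + k * (n - (2 * s + 1 - k))) :
    2 * m ≤ max (2 * (s * (2 * s + 1))) (s * (2 * n - (s + 1))) := by
  obtain ⟨d, rfl⟩ := Nat.exists_eq_add_of_le hk
  obtain ⟨r, rfl⟩ := Nat.exists_eq_add_of_le hn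
  have e1 : 2 * (k + d) + 1 - k = k + 2 * d + 1 := by omega
  have e2 : 2 * (k + d + 1) + r - (k + 2 * d + 1) = k + r + 1 := by omega
  have e3 : 2 * (2 * (k + d + 1) + r) - (k + d + 1) = 3 * (k + d) + 2 * r + 3 := by omega
  rw [e1, e2] at hm
  rw [e3]
  have hch : 2 * (k + 2 * d + 1).choose 2 = (k + 2 * d + 1) * (k + 2 * d) := by
    have := Nat.triangle_succ (k + 2 * d)
    rw [Nat.choose_two_right, Nat.mul_div_cancel' (Nat.even_mul_pred_self _).two_dvd]
    simp
  have hm2 : 2 * m ≤ (k + 2 * d + 1) * (k + 2 * d) + 2 * (k * (k + r + 1)) := by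
    rw [← hch]; omega
  rw [le_max_iff]
  by_contra! hcon
  obtain ⟨h1, h2⟩ := hcon
  have h3 := h1.trans_le hm2
  have h4 := h2.trans_le hm2
  rcases Nat.eq_zero_or_pos k with rfl | hkp
  · nlinarith
  rcases Nat.eq_zero_or_pos d with rfl | hdp
  · nlinarith
  -- f(k) > f(0) and f(k) > f(k+d) contradict convexity
  have h5 : k * (k + 4 * d + 1) < k * (2 * r + 2) := by nlinarith
  have h5' := Nat.lt_of_mul_lt_mul_left h5
  have h6 : d * (2 * k + 2 * r + 1) < d * (d + 0) + 0 := by nlinarith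
  have h6' := Nat.lt_of_mul_lt_mul_left h6
  omega

lemma eg_family (n t : ℕ) (ht : 1 ≤ t) (htn : 2 * t ≤ n) (F : Finset (Finset ℕ))
    (hF : F ⊆ Finset.powersetCard 2 (Finset.range n)) (hM : ¬ EGHasMatch F t) :
    2 * F.card ≤ max (2 * ((t - 1) * (2 * t - 1))) ((t - 1) * (2 * n - t)) := by
  obtain ⟨F', hc, hF', hM', hs⟩ := eg_shifted n t _ F rfl hF hM
  rw [← hc]
  obtain ⟨s, rfl⟩ : ∃ s, t = s + 1 := ⟨t - 1, by omega⟩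
  have hk : ∃ k ≤ s, ({k, 2 * s + 1 - k} : Finset ℕ) ∉ F' := by
    by_contra! hall
    apply hM'
    have hdis : ∀ k ≤ s, ∀ l ≤ s, k ≠ l →
        Disjoint ({k, 2 * s + 1 - k} : Finset ℕ) {l, 2 * s + 1 - l} := by
      intro k hk l hl hkl
      simp only [Finset.disjoint_insert_left, Finset.disjoint_singleton_left,
        Finset.mem_insert, Finset.mem_singleton]
      omega
    refine ⟨(Finset.range (s + 1)).image (fun k => {k, 2 * s + 1 - k}), ?_, ?_, ?_⟩
    · intro e he
      obtain ⟨k, hk, rfl⟩ := Finset.mem_image.1 he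
      exact hall k (by have := Finset.mem_range.1 hk; omega)
    · rw [Finset.card_image_of_injOn, Finset.card_range]
      intro k hk l hl hkl
      have hk' := Finset.mem_range.1 hk
      have hl' := Finset.mem_range.1 hl
      by_contra hne
      have := hdis k (by omega) l (by omega) hne
      dsimp only at hkl
      rw [hkl, disjoint_self] at this
      simp at this
    · intro e he f hf hef
      obtain ⟨k, hk, rfl⟩ := Finset.mem_image.1 he
      obtain ⟨l, hl, rfl⟩ := Finset.mem_image.1 hf
      have hk' := Finset.mem_range.1 hk
      have hl' := Finset.mem_range.1 hl
      exact hdis k (by omega) l (by omega) (fun h => hef (by rw [h]))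
  obtain ⟨k, hks, hkF⟩ := hk
  have hpair : ∀ a b c, ({a, b} : Finset ℕ) ∈ F' → a ≠ b → c ≤ a → c ≠ b →
      ({c, b} : Finset ℕ) ∈ F' := by
    intro a b c h hab hca hcb
    rcases hca.eq_or_lt with rfl | hlt
    · exact h
    have := hs c a hlt _ h (by simp) (by simp [hlt.ne, hcb])
    rwa [Finset.erase_insert (by simpa using hab)] at this
  have hcov : F' ⊆ Finset.powersetCard 2 (Finset.range (2 * s + 1 - k)) ∪
      (Finset.range k ×ˢ Finset.Ico (2 * s + 1 - k) n).image (fun p => {p.1, p.2}) := by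
    intro e he
    have he' := Finset.mem_powersetCard.1 (hF' he)
    have hab : ∃ a b, a < b ∧ e = {a, b} := by
      obtain ⟨x, y, hxy, rfl⟩ := Finset.card_eq_two.1 he'.2
      rcases lt_or_gt_of_ne hxy with h | h
      · exact ⟨x, y, h, rfl⟩
      · exact ⟨y, x, h, Finset.pair_comm _ _⟩
    obtain ⟨a, b, hab, rfl⟩ := hab
    have hbn : b < n := Finset.mem_range.1 (he'.1 (by simp))
    rw [Finset.mem_union]
    by_cases hb : b < 2 * s + 1 - k
    · left
      rw [Finset.mem_powersetCard]
      refine ⟨?_, he'.2⟩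
      intro x hx
      simp only [Finset.mem_insert, Finset.mem_singleton] at hx
      rw [Finset.mem_range]
      omega
    · right
      rw [Finset.mem_image]
      refine ⟨(a, b), ?_, rfl⟩
      rw [Finset.mem_product, Finset.mem_range, Finset.mem_Ico]
      refine ⟨?_, by dsimp only; omega, hbn⟩
      by_contra hak
      dsimp only at hak
      have h1 := hpair a b k he hab.ne (by omega) (by omega)
      rw [Finset.pair_comm] at h1
      have h2 := hpair b k (2 * s + 1 - k) h1 (by omega) (by omega) (by omega)
      rw [Finset.pair_comm] at h2
      exact hkF h2
  have hcard : F'.card ≤ (2 * s + 1 - k).choose 2 + k * (n - (2 * s + 1 - k)) := by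
    refine (Finset.card_le_card hcov).trans ((Finset.card_union_le _ _).trans ?_)
    refine Nat.add_le_add ?_ (Finset.card_image_le.trans ?_)
    · simp
    · simp
  have := eg_arith n s k hks htn _ hcard
  simpa [show 2 * (s + 1) - 1 = 2 * s + 1 by omega] using this

/-- If a graph of order n has no matching of t independent edges
(t ≤ ⌊n/2⌋), then |E(G)| ≤ max{(t-1)(2t-1), (t-1)(2n-t)/2}. -/
theorem stmt_6 {V : Type*} [Fintype V] (n t : ℕ) (ht : 1 ≤ t) (htn : t ≤ n / 2)
    (G : SimpleGraph V) (hn : Fintype.card V = n)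
    (hno : ¬ ∃ M : Set (Sym2 V), IsMatchingOn G M ∧ M.ncard = t) :
    2 * G.edgeSet.ncard ≤ max (2 * ((t - 1) * (2 * t - 1))) ((t - 1) * (2 * n - t)) := by
  classical
  let φ : V → ℕ := fun v => (Fintype.equivFinOfCardEq hn v : ℕ)
  have hφ : Function.Injective φ := fun a b h =>
    (Fintype.equivFinOfCardEq hn).injective (Fin.ext h)
  have hφn : ∀ v, φ v < n := fun v => (Fintype.equivFinOfCardEq hn v).2
  let ψ : Sym2 V → Finset ℕ := fun e => e.toFinset.image φ
  have hmem : ∀ v e, φ v ∈ ψ e ↔ v ∈ e := by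
    intro v e
    simp only [ψ, Finset.mem_image, Sym2.mem_toFinset]
    constructor
    · rintro ⟨w, hw, h⟩
      exact hφ h ▸ hw
    · intro h
      exact ⟨v, h, rfl⟩
  have hψ : Function.Injective ψ := by
    intro e f h
    apply Sym2.ext
    intro v
    rw [← hmem, ← hmem, h]
  have hfin : G.edgeSet.Finite := Set.toFinite _
  have hcard : G.edgeSet.ncard = (hfin.toFinset.image ψ).card := by
    rw [Finset.card_image_of_injective _ hψ, Set.ncard_eq_toFinset_card _ hfin]
  rw [hcard]
  refine eg_family n t ht (by omega) _ ?_ ?_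
  · intro a ha
    obtain ⟨e, he, rfl⟩ := Finset.mem_image.1 ha
    rw [Set.Finite.mem_toFinset] at he
    rw [Finset.mem_powersetCard]
    constructor
    · intro x hx
      obtain ⟨v, -, rfl⟩ := Finset.mem_image.1 hx
      exact Finset.mem_range.2 (hφn v)
    · rw [Finset.card_image_of_injective _ hφ]
      exact Sym2.card_toFinset_of_not_isDiag _ (G.not_isDiag_of_mem_edgeSet he)
  · rintro ⟨M, hMF, hMc, hMd⟩
    apply hno
    have himg : Set.image ψ (Set.preimage ψ (M : Set (Finset ℕ))) = M := by
      rw [Set.image_preimage_eq_iff]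
      intro a ha
      obtain ⟨e, -, rfl⟩ := Finset.mem_image.1 (hMF ha)
      exact ⟨e, rfl⟩
    refine ⟨Set.preimage ψ (M : Set (Finset ℕ)), ⟨?_, ?_⟩, ?_⟩
    · intro e he
      obtain ⟨f, hf, hfe⟩ := Finset.mem_image.1 (hMF he)
      rw [← hψ hfe]
      simpa using hf
    · intro e he f hf hef v hve hvf
      exact Finset.disjoint_left.1 (hMd _ he _ hf (fun h => hef (hψ h)))
        ((hmem v e).2 hve) ((hmem v f).2 hvf)
    · rw [← Set.ncard_image_of_injective _ hψ, himg, Set.ncard_coe_finset, hMc]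
end

section
/- Let r and k be positive integers with r+k odd and k ≤ r, let H be the complete graph on vertex set {1,...,r+k}, and let (E_0, E_1, E_2) be an ordered partition of E(H). If |E_1| + 2|E_2| < min{ 3(r+k−1), (r+k+3)(r+k+5)/8 }, then H has an almost perfect matching M (covering all but one vertex) with M ∩ E_2 = ∅ and |M ∩ E_1| ≤ 1. -/
/-- The vertices covered by a set of edges. -/
def coveredSet {V : Type*} (M : Set (Sym2 V)) : Set V := {v | ∃ e ∈ M, v ∈ e}


section Helpers

variable {V : Type*} [DecidableEq V]

/-- weighted degree of `x` into `S` -/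
def wdeg (w : V → V → ℕ) (S : Finset V) (x : V) : ℕ := ∑ y ∈ S, w x y

/-- twice the total weight inside `S` -/
def wtot (w : V → V → ℕ) (S : Finset V) : ℕ := ∑ x ∈ S, wdeg w S x

/-- `S` has a perfect matching of cost `c` -/
inductive PMat (w : V → V → ℕ) : Finset V → ℕ → Prop
  | nil : PMat w ∅ 0
  | cons (S : Finset V) (c : ℕ) (u v : V) (hu : u ∉ S) (hv : v ∉ S) (huv : u ≠ v)
      (h : PMat w S c) : PMat w (insert u (insert v S)) (c + w u v)

lemma wdeg_erase (w : V → V → ℕ) (S : Finset V) (u x : V) (hu : u ∈ S) :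
    wdeg w S x = wdeg w (S.erase u) x + w x u := by
  unfold wdeg
  rw [Finset.sum_erase_add _ _ hu]

lemma wtot_erase (w : V → V → ℕ) (hs : ∀ x y, w x y = w y x) (h0 : ∀ x, w x x = 0)
    (S : Finset V) (u : V) (hu : u ∈ S) :
    wtot w S = wtot w (S.erase u) + 2 * wdeg w S u := by
  have h1 : wtot w S = ∑ x ∈ S.erase u, wdeg w S x + wdeg w S u := by
    unfold wtot
    rw [Finset.sum_erase_add _ _ hu]
  have h2 : ∑ x ∈ S.erase u, wdeg w S x = wtot w (S.erase u) + wdeg w (S.erase u) u := by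
    unfold wtot
    rw [show wdeg w (S.erase u) u = ∑ x ∈ S.erase u, w x u from
      Finset.sum_congr rfl (fun x _ => hs u x), ← Finset.sum_add_distrib]
    exact Finset.sum_congr rfl (fun x _ => wdeg_erase w S u x hu)
  have h3 := wdeg_erase w S u u hu
  rw [h0] at h3
  omega

lemma wtot_erase2 (w : V → V → ℕ) (hs : ∀ x y, w x y = w y x) (h0 : ∀ x, w x x = 0)
    (S : Finset V) (u v : V) (hu : u ∈ S) (hv : v ∈ S) (huv : v ≠ u) :
    wtot w S + 2 * w u v = wtot w ((S.erase u).erase v) + 2 * wdeg w S u + 2 * wdeg w S v := by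
  have h1 := wtot_erase w hs h0 S u hu
  have h2 := wtot_erase w hs h0 (S.erase u) v (Finset.mem_erase.2 ⟨huv, hv⟩)
  have h3 := wdeg_erase w S u v hu
  rw [hs v u] at h3
  omega

lemma PMat.cons_erase {w : V → V → ℕ} {S : Finset V} {c : ℕ} {u v : V} (hu : u ∈ S) (hv : v ∈ S)
    (huv : v ≠ u) (h : PMat w ((S.erase u).erase v) c) : PMat w S (c + w u v) := by
  have := PMat.cons _ c u v (by simp) (by simp) huv.symm h
  rwa [Finset.insert_erase (Finset.mem_erase.2 ⟨huv, hv⟩), Finset.insert_erase hu] at this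

lemma avg_lemma (w : V → V → ℕ) (hs : ∀ x y, w x y = w y x) (h0 : ∀ x, w x x = 0) (m : ℕ) :
    ∀ S : Finset V, S.card = 2 * m → ∃ c, PMat w S c ∧ 2 * c * (2 * m - 1) ≤ wtot w S := by
  induction m with
  | zero =>
    intro S hS
    have : S = ∅ := Finset.card_eq_zero.1 (by omega)
    subst this
    exact ⟨0, PMat.nil, by simp⟩
  | succ m ih =>
    intro S hS
    obtain ⟨u, hu⟩ : S.Nonempty := Finset.card_pos.1 (by omega)
    have hcu : (S.erase u).card = 2 * m + 1 := by rw [Finset.card_erase_of_mem hu]; omega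
    have hT := wtot_erase w hs h0 S u hu
    have hne : (S.erase u).Nonempty := Finset.card_pos.1 (by omega)
    have key : ∃ v ∈ S.erase u, (2 * (m : ℤ) + 1) * (4 * m * w u v + wtot w S - 2 * wdeg w S u
        - 2 * wdeg w S v) ≤ (2 * m - 1) * wtot w S := by
      apply Finset.exists_le_of_sum_le hne
      rw [Finset.sum_const, ← Finset.mul_sum, Finset.sum_sub_distrib, Finset.sum_sub_distrib,
        Finset.sum_add_distrib, ← Finset.mul_sum, ← Finset.mul_sum, Finset.sum_const,
        Finset.sum_const, hcu]
      have e1 : ∑ i ∈ S.erase u, (w u i : ℤ) = wdeg w S u := by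
        rw [wdeg_erase w S u u hu, h0]
        simp [wdeg]
      have e2 : ∑ i ∈ S.erase u, (wdeg w S i : ℤ) = wtot w S - wdeg w S u := by
        unfold wtot
        rw [← Finset.sum_erase_add _ _ hu]
        simp
      rw [e1, ← Finset.mul_sum, e2]
      simp only [nsmul_eq_mul]
      push_cast
      apply le_of_eq
      ring
    obtain ⟨v, hv, hk⟩ := key
    obtain ⟨hvu, hvS⟩ := Finset.mem_erase.1 hv
    have hT2 := wtot_erase2 w hs h0 S u v hu hvS hvu
    have hc2 : ((S.erase u).erase v).card = 2 * m := by
      rw [Finset.card_erase_of_mem hv]; omega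
    obtain ⟨c, hc, hle⟩ := ih _ hc2
    refine ⟨c + w u v, PMat.cons_erase hu hvS hvu hc, ?_⟩
    rcases Nat.eq_zero_or_pos m with rfl | hm
    · have hE : (S.erase u).erase v = ∅ := Finset.card_eq_zero.1 (by omega)
      rw [hE] at hT2 hc
      have hc0 : c = 0 := by
        generalize hX : (∅ : Finset V) = X at hc
        cases hc with
        | nil => rfl
        | cons S c u v hu hv huv h => exact absurd hX.symm (Finset.insert_ne_empty _ _)
      have h1 := wdeg_erase w S u v hu
      have h2 := wdeg_erase w S v u hvS
      have h3 := hs u v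
      have h4 : wtot w (∅ : Finset V) = 0 := by simp [wtot]
      subst hc0
      norm_num
      omega
    · have hTz : (wtot w S : ℤ) + 2 * w u v = wtot w ((S.erase u).erase v) + 2 * wdeg w S u
        + 2 * wdeg w S v := by exact_mod_cast hT2
      obtain ⟨p, rfl⟩ : ∃ p, m = p + 1 := ⟨m - 1, by omega⟩
      have e1 : 2 * (p + 1) - 1 = 2 * p + 1 := by omega
      have e2 : 2 * (p + 1 + 1) - 1 = 2 * p + 3 := by omega
      rw [e1] at hle
      rw [e2]
      have hlez : 2 * (c : ℤ) * (2 * p + 1) ≤ wtot w ((S.erase u).erase v) := by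
        exact_mod_cast hle
      push_cast at hk
      have : (2 * (p : ℤ) + 1) * (2 * (c + w u v) * (2 * p + 3)) ≤ (2 * p + 1) * wtot w S := by
        have h5 : (2 * (p : ℤ) + 3) * (2 * (c : ℤ) * (2 * p + 1)) ≤
          (2 * (p : ℤ) + 3) * wtot w ((S.erase u).erase v) :=
          mul_le_mul_of_nonneg_left hlez (by positivity)
        have h6 : (wtot w ((S.erase u).erase v) : ℤ) = wtot w S + 2 * w u v - 2 * wdeg w S u
          - 2 * wdeg w S v := by linarith
        rw [h6] at h5
        nlinarith
      have h7 := le_of_mul_le_mul_left this (by positivity)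
      exact_mod_cast h7

lemma bound_lemma (w : V → V → ℕ) (h0 : ∀ x, w x x = 0) (R : Finset V) (D : ℕ)
    (hz : ∀ x ∈ R, ∃ y ∈ R, y ≠ x ∧ w x y = 0)
    (hD : ∀ x ∈ R, ∀ y ∈ R, y ≠ x → w x y = 0 → wdeg w R x + wdeg w R y ≤ D) :
    wtot w R ≤ D * (D + 1) ∨ 2 * wtot w R ≤ R.card * D := by
  rcases R.eq_empty_or_nonempty with rfl | hne
  · left; simp [wtot]
  obtain ⟨x, hx, hmax⟩ := Finset.exists_max_image R (wdeg w R) hne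
  set Δ := wdeg w R x with hΔ
  have hΔD : Δ ≤ D := by
    obtain ⟨y, hy, hyx, h⟩ := hz x hx
    have := hD x hx y hy hyx h
    omega
  have hall : wtot w R ≤ R.card * Δ := by
    unfold wtot
    rw [← smul_eq_mul]
    exact Finset.sum_le_card_nsmul _ _ _ hmax
  by_cases h2 : 2 * Δ ≤ D
  · right; nlinarith
  set N := R.filter (fun y => w x y ≠ 0) with hN
  have hxR : x ∉ N := by simp [hN, h0]
  have hNc : N.card ≤ Δ := by
    have h1 : N.card ≤ ∑ y ∈ N, w x y := by
      rw [Finset.card_eq_sum_ones]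
      apply Finset.sum_le_sum
      intro y hy
      have := (Finset.mem_filter.1 hy).2
      omega
    exact h1.trans (Finset.sum_le_sum_of_subset (Finset.filter_subset _ _))
  set K := insert x N with hK
  have hKc : K.card ≤ Δ + 1 := (Finset.card_insert_le _ _).trans (by omega)
  have hKR : K ⊆ R := Finset.insert_subset hx (Finset.filter_subset _ _)
  have hs1 : ∑ y ∈ R \ K, wdeg w R y ≤ (R \ K).card * (D - Δ) := by
    rw [← smul_eq_mul]
    apply Finset.sum_le_card_nsmul
    intro y hy
    simp only [hK, hN, Finset.mem_sdiff, Finset.mem_insert, Finset.mem_filter, not_or, not_and,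
      not_not] at hy
    have := hD x hx y hy.1 hy.2.1 (hy.2.2 hy.1)
    omega
  have hs2 : ∑ y ∈ K, wdeg w R y ≤ K.card * Δ := by
    rw [← smul_eq_mul]
    exact Finset.sum_le_card_nsmul _ _ _ (fun y hy => hmax y (hKR hy))
  have hs3 : wtot w R = ∑ y ∈ R \ K, wdeg w R y + ∑ y ∈ K, wdeg w R y := by
    unfold wtot
    exact (Finset.sum_sdiff hKR).symm
  have hs4 : (R \ K).card + K.card = R.card := Finset.card_sdiff_add_card_eq_card hKR
  generalize (R \ K).card = a at *
  generalize K.card = b at *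
  generalize R.card = ρ at *
  generalize wtot w R = T at *
  obtain ⟨t, rfl⟩ : ∃ t, D = Δ + t := ⟨D - Δ, by omega⟩
  have ht : Δ + t - Δ = t := by omega
  rw [ht] at hs1
  have hT : T ≤ a * t + b * Δ := by omega
  obtain ⟨q, hq⟩ : ∃ q, Δ = t + q := ⟨Δ - t, by omega⟩
  clear_value Δ
  subst hq
  by_cases hρ : 2 * (t + q) + 2 ≤ ρ
  · right
    obtain ⟨j, hj⟩ : ∃ j, t + q + 1 = b + j := ⟨t + q + 1 - b, by omega⟩
    have h1 : b * q ≤ (t + q + 1) * q := Nat.mul_le_mul_right _ hKc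
    have h2 : (2 * (t + q) + 2) * q ≤ ρ * q := Nat.mul_le_mul_right _ hρ
    have h3 : (a + b) * t = ρ * t := by rw [hs4]
    nlinarith
  · left
    by_cases hρ2 : ρ ≤ t + q + 1
    · have := Nat.mul_le_mul_right (t + q) hρ2
      nlinarith
    · have h1 : b * q ≤ (t + q + 1) * q := Nat.mul_le_mul_right _ hKc
      have h3 : (a + b) * t = ρ * t := by rw [hs4]
      have h4 : ρ * t ≤ (2 * (t + q) + 1) * t := Nat.mul_le_mul_right _ (by omega)
      nlinarith

lemma full_deg (w : V → V → ℕ) (S : Finset V) (u : V) (hu : u ∈ S)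
    (hf : ∀ y ∈ S, y ≠ u → 1 ≤ w u y) : S.card ≤ wdeg w S u + 1 := by
  have h1 : (S.erase u).card ≤ wdeg w (S.erase u) u := by
    rw [Finset.card_eq_sum_ones]
    apply Finset.sum_le_sum
    intro y hy
    exact hf y (Finset.mem_of_mem_erase hy) (Finset.ne_of_mem_erase hy)
  have h2 := wdeg_erase w S u u hu
  rw [Finset.card_erase_of_mem hu] at h1
  omega

lemma avg_le_one (w : V → V → ℕ) (hs : ∀ x y, w x y = w y x) (h0 : ∀ x, w x x = 0) (m : ℕ)
    (S : Finset V) (hS : S.card = 2 * m) (hm : 1 ≤ m) (h : wtot w S < 8 * m - 4) :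
    ∃ c ≤ 1, PMat w S c := by
  obtain ⟨c, hc, hle⟩ := avg_lemma w hs h0 m S hS
  refine ⟨c, ?_, hc⟩
  by_contra hcon
  have : 2 * 2 * (2 * m - 1) ≤ 2 * c * (2 * m - 1) := Nat.mul_le_mul_right _ (by omega)
  omega

lemma avg_zero (w : V → V → ℕ) (hs : ∀ x y, w x y = w y x) (h0 : ∀ x, w x x = 0) (m : ℕ)
    (S : Finset V) (hS : S.card = 2 * m) (hm : 1 ≤ m) (h : wtot w S < 4 * m - 2) :
    PMat w S 0 := by
  obtain ⟨c, hc, hle⟩ := avg_lemma w hs h0 m S hS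
  rcases Nat.eq_zero_or_pos c with rfl | hpos
  · exact hc
  have : 2 * 1 * (2 * m - 1) ≤ 2 * c * (2 * m - 1) := Nat.mul_le_mul_right _ (by omega)
  omega

/-- three full vertices, two of which are joined by an edge of weight one -/
lemma three_full (w : V → V → ℕ) (hs : ∀ x y, w x y = w y x) (h0 : ∀ x, w x x = 0) (m : ℕ)
    (S : Finset V) (hS : S.card = 2 * m + 1) (hm : 6 ≤ m) (hT : wtot w S < 12 * m)
    (u v x : V) (hu : u ∈ S) (hv : v ∈ S) (hx : x ∈ S) (huv : v ≠ u) (hux : x ≠ u) (hvx : x ≠ v)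
    (fu : ∀ y ∈ S, y ≠ u → 1 ≤ w u y) (fv : ∀ y ∈ S, y ≠ v → 1 ≤ w v y)
    (fx : ∀ y ∈ S, y ≠ x → 1 ≤ w x y) (h1 : w u v = 1) :
    ∃ x ∈ S, ∃ c ≤ 1, PMat w (S.erase x) c := by
  refine ⟨x, hx, 1, le_rfl, ?_⟩
  have hu' : u ∈ S.erase x := Finset.mem_erase.2 ⟨hux.symm, hu⟩
  have hv' : v ∈ S.erase x := Finset.mem_erase.2 ⟨hvx.symm, hv⟩
  have hv'' : v ∈ (S.erase x).erase u := Finset.mem_erase.2 ⟨huv, hv'⟩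
  have a1 := wtot_erase w hs h0 S x hx
  have a2 := wtot_erase w hs h0 (S.erase x) u hu'
  have a3 := wtot_erase w hs h0 ((S.erase x).erase u) v hv''
  have c1 := Finset.card_erase_of_mem hx
  have c2 := Finset.card_erase_of_mem hu'
  have c3 := Finset.card_erase_of_mem hv''
  have b1 := full_deg w S x hx fx
  have b2 := full_deg w (S.erase x) u hu' (fun y hy => fu y (Finset.mem_of_mem_erase hy))
  have b3 := full_deg w ((S.erase x).erase u) v hv''
    (fun y hy => fv y (Finset.mem_of_mem_erase (Finset.mem_of_mem_erase hy)))
  have := avg_zero w hs h0 (m - 1) (((S.erase x).erase u).erase v) (by omega) (by omega) (by omega)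
  have := PMat.cons_erase hu' hv' huv this
  rwa [h1] at this

/-- arithmetic with no full vertex -/
lemma arith0 (m T D : ℕ) (hm : 2 ≤ m) (hT1 : T < 12 * m) (hT2 : T < (m + 2) * (m + 3))
    (hDT : 2 * D + min (12 * (m - 1)) ((m + 1) * (m + 2)) ≤ T)
    (hb : T ≤ D * (D + 1) ∨ 2 * T ≤ (2 * m + 1) * D) : False := by
  rcases Nat.lt_or_ge m 7 with h7 | h7
  · interval_cases m <;> norm_num at * <;> (have hD : D ≤ 7 := by omega) <;>
      interval_cases D <;> omega
  · have : min (12 * (m - 1)) ((m + 1) * (m + 2)) = 12 * (m - 1) := by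
      apply min_eq_left
      obtain ⟨p, rfl⟩ := Nat.exists_eq_add_of_le h7
      have : 12 * (7 + p - 1) = 72 + 12 * p := by omega
      rw [this]
      nlinarith
    rw [this] at hDT
    have hD : D ≤ 5 := by omega
    interval_cases D <;> omega

lemma arith12 (m T D φ T' : ℕ) (hm : 6 ≤ m) (hT1 : T < 12 * m)
    (hDT : 2 * D + 4 * φ + min (12 * (m - 1)) ((m + 1) * (m + 2)) ≤ T)
    (hφ : (φ = 1 ∧ 8 * m - 4 ≤ T') ∨ (φ = 2 ∧ 4 * m - 6 ≤ T'))
    (hb : T' ≤ D * (D + 1) ∨ 2 * T' ≤ (2 * m + 1 - φ) * D) : False := by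
  rcases Nat.lt_or_ge m 7 with h7 | h7
  · have : m = 6 := by omega
    subst this
    norm_num at *
    have hD : D ≤ 5 := by omega
    rcases hφ with ⟨rfl, hφ⟩ | ⟨rfl, hφ⟩ <;> interval_cases D <;> omega
  · have : min (12 * (m - 1)) ((m + 1) * (m + 2)) = 12 * (m - 1) := by
      apply min_eq_left
      obtain ⟨p, rfl⟩ := Nat.exists_eq_add_of_le h7
      have : 12 * (7 + p - 1) = 72 + 12 * p := by omega
      rw [this]
      nlinarith
    rw [this] at hDT
    have hD : D ≤ 3 := by omega
    rcases hφ with ⟨rfl, hφ⟩ | ⟨rfl, hφ⟩ <;> interval_cases D <;> omega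

lemma base_case (w : V → V → ℕ) (hs : ∀ x y, w x y = w y x) (h0 : ∀ x, w x x = 0)
    (S : Finset V) (hS : S.card = 3) (hT : wtot w S < 12) :
    ∃ x ∈ S, ∃ c ≤ 1, PMat w (S.erase x) c := by
  by_contra hcon
  push Not at hcon
  have key : ∀ x ∈ S, 4 ≤ wtot w (S.erase x) := by
    intro x hx
    by_contra hlt
    obtain ⟨c, hc, h⟩ := avg_le_one w hs h0 1 (S.erase x)
      (by rw [Finset.card_erase_of_mem hx]; omega) le_rfl (by omega)
    exact hcon x hx c hc h
  have h1 : ∑ x ∈ S, wtot w S = ∑ x ∈ S, wtot w (S.erase x) + 2 * wtot w S := by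
    conv_rhs => rw [wtot]
    rw [Finset.mul_sum, ← Finset.sum_add_distrib]
    exact Finset.sum_congr rfl (fun x hx => wtot_erase w hs h0 S x hx)
  have h2 := Finset.card_nsmul_le_sum S _ 4 key
  rw [Finset.sum_const, hS] at h1
  rw [hS] at h2
  simp only [smul_eq_mul] at h1 h2
  omega

lemma main_lemma (w : V → V → ℕ) (hs : ∀ x y, w x y = w y x) (h0 : ∀ x, w x x = 0) (m : ℕ)
    (hm : 1 ≤ m) :
    ∀ S : Finset V, S.card = 2 * m + 1 → wtot w S < 12 * m → wtot w S < (m + 2) * (m + 3) →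
      ∃ x ∈ S, ∃ c ≤ 1, PMat w (S.erase x) c := by
  induction m, hm using Nat.le_induction with
  | base =>
    intro S hS h1 h2
    exact base_case w hs h0 S (by omega) (by omega)
  | succ k hk ih =>
    intro S hS hT1 hT2
    obtain ⟨m, hmk⟩ : ∃ m, m = k + 1 := ⟨_, rfl⟩
    have hkm : k = m - 1 := by omega
    rw [← hmk] at hS hT1 hT2
    by_contra hcon
    -- zero pairs have small degree sum
    have hA : ∀ u ∈ S, ∀ v ∈ S, v ≠ u → w u v = 0 →
        2 * (wdeg w S u + wdeg w S v) + min (12 * (m - 1)) ((m + 1) * (m + 2)) ≤ wtot w S := by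
      intro u hu v hv hvu h
      by_contra hlt
      have hT := wtot_erase2 w hs h0 S u v hu hv hvu
      have hv' : v ∈ S.erase u := Finset.mem_erase.2 ⟨hvu, hv⟩
      have c1 := Finset.card_erase_of_mem hu
      have c2 := Finset.card_erase_of_mem hv'
      have e : (k + 2) * (k + 3) = (m + 1) * (m + 2) := by subst hmk; ring
      obtain ⟨x, hx, c, hc, hp⟩ := ih ((S.erase u).erase v) (by omega) (by omega)
        (by rw [e]; omega)
      obtain ⟨hxv, hx'⟩ := Finset.mem_erase.1 hx
      obtain ⟨hxu, hxS⟩ := Finset.mem_erase.1 hx'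
      apply hcon
      refine ⟨x, hxS, c, hc, ?_⟩
      rw [Finset.erase_right_comm (a := v), Finset.erase_right_comm (a := u)] at hp
      have := PMat.cons_erase (Finset.mem_erase.2 ⟨hxu.symm, hu⟩)
        (Finset.mem_erase.2 ⟨hxv.symm, hv⟩) hvu hp
      rwa [h] at this
    have hB : ∀ u ∈ S, 8 * m - 4 ≤ wtot w (S.erase u) := by
      intro u hu
      by_contra hlt
      obtain ⟨c, hc, hp⟩ := avg_le_one w hs h0 m (S.erase u)
        (by rw [Finset.card_erase_of_mem hu]; omega) (by omega) (by omega)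
      exact hcon ⟨u, hu, c, hc, hp⟩
    -- the counting argument on a subset
    have hC : ∀ R ⊆ S, ∀ φ : ℕ, R.Nonempty → (∀ x ∈ R, ∃ y ∈ R, y ≠ x ∧ w x y = 0) →
        (∀ x ∈ R, wdeg w R x + φ ≤ wdeg w S x) →
        ∃ D, 2 * D + 4 * φ + min (12 * (m - 1)) ((m + 1) * (m + 2)) ≤ wtot w S ∧
          (wtot w R ≤ D * (D + 1) ∨ 2 * wtot w R ≤ R.card * D) := by
      intro R hR φ hne hz hd
      refine ⟨(wtot w S - (4 * φ + min (12 * (m - 1)) ((m + 1) * (m + 2)))) / 2, ?_, ?_⟩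
      · obtain ⟨x, hx⟩ := hne
        obtain ⟨y, hy, hyx, h⟩ := hz x hx
        have := hA x (hR hx) y (hR hy) hyx h
        have := hd x hx
        have := hd y hy
        omega
      · apply bound_lemma w h0 R _ hz
        intro x hx y hy hyx h
        have := hA x (hR hx) y (hR hy) hyx h
        have := hd x hx
        have := hd y hy
        omega
    by_cases hF0 : ∀ x ∈ S, ∃ y ∈ S, y ≠ x ∧ w x y = 0
    · obtain ⟨D, hD1, hD2⟩ := hC S (Finset.Subset.refl _) 0 (Finset.card_pos.1 (by omega)) hF0
        (fun x _ => le_rfl)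
      rw [hS] at hD2
      exact arith0 m (wtot w S) D (by omega) hT1 hT2 (by omega) hD2
    push Not at hF0
    obtain ⟨u, hu, fu'⟩ := hF0
    have fu : ∀ y ∈ S, y ≠ u → 1 ≤ w u y := fun y hy h => Nat.one_le_iff_ne_zero.2 (fu' y hy h)
    have hdl : ∀ x ∈ S, (∀ y ∈ S, y ≠ x → 1 ≤ w x y) → 2 * m ≤ wdeg w S x := by
      intro x hx fx
      have := full_deg w S x hx fx
      omega
    have hdu : ∀ x ∈ S, wdeg w S x ≤ 2 * m + 1 := by
      intro x hx
      have := hB x hx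
      have := wtot_erase w hs h0 S x hx
      omega
    have hTlow : 12 * m - 4 ≤ wtot w S := by
      have := hB u hu
      have := wtot_erase w hs h0 S u hu
      have := hdl u hu fu
      omega
    have hm6 : 6 ≤ m := by
      by_contra hlt
      have h1 : 2 ≤ m := by omega
      have h2 : m ≤ 5 := by omega
      clear hA hC hB
      interval_cases m <;> omega
    by_cases hF1 : ∀ x ∈ S.erase u, ∃ y ∈ S, y ≠ x ∧ w x y = 0
    · obtain ⟨D, hD1, hD2⟩ := hC (S.erase u) (Finset.erase_subset _ _) 1
        (Finset.card_pos.1 (by rw [Finset.card_erase_of_mem hu]; omega))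
        (by
          intro x hx
          obtain ⟨y, hy, hyx, h⟩ := hF1 x hx
          refine ⟨y, Finset.mem_erase.2 ⟨?_, hy⟩, hyx, h⟩
          rintro rfl
          have := fu x (Finset.mem_of_mem_erase hx) hyx.symm
          rw [hs] at this
          omega)
        (by
          intro x hx
          have h1 := wdeg_erase w S u x hu
          have h2 := fu x (Finset.mem_of_mem_erase hx) (Finset.ne_of_mem_erase hx)
          rw [hs] at h2
          omega)
      rw [Finset.card_erase_of_mem hu, hS] at hD2
      exact arith12 m (wtot w S) D 1 _ hm6 hT1 hD1 (Or.inl ⟨rfl, hB u hu⟩) hD2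
    push Not at hF1
    obtain ⟨v, hv', fv'⟩ := hF1
    have fv : ∀ y ∈ S, y ≠ v → 1 ≤ w v y := fun y hy h => Nat.one_le_iff_ne_zero.2 (fv' y hy h)
    obtain ⟨hvu, hv⟩ := Finset.mem_erase.1 hv'
    by_cases hF2 : ∀ x ∈ (S.erase u).erase v, ∃ y ∈ S, y ≠ x ∧ w x y = 0
    · have c1 := Finset.card_erase_of_mem hu
      have c2 := Finset.card_erase_of_mem hv'
      obtain ⟨D, hD1, hD2⟩ := hC ((S.erase u).erase v)
        ((Finset.erase_subset _ _).trans (Finset.erase_subset _ _)) 2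
        (Finset.card_pos.1 (by omega))
        (by
          intro x hx
          obtain ⟨hxv, hx'⟩ := Finset.mem_erase.1 hx
          obtain ⟨hxu, hxS⟩ := Finset.mem_erase.1 hx'
          obtain ⟨y, hy, hyx, h⟩ := hF2 x hx
          refine ⟨y, Finset.mem_erase.2 ⟨?_, Finset.mem_erase.2 ⟨?_, hy⟩⟩, hyx, h⟩
          · rintro rfl
            have := fv x hxS hyx.symm
            rw [hs] at this
            omega
          · rintro rfl
            have := fu x hxS hyx.symm
            rw [hs] at this
            omega)
        (by
          intro x hx
          obtain ⟨hxv, hx'⟩ := Finset.mem_erase.1 hx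
          obtain ⟨hxu, hxS⟩ := Finset.mem_erase.1 hx'
          have h1 := wdeg_erase w S u x hu
          have h2 := fu x hxS hxu
          have h3 := wdeg_erase w (S.erase u) v x hv'
          have h4 := fv x hxS hxv
          rw [hs] at h2 h4
          omega)
      rw [show ((S.erase u).erase v).card = 2 * m + 1 - 2 by omega] at hD2
      refine arith12 m (wtot w S) D 2 _ hm6 hT1 hD1 (Or.inr ⟨rfl, ?_⟩) hD2
      have h1 := wtot_erase2 w hs h0 S u v hu hv hvu
      have h2 := hdu u hu
      have h3 := hdu v hv
      have h4 := fu v hv hvu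
      omega
    push Not at hF2
    obtain ⟨x, hx, fx'⟩ := hF2
    have fx : ∀ y ∈ S, y ≠ x → 1 ≤ w x y := fun y hy h => Nat.one_le_iff_ne_zero.2 (fx' y hy h)
    obtain ⟨hxv, hx'⟩ := Finset.mem_erase.1 hx
    obtain ⟨hxu, hxS⟩ := Finset.mem_erase.1 hx'
    by_cases h1 : w u v = 1
    · exact hcon (three_full w hs h0 m S hS hm6 hT1 u v x hu hv hxS hvu hxu hxv fu fv fx h1)
    by_cases h2 : w u x = 1
    · exact hcon (three_full w hs h0 m S hS hm6 hT1 u x v hu hxS hv hxu hvu hxv.symm fu fx fv h2)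
    have c1 := Finset.card_erase_of_mem hv'
    have c2 := Finset.card_erase_of_mem hx
    have c3 := Finset.card_erase_of_mem hu
    have hu2 : u ∈ (S.erase v).erase x :=
      Finset.mem_erase.2 ⟨hxu.symm, Finset.mem_erase.2 ⟨hvu.symm, hu⟩⟩
    have hx2 : x ∈ S.erase v := Finset.mem_erase.2 ⟨hxv, hxS⟩
    have d1 := wdeg_erase w S v u hv
    have d2 := wdeg_erase w (S.erase v) x u hx2
    have d3 := full_deg w ((S.erase v).erase x) u hu2
      (fun y hy => fu y (Finset.mem_of_mem_erase (Finset.mem_of_mem_erase hy)))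
    have c4 := Finset.card_erase_of_mem hv
    have c5 := Finset.card_erase_of_mem hx2
    have d4 := hdu u hu
    have d5 := fu v hv hvu
    have d6 := fu x hxS hxu
    omega

lemma extract_lemma (W : Sym2 V → ℕ) (S : Finset V) (c : ℕ)
    (h : PMat (fun u v => W s(u, v)) S c) :
    ∃ M : Finset (Sym2 V), (∀ e ∈ M, ¬ e.IsDiag) ∧
      ((M : Set (Sym2 V)).Pairwise fun e f => ∀ v, v ∈ e → v ∉ f) ∧
      (∀ v, v ∈ S ↔ ∃ e ∈ M, v ∈ e) ∧ ∑ e ∈ M, W e = c := by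
  induction h with
  | nil => exact ⟨∅, by simp⟩
  | cons S c u v hu hv huv h ih =>
    obtain ⟨M, h1, h2, h3, h4⟩ := ih
    have hdis : ∀ e ∈ M, ∀ x, x ∈ e → x ∉ s(u, v) := by
      intro e he x hx hx2
      rcases Sym2.mem_iff.1 hx2 with rfl | rfl
      · exact hu ((h3 _).2 ⟨e, he, hx⟩)
      · exact hv ((h3 _).2 ⟨e, he, hx⟩)
    have hnot : s(u, v) ∉ M := fun hm =>
      hdis _ hm u (Sym2.mem_mk_left u v) (Sym2.mem_mk_left u v)
    refine ⟨insert s(u, v) M, ?_, ?_, ?_, ?_⟩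
    · intro e he
      rcases Finset.mem_insert.1 he with rfl | he
      · simpa using huv
      · exact h1 e he
    · rw [Finset.coe_insert]
      apply h2.insert
      intro e he _
      exact ⟨fun x hx hx2 => hdis e he x hx2 hx, fun x hx => hdis e he x hx⟩
    · intro x
      simp only [Finset.mem_insert, exists_eq_or_imp, Sym2.mem_iff, h3, or_assoc]
    · rw [Finset.sum_insert hnot, h4, add_comm]

open Classical in
lemma count_lemma [Fintype V] (E : Set (Sym2 V)) (hE : ∀ e ∈ E, ¬ e.IsDiag) :
    ∑ x : V, ∑ y : V, (if s(x, y) ∈ E then 1 else 0) = 2 * E.ncard := by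
  have h := (SimpleGraph.fromEdgeSet E).sum_degrees_eq_twice_card_edges
  have h1 : (SimpleGraph.fromEdgeSet E).edgeSet = E := by
    rw [SimpleGraph.edgeSet_fromEdgeSet]
    ext e
    simp only [Set.mem_sdiff]
    exact ⟨fun h => h.1, fun h => ⟨h, hE e h⟩⟩
  refine Eq.trans ?_ (h.trans (by rw [← Set.ncard_coe_finset, SimpleGraph.coe_edgeFinset, h1]))
  apply Finset.sum_congr rfl
  intro x _
  rw [← Finset.card_filter, ← SimpleGraph.card_neighborFinset_eq_degree]
  congr 1
  ext y
  simp only [Finset.mem_filter, Finset.mem_univ, true_and, SimpleGraph.mem_neighborFinset,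
    SimpleGraph.fromEdgeSet_adj]
  refine ⟨fun h => ⟨h, ?_⟩, fun h => h.1⟩
  have := hE _ h
  simpa using this

end Helpers

/-- if r+k is odd, k ≤ r and |E1|+2|E2| < min{3(r+k-1), (r+k+3)(r+k+5)/8},
the complete graph on r+k vertices has an almost perfect good matching.
(The inequality is stated multiplied through by 8 to avoid division.) -/
theorem stmt_11 (r k : ℕ) (hr : 1 ≤ r) (hk : 1 ≤ k) (hkr : k ≤ r)
    (hodd : Odd (r + k))
    (E0 E1 E2 : Set (Sym2 (Fin (r + k))))
    (hpart : (⊤ : SimpleGraph (Fin (r + k))).edgeSet = E0 ∪ E1 ∪ E2)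
    (h01 : Disjoint E0 E1) (h02 : Disjoint E0 E2) (h12 : Disjoint E1 E2)
    (hE : 8 * (E1.ncard + 2 * E2.ncard) <
      min (24 * (r + k - 1)) ((r + k + 3) * (r + k + 5))) :
    ∃ M : Set (Sym2 (Fin (r + k))), IsMatchingOn (⊤ : SimpleGraph (Fin (r + k))) M ∧
      (coveredSet M).ncard = r + k - 1 ∧ M ∩ E2 = ∅ ∧ (M ∩ E1).ncard ≤ 1 := by
  classical
  have hd : ∀ e ∈ E0 ∪ E1 ∪ E2, ¬ e.IsDiag := by
    intro e he
    rw [← hpart] at he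
    simpa using he
  have hd1 : ∀ e ∈ E1, ¬ e.IsDiag := fun e he => hd e (Or.inl (Or.inr he))
  have hd2 : ∀ e ∈ E2, ¬ e.IsDiag := fun e he => hd e (Or.inr he)
  set W : Sym2 (Fin (r + k)) → ℕ :=
    fun e => (if e ∈ E1 then 1 else 0) + 2 * (if e ∈ E2 then 1 else 0) with hW
  have hT : wtot (fun u v => W s(u, v)) Finset.univ = 2 * (E1.ncard + 2 * E2.ncard) := by
    have a1 := count_lemma E1 hd1
    have a2 := count_lemma E2 hd2
    simp only [wtot, wdeg, hW, Finset.sum_add_distrib, ← Finset.mul_sum]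
    rw [a1, a2]
    ring
  obtain ⟨m, hm⟩ := hodd
  have hm1 : 1 ≤ m := by omega
  have hE1 := lt_of_lt_of_le hE (min_le_left _ _)
  have hE2 := lt_of_lt_of_le hE (min_le_right _ _)
  obtain ⟨x, -, c, hc, hp⟩ := main_lemma (fun u v => W s(u, v))
    (fun x y => by rw [Sym2.eq_swap])
    (fun x => by
      have e1 : s(x, x) ∉ E1 := fun h => hd1 _ h (by simp)
      have e2 : s(x, x) ∉ E2 := fun h => hd2 _ h (by simp)
      simp [hW, e1, e2]) m hm1 Finset.univ (by simp [hm]) (by rw [hT]; omega)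
    (by
      rw [hT]
      have e : (r + k + 3) * (r + k + 5) = (2 * m + 4) * (2 * m + 6) := by rw [hm]
      rw [e] at hE2
      nlinarith)
  obtain ⟨M, h1, h2, h3, h4⟩ := extract_lemma W _ c hp
  refine ⟨M, ⟨?_, h2⟩, ?_, ?_, ?_⟩
  · intro e he
    simpa using h1 e he
  · have : coveredSet (M : Set (Sym2 (Fin (r + k)))) =
        ((Finset.univ.erase x : Finset (Fin (r + k))) : Set (Fin (r + k))) := by
      ext v
      rw [Finset.mem_coe, h3]
      rfl
    rw [this, Set.ncard_coe_finset, Finset.card_erase_of_mem (Finset.mem_univ _)]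
    simp
  · rw [Set.eq_empty_iff_forall_notMem]
    rintro e ⟨he, he2⟩
    have := Finset.single_le_sum (f := W) (fun _ _ => Nat.zero_le _) (Finset.mem_coe.1 he)
    have h5 : 2 ≤ W e := by simp [hW, he2]
    omega
  · have : (M : Set (Sym2 (Fin (r + k)))) ∩ E1 = ((M.filter (· ∈ E1) : Finset _) : Set _) := by
      ext e
      simp
    rw [this, Set.ncard_coe_finset, Finset.card_filter]
    refine le_trans (Finset.sum_le_sum ?_) (h4.le.trans hc)
    intro e _
    simp [hW]
end

section
/- Let r and k be positive integers with k > r, let H be the complete graph on r+k vertices, and let (E_0, E_1, E_2) be an ordered partition of E(H). Suppose r < k ≤ (3r−7)/2 and |E_1| + 2|E_2| < min{ (k+3r−4)(k−r+3)/2, (k−r+2)(k+r−1) }. Then H has a matching M of order r with M ∩ E_2 = ∅ and |M ∩ E_1| ≤ 1. -/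
inductive Mt {V : Type*} [DecidableEq V] (G : SimpleGraph V) : ℕ → Finset V → Prop
  | nil : Mt G 0 ∅
  | cons {m : ℕ} {C : Finset V} {x y : V} : Mt G m C → G.Adj x y → x ∉ C → y ∉ C →
      Mt G (m + 1) (insert x (insert y C))

section
variable {V : Type*} [DecidableEq V] {G : SimpleGraph V}

lemma Mt.card {m : ℕ} {C : Finset V} (h : Mt G m C) : C.card = 2 * m := by
  induction h with
  | nil => simp
  | cons h hxy hx hy ih =>
    have := hxy.ne
    rw [Finset.card_insert_of_notMem (by simp [this, hx]), Finset.card_insert_of_notMem hy]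
    omega

lemma Mt.enum {m : ℕ} {C : Finset V} (h : Mt G m C) :
    ∃ v : Fin m → Bool → V, (∀ i j c c', v i c = v j c' → i = j ∧ c = c') ∧
      (∀ i c, G.Adj (v i c) (v i (!c))) ∧ ∀ p, p ∈ C ↔ ∃ i c, v i c = p := by
  induction h with
  | nil => exact ⟨fun i => i.elim0, fun i => i.elim0, fun i => i.elim0, by simp⟩
  | @cons m C x y h hxy hx hy ih =>
    obtain ⟨v, h1, h2, h3⟩ := ih
    have hne := hxy.ne
    have hvx : ∀ i c, v i c ≠ x := fun i c e => hx ((h3 _).2 ⟨i, c, e⟩)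
    have hvy : ∀ i c, v i c ≠ y := fun i c e => hy ((h3 _).2 ⟨i, c, e⟩)
    refine ⟨Fin.cons (fun c => bif c then x else y) v, ?_, ?_, ?_⟩
    · intro i j c c'
      refine Fin.cases ?_ (fun i => ?_) i <;> refine Fin.cases ?_ (fun j => ?_) j
      · cases c <;> cases c' <;> simp [hne, hne.symm]
      · cases c <;> simp [(hvx _ _).symm, (hvy _ _).symm]
      · cases c' <;> simp [(hvx _ _), (hvy _ _)]
      · simpa using h1 i j c c'
    · intro i c
      refine Fin.cases ?_ (fun i => ?_) i
      · cases c <;> simp [hxy, hxy.symm]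
      · simpa using h2 i c
    · intro p
      simp only [Finset.mem_insert, h3, Fin.exists_fin_succ, Bool.exists_bool, Fin.cons_zero, Fin.cons_succ, cond_true, cond_false]
      grind

lemma base {s : ℕ} {v : Fin s → Bool → V}
    (hi : ∀ i j c c', v i c = v j c' → i = j ∧ c = c')
    (ha : ∀ i c, G.Adj (v i c) (v i (!c))) (T : Finset (Fin s)) :
    ∃ C, Mt G T.card C ∧ ∀ p, p ∈ C ↔ ∃ i ∈ T, ∃ c, v i c = p := by
  induction T using Finset.induction_on with
  | empty => exact ⟨∅, Mt.nil, by simp⟩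
  | insert i T hiT ih =>
    obtain ⟨C, hC, hm⟩ := ih
    refine ⟨insert (v i true) (insert (v i (!true)) C), ?_, ?_⟩
    · rw [Finset.card_insert_of_notMem hiT]
      refine Mt.cons hC (ha i true) ?_ ?_ <;>
      · rw [hm]; rintro ⟨j, hj, c, e⟩
        exact hiT ((hi _ _ _ _ e).1 ▸ hj)
    · intro p
      simp only [Finset.mem_insert, hm, Bool.exists_bool, Bool.not_true]
      grind

lemma aug1 {s : ℕ} {v : Fin s → Bool → V}
    (hi : ∀ i j c c', v i c = v j c' → i = j ∧ c = c')
    (ha : ∀ i c, G.Adj (v i c) (v i (!c))) (i : Fin s) (c : Bool) (u : V)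
    (hu : ∀ i c, v i c ≠ u) (h : G.Adj u (v i c)) :
    ∃ C, Mt G s C ∧ ∀ p, p ∈ C ↔ p = u ∨ p = v i c ∨ ∃ j, j ≠ i ∧ ∃ c', v j c' = p := by
  obtain ⟨C, hC, hm⟩ := base hi ha (Finset.univ.erase i)
  have hs : (Finset.univ.erase i).card + 1 = s := by
    rw [Finset.card_erase_add_one (Finset.mem_univ i)]; simp
  have h1 : u ∉ C := by rw [hm]; grind
  have h2 : v i c ∉ C := by
    rw [hm]; rintro ⟨j, hj, c', e⟩
    have := (hi _ _ _ _ e).1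
    simp [this] at hj
  have h3 := Mt.cons hC h h1 h2
  rw [hs] at h3
  refine ⟨_, h3, ?_⟩
  · intro p; simp [hm]

lemma aug2 {s : ℕ} {v : Fin s → Bool → V}
    (hi : ∀ i j c c', v i c = v j c' → i = j ∧ c = c')
    (ha : ∀ i c, G.Adj (v i c) (v i (!c))) (hno : ∀ C, ¬ Mt G (s + 1) C)
    (i : Fin s) (c : Bool) (u u' : V)
    (hu : ∀ i c, v i c ≠ u) (hu' : ∀ i c, v i c ≠ u') (huu : u ≠ u')
    (h : G.Adj u (v i c)) (h' : G.Adj u' (v i (!c))) : False := by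
  obtain ⟨C, hC, hm⟩ := aug1 hi ha i c u hu h
  refine hno _ (Mt.cons hC h' ?_ ?_)
  · rw [hm]; grind
  · rw [hm]; rintro (e | e | ⟨j, hj, c', e⟩)
    · exact hu _ _ e
    · have := (hi _ _ _ _ e).2; simp at this
    · exact hj (hi _ _ _ _ e).1

lemma aug3 {s : ℕ} {v : Fin s → Bool → V}
    (hi : ∀ i j c c', v i c = v j c' → i = j ∧ c = c')
    (ha : ∀ i c, G.Adj (v i c) (v i (!c))) (hno : ∀ C, ¬ Mt G (s + 1) C)
    (i j : Fin s) (hij : i ≠ j) (c e : Bool) (u u' : V)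
    (hu : ∀ i c, v i c ≠ u) (hu' : ∀ i c, v i c ≠ u') (huu : u ≠ u')
    (h : G.Adj u (v i c)) (h2 : G.Adj (v i (!c)) (v j e)) (h' : G.Adj u' (v j (!e))) : False := by
  obtain ⟨C, hC, hm⟩ := base hi ha ((Finset.univ.erase i).erase j)
  have hs : ((Finset.univ.erase i).erase j).card + 1 + 1 = s := by
    rw [Finset.card_erase_add_one (by simp [hij.symm]),
      Finset.card_erase_add_one (Finset.mem_univ i)]; simp
  have nb : ∀ c : Bool, (!c) ≠ c := by decide
  have hn : ∀ f, v i f ∉ C := by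
    intro f; rw [hm]; rintro ⟨a, ha, c', e⟩
    have := (hi _ _ _ _ e).1; simp [this] at ha
  have hn' : ∀ f, v j f ∉ C := by
    intro f; rw [hm]; rintro ⟨a, ha, c', e⟩
    have := (hi _ _ _ _ e).1; simp [this] at ha
  have hnu : u ∉ C := by rw [hm]; grind
  have hnu' : u' ∉ C := by rw [hm]; grind
  have m1 := Mt.cons hC h hnu (hn _)
  have m2 := Mt.cons m1 h2 (by simp; grind) (by simp; grind)
  have m3 := Mt.cons m2 h' (by simp; grind) (by simp; grind)
  rw [hs] at m3
  exact hno _ m3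

lemma aug4 {s : ℕ} {v : Fin s → Bool → V}
    (hi : ∀ i j c c', v i c = v j c' → i = j ∧ c = c')
    (ha : ∀ i c, G.Adj (v i c) (v i (!c))) (hno : ∀ C, ¬ Mt G (s + 1) C)
    (i j l : Fin s) (hij : i ≠ j) (hil : i ≠ l) (hjl : j ≠ l) (c e b : Bool) (u u' : V)
    (hu : ∀ i c, v i c ≠ u) (hu' : ∀ i c, v i c ≠ u') (huu : u ≠ u')
    (h : G.Adj u (v i c)) (h2 : G.Adj (v i (!c)) (v l b)) (h3 : G.Adj (v l (!b)) (v j (!e)))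
    (h' : G.Adj u' (v j e)) : False := by
  obtain ⟨C, hC, hm⟩ := base hi ha (((Finset.univ.erase i).erase j).erase l)
  have hs : (((Finset.univ.erase i).erase j).erase l).card + 1 + 1 + 1 = s := by
    rw [Finset.card_erase_add_one (by simp [hil.symm, hjl.symm]),
      Finset.card_erase_add_one (by simp [hij.symm]),
      Finset.card_erase_add_one (Finset.mem_univ i)]; simp
  have nb : ∀ c : Bool, (!c) ≠ c := by decide
  have hn : ∀ f, v i f ∉ C := by
    intro f; rw [hm]; rintro ⟨a, ha, c', e⟩
    have := (hi _ _ _ _ e).1; simp [this] at ha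
  have hn' : ∀ f, v j f ∉ C := by
    intro f; rw [hm]; rintro ⟨a, ha, c', e⟩
    have := (hi _ _ _ _ e).1; simp [this] at ha
  have hn'' : ∀ f, v l f ∉ C := by
    intro f; rw [hm]; rintro ⟨a, ha, c', e⟩
    have := (hi _ _ _ _ e).1; simp [this] at ha
  have hnu : u ∉ C := by rw [hm]; grind
  have hnu' : u' ∉ C := by rw [hm]; grind
  have m1 := Mt.cons hC h hnu (hn _)
  have m2 := Mt.cons m1 h2 (by simp; grind) (by simp; grind)
  have m3 := Mt.cons m2 h3 (by simp; grind) (by simp; grind)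
  have m4 := Mt.cons m3 h' (by simp; grind) (by simp; grind)
  rw [hs] at m4
  exact hno _ m4

lemma Mt.toFinset {m : ℕ} {C : Finset V} (h : Mt G m C) :
    ∃ M : Finset (Sym2 V), M.card = m ∧ (∀ e ∈ M, e ∈ G.edgeSet) ∧
      (∀ e ∈ M, ∀ v ∈ e, v ∈ C) ∧
      (M : Set (Sym2 V)).Pairwise fun e f => ∀ v, v ∈ e → v ∉ f := by
  induction h with
  | nil => exact ⟨∅, by simp⟩
  | @cons m C x y h hxy hx hy ih =>
    obtain ⟨M, h1, h2, h3, h4⟩ := ih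
    have hn : s(x, y) ∉ M := fun hh => hx (h3 _ hh x (by simp))
    refine ⟨insert s(x, y) M, by rw [Finset.card_insert_of_notMem hn, h1], ?_, ?_, ?_⟩
    · intro e he
      rcases Finset.mem_insert.1 he with rfl | he
      · exact hxy
      · exact h2 e he
    · intro e he v hv
      rcases Finset.mem_insert.1 he with rfl | he
      · simp at hv; grind
      · have := h3 e he v hv; simp [this]
    · rw [Finset.coe_insert]
      refine h4.insert ?_
      intro f hf _
      constructor
      · intro v hv hv'
        have := h3 f hf v hv'
        simp at hv; grind
      · intro v hv hv'
        have := h3 f hf v hv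
        simp at hv'; grind

lemma Mt.mono {G' : SimpleGraph V} (hG : G ≤ G') {m : ℕ} {C : Finset V} (h : Mt G m C) :
    Mt G' m C := by
  induction h with
  | nil => exact Mt.nil
  | cons h hxy hx hy ih => exact Mt.cons ih (hG hxy) hx hy

lemma Mt.drop {p q : V} {m : ℕ} {C : Finset V} (h : Mt (G ⊔ SimpleGraph.edge p q) m C) :
    Mt G m C ∨ ∃ m' C', m = m' + 1 ∧ C' ⊆ C ∧ p ∈ C ∧ q ∈ C ∧ Mt G m' C' := by
  induction h with
  | nil => exact Or.inl Mt.nil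
  | @cons m C x y h hxy hx hy ih =>
    by_cases hG : G.Adj x y
    · rcases ih with ih | ⟨m', C', rfl, hs, hp, hq, ih⟩
      · exact Or.inl (Mt.cons ih hG hx hy)
      · refine Or.inr ⟨_, _, rfl, ?_, ?_, ?_, Mt.cons ih hG (fun h => hx (hs h)) (fun h => hy (hs h))⟩
        · exact Finset.insert_subset_insert _ (Finset.insert_subset_insert _ hs)
        · simp [hp]
        · simp [hq]
    · have : (x = p ∧ y = q) ∨ (x = q ∧ y = p) := by
        rw [SimpleGraph.sup_adj, SimpleGraph.edge_adj] at hxy; grind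
      right
      rcases ih with ih | ⟨m', C', rfl, hs, hp, hq, ih⟩
      · refine ⟨m, C, rfl, ?_, ?_, ?_, ih⟩
        · intro z hz; simp [hz]
        · simp; grind
        · simp; grind
      · grind

lemma top_Mt [Fintype V] (m : ℕ) (hm : 2 * m ≤ Fintype.card V) :
    ∃ C, Mt (⊤ : SimpleGraph V) m C := by
  induction m with
  | zero => exact ⟨_, Mt.nil⟩
  | succ m ih =>
    obtain ⟨C, hC⟩ := ih (by omega)
    have h1 := hC.card
    have h2 : 1 < Cᶜ.card := by rw [Finset.card_compl]; omega
    obtain ⟨x, hx, y, hy, hxy⟩ := Finset.one_lt_card.1 h2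
    exact ⟨_, Mt.cons hC (by simpa using hxy) (by simpa using hx) (by simpa using hy)⟩

lemma extend [Fintype V] (s : ℕ) (hs : 2 * s ≤ Fintype.card V)
    (hno : ∀ C, ¬ Mt G (s + 1) C) :
    ∃ G' : SimpleGraph V, G ≤ G' ∧ (∃ C, Mt G' s C) ∧ ∀ C, ¬ Mt G' (s + 1) C := by
  classical
  obtain ⟨G', hle, hmax⟩ := Set.Finite.exists_le_maximal
    (s := {G' : SimpleGraph V | ∀ C, ¬ Mt G' (s + 1) C}) (Set.toFinite _) hno
  refine ⟨G', hle, ?_, hmax.prop⟩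
  by_contra hcon
  push Not at hcon
  have hnt : ∃ p q, p ≠ q ∧ ¬ G'.Adj p q := by
    by_contra hh
    push Not at hh
    obtain ⟨C, hC⟩ := top_Mt (V := V) s hs
    refine hcon C (hC.mono ?_)
    intro p q hpq
    exact hh p q (by simpa using hpq)
  obtain ⟨p, q, hpq, hna⟩ := hnt
  have h1 : ¬ (G' ⊔ SimpleGraph.edge p q ∈ {G' : SimpleGraph V | ∀ C, ¬ Mt G' (s + 1) C}) := by
    intro hh
    have := hmax.le_of_ge hh le_sup_left
    apply hna
    apply this
    simp [SimpleGraph.edge_adj, hpq]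
  simp only [Set.mem_ofPred_eq, not_forall, not_not] at h1
  obtain ⟨C, hC⟩ := h1
  rcases hC.drop with h | ⟨m', C', e, _, _, _, h⟩
  · exact hmax.prop C h
  · have : m' = s := by omega
    subst this
    exact hcon _ h

lemma sum_lower [Fintype V] {ι : Type*} (g : V → V → ℕ) (hg : ∀ p q, g p q = g q p) (I : Finset V)
    (L : Finset ι) (v : ι → Bool → V) (hi : ∀ i j c c', v i c = v j c' → i = j ∧ c = c')
    (hd : ∀ l ∈ L, ∀ c, v l c ∉ I) (K e : ℕ)
    (hI : ∀ p ∈ I, ∀ q ∈ I, p ≠ q → e ≤ g p q)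
    (hL : ∀ l ∈ L, K ≤ ∑ p ∈ I, (g (v l true) p + g (v l false) p)) :
    e * (I.card * (I.card - 1)) + 2 * (L.card * K) ≤ ∑ p, ∑ q, g p q := by
  classical
  set Z : Finset V := (L ×ˢ Finset.univ).image (fun x : ι × Bool => v x.1 x.2) with hZ
  have hdis : Disjoint I Z := by
    rw [Finset.disjoint_right]
    intro a ha
    simp only [hZ, Finset.mem_image, Finset.mem_product] at ha
    obtain ⟨x, hx, rfl⟩ := ha
    exact hd _ hx.1 _
  have hZI : L.card * K ≤ ∑ z ∈ Z, ∑ p ∈ I, g z p := by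
    rw [hZ, Finset.sum_image, Finset.sum_product]
    · rw [← smul_eq_mul, ← Finset.sum_const]
      refine Finset.sum_le_sum fun l hl => (hL l hl).trans ?_
      simp [Finset.sum_add_distrib]
    · rintro ⟨a, b⟩ _ ⟨a', b'⟩ _ h
      have := hi _ _ _ _ h
      exact Prod.ext this.1 this.2
  have hIZ : ∑ p ∈ I, ∑ z ∈ Z, g p z = ∑ z ∈ Z, ∑ p ∈ I, g z p := by
    rw [Finset.sum_comm]
    exact Finset.sum_congr rfl fun _ _ => Finset.sum_congr rfl fun _ _ => hg _ _
  have hII : e * (I.card * (I.card - 1)) ≤ ∑ p ∈ I, ∑ q ∈ I, g p q := by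
    have : e * (I.card * (I.card - 1)) = ∑ p ∈ I, ∑ q ∈ I.erase p, e := by
      rw [Finset.sum_congr rfl (fun p hp => by
        rw [Finset.sum_const, Finset.card_erase_of_mem hp])]
      rw [Finset.sum_const]; simp; ring
    rw [this]
    refine Finset.sum_le_sum fun p hp => ?_
    refine (Finset.sum_le_sum fun q hq => ?_).trans
      (Finset.sum_le_sum_of_subset (Finset.erase_subset p I))
    exact hI p hp q (Finset.mem_of_mem_erase hq) (Finset.ne_of_mem_erase hq).symm
  have h1 : ∑ p ∈ I ∪ Z, ∑ q, g p q ≤ ∑ p, ∑ q, g p q :=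
    Finset.sum_le_sum_of_subset (Finset.subset_univ _)
  rw [Finset.sum_union hdis] at h1
  have h2 : ∑ p ∈ I, ∑ q ∈ I ∪ Z, g p q ≤ ∑ p ∈ I, ∑ q, g p q :=
    Finset.sum_le_sum fun p _ => Finset.sum_le_sum_of_subset (Finset.subset_univ _)
  have h3 : ∑ p ∈ Z, ∑ q ∈ I, g p q ≤ ∑ p ∈ Z, ∑ q, g p q :=
    Finset.sum_le_sum fun p _ => Finset.sum_le_sum_of_subset (Finset.subset_univ _)
  simp only [Finset.sum_union hdis, Finset.sum_add_distrib] at h2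
  omega

lemma sum_pair (U : Finset V) (f g : V → ℕ) (hU : 3 ≤ U.card)
    (h1 : ∀ p ∈ U, ∀ q ∈ U, p ≠ q → f p = 0 → 2 ≤ g q)
    (h2 : ∀ p ∈ U, ∀ q ∈ U, p ≠ q → g p = 0 → 2 ≤ f q) :
    2 * U.card ≤ ∑ p ∈ U, (f p + g p) := by
  have key : ∀ f g : V → ℕ, (∀ p ∈ U, ∀ q ∈ U, p ≠ q → f p = 0 → 2 ≤ g q) →
      (∃ p ∈ U, f p = 0) → 2 * U.card ≤ ∑ p ∈ U, (f p + g p) := by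
    rintro f g h1 ⟨p, hp, hfp⟩
    by_cases hq : ∃ q ∈ U, q ≠ p ∧ f q = 0
    · obtain ⟨q, hq, hqp, hfq⟩ := hq
      rw [mul_comm, ← smul_eq_mul, ← Finset.sum_const]
      refine Finset.sum_le_sum fun a ha => ?_
      by_cases hap : a = p
      · have := h1 q hq a ha (by grind) hfq; omega
      · have := h1 p hp a ha (by grind) hfp; omega
    · push Not at hq
      have : (U.erase p).card * 3 ≤ ∑ a ∈ U.erase p, (f a + g a) := by
        rw [← smul_eq_mul, ← Finset.sum_const]
        refine Finset.sum_le_sum fun a ha => ?_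
        rw [Finset.mem_erase] at ha
        have := h1 p hp a ha.2 (by grind) hfp
        have := hq a ha.2 ha.1
        omega
      rw [Finset.card_erase_of_mem hp] at this
      have h4 := Finset.sum_le_sum_of_subset (f := fun a => f a + g a) (Finset.erase_subset p U)
      omega
  by_cases hf : ∃ p ∈ U, f p = 0
  · exact key f g h1 hf
  by_cases hg : ∃ p ∈ U, g p = 0
  · have := key g f h2 hg
    simpa only [add_comm] using this
  push Not at hf hg
  rw [mul_comm, ← smul_eq_mul, ← Finset.sum_const]
  refine Finset.sum_le_sum fun a ha => ?_
  have := hf a ha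
  have := hg a ha
  omega


lemma caseA [Fintype V] (s u : ℕ) (hn : Fintype.card V = 2 * s + u) (C : Finset V)
    (hC : Mt G s C) (hno : ∀ C, ¬ Mt G (s + 1) C) (g : V → V → ℕ)
    (hg : ∀ p q, g p q = g q p) (hgn : ∀ p q, p ≠ q → ¬ G.Adj p q → 1 ≤ g p q) :
    ∃ t ≤ s, (t + u) * (t + u - 1) + 2 * ((s - t) * (2 * u + t - 2)) ≤ ∑ p, ∑ q, g p q := by
  classical
  obtain ⟨v, hi, ha, hm⟩ := hC.enum
  set U : Finset V := Cᶜ with hUdef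
  have hUc : U.card = u := by
    have := hC.card
    rw [hUdef, Finset.card_compl]; omega
  have hU : ∀ p, p ∈ U ↔ ∀ i c, v i c ≠ p := by
    intro p; simp [hUdef, hm]
  let star : Fin s → Bool → Prop := fun i c =>
    ∃ a ∈ U, ∃ b ∈ U, a ≠ b ∧ G.Adj a (v i c) ∧ G.Adj b (v i c)
  let S : Finset (Fin s) := Finset.univ.filter fun i => ∃ c, star i c
  have hS : ∀ i, ∃ c, i ∈ S → star i c := by
    intro i
    by_cases h : i ∈ S
    · obtain ⟨c, hc⟩ := (Finset.mem_filter.1 h).2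
      exact ⟨c, fun _ => hc⟩
    · exact ⟨true, fun h' => absurd h' h⟩
  choose c hc using hS
  have hc2 : ∀ i ∈ S, ∀ p, ∃ a ∈ U, a ≠ p ∧ G.Adj a (v i (c i)) := by
    intro i hiS p
    obtain ⟨a, haU, b, hbU, hab, h1, h2⟩ := hc i hiS
    by_cases h : a = p
    · exact ⟨b, hbU, by grind, h2⟩
    · exact ⟨a, haU, h, h1⟩
  let y : Fin s → V := fun i => v i (!(c i))
  have hyinj : Function.Injective y := fun i j h => (hi _ _ _ _ h).1
  let Y : Finset V := S.image y
  have hYc : Y.card = S.card := Finset.card_image_of_injective _ hyinj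
  have hUY : Disjoint U Y := by
    rw [Finset.disjoint_right]
    intro p hp hpU
    obtain ⟨i, hiS, rfl⟩ := Finset.mem_image.1 hp
    exact (hU _).1 hpU _ _ rfl
  have hSs : S.card ≤ s := by simpa using Finset.card_le_univ S
  have hIc : (U ∪ Y).card = S.card + u := by
    rw [Finset.card_union_of_disjoint hUY, hUc, hYc, add_comm]
  -- independence
  have hUU : ∀ p ∈ U, ∀ q ∈ U, ¬ G.Adj p q := by
    intro p hp q hq h
    exact hno _ (Mt.cons hC h (by simpa [hUdef] using hp) (by simpa [hUdef] using hq))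
  have hUYn : ∀ p ∈ U, ∀ i ∈ S, ¬ G.Adj p (y i) := by
    intro p hp i hiS h
    obtain ⟨a, haU, hap, h1⟩ := hc2 i hiS p
    exact aug2 hi ha hno i (c i) a p ((hU _).1 haU) ((hU _).1 hp) hap h1 h
  have hYYn : ∀ i ∈ S, ∀ j ∈ S, ¬ G.Adj (y i) (y j) := by
    intro i hiS j hjS h
    have hij : i ≠ j := by rintro rfl; exact h.ne rfl
    obtain ⟨b, hbU, -, h2⟩ := hc2 j hjS (y i)
    obtain ⟨a, haU, hap, h1⟩ := hc2 i hiS b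
    exact aug3 hi ha hno i j hij (c i) (!(c j)) a b ((hU _).1 haU) ((hU _).1 hbU) hap h1 h
      (by simpa using h2)
  have hind : ∀ p ∈ U ∪ Y, ∀ q ∈ U ∪ Y, ¬ G.Adj p q := by
    intro p hp q hq
    rcases Finset.mem_union.1 hp with hp | hp <;> rcases Finset.mem_union.1 hq with hq | hq
    · exact hUU p hp q hq
    · obtain ⟨i, hiS, rfl⟩ := Finset.mem_image.1 hq
      exact hUYn p hp i hiS
    · obtain ⟨i, hiS, rfl⟩ := Finset.mem_image.1 hp
      exact fun h => hUYn q hq i hiS h.symm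
    · obtain ⟨i, hiS, rfl⟩ := Finset.mem_image.1 hp
      obtain ⟨j, hjS, rfl⟩ := Finset.mem_image.1 hq
      exact hYYn i hiS j hjS
  have hd : ∀ l ∈ Sᶜ, ∀ b, v l b ∉ U ∪ Y := by
    intro l hl b hb
    rcases Finset.mem_union.1 hb with hp | hp
    · exact (hU _).1 hp _ _ rfl
    · obtain ⟨i, hiS, e⟩ := Finset.mem_image.1 hp
      have := (hi _ _ _ _ e).1
      subst this
      simp [hiS] at hl
  refine ⟨S.card, hSs, ?_⟩
  have main := sum_lower g hg (U ∪ Y) Sᶜ v hi hd (2 * u + S.card - 2) 1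
    (fun p hp q hq hpq => hgn p q hpq (hind p hp q hq)) ?_
  · rw [hIc, Finset.card_compl, Fintype.card_fin, one_mul] at main
    exact main
  intro l hl
  have hlS : l ∉ S := by simpa using hl
  let nU : Bool → Finset V := fun b => U.filter fun p => G.Adj (v l b) p
  let nY : Bool → Finset V := fun b => Y.filter fun p => G.Adj (v l b) p
  have hsum : ∀ b, S.card + u ≤ ∑ p ∈ U ∪ Y, g (v l b) p + ((nU b).card + (nY b).card) := by
    intro b
    have e1 : (nU b).card + (nY b).card = ((U ∪ Y).filter fun p => G.Adj (v l b) p).card := by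
      rw [Finset.filter_union, Finset.card_union_of_disjoint]
      exact Finset.disjoint_filter_filter hUY
    have e2 := Finset.card_filter_add_card_filter_not (s := U ∪ Y) (fun p => G.Adj (v l b) p)
    have e3 : ((U ∪ Y).filter fun p => ¬ G.Adj (v l b) p).card ≤ ∑ p ∈ U ∪ Y, g (v l b) p := by
      rw [Finset.card_filter]
      refine Finset.sum_le_sum fun p hp => ?_
      by_cases h : G.Adj (v l b) p
      · simp [h]
      · have hne : v l b ≠ p := by
          intro e
          apply hd l hl b
          rw [e]; exact hp
        simpa [h] using hgn _ _ hne h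
    omega
  have hnU : ∀ b, (nU b).card ≤ 1 := by
    intro b
    rw [Finset.card_le_one]
    intro p hp q hq
    by_contra hpq
    simp only [nU, Finset.mem_filter] at hp hq
    exact hlS (Finset.mem_filter.2 ⟨Finset.mem_univ _, b, p, hp.1, q, hq.1, hpq, hp.2.symm, hq.2.symm⟩)
  have hnYS : ∀ b, (nY b).card ≤ S.card := fun b => hYc ▸ Finset.card_filter_le _ _
  have hUYe : ∀ b, (nU b).card = 0 ∨ (nY (!b)).card = 0 := by
    intro b
    by_contra! hcon
    obtain ⟨p, hp⟩ := Finset.card_pos.1 (Nat.pos_of_ne_zero hcon.1)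
    obtain ⟨q, hq⟩ := Finset.card_pos.1 (Nat.pos_of_ne_zero hcon.2)
    simp only [nU, nY, Finset.mem_filter] at hp hq
    obtain ⟨i, hiS, rfl⟩ := Finset.mem_image.1 hq.1
    obtain ⟨a, haU, hap, h1⟩ := hc2 i hiS p
    refine aug3 hi ha hno i l (by rintro rfl; exact hlS hiS) (c i) (!b) a p ((hU _).1 haU)
      ((hU _).1 hp.1) hap h1 hq.2.symm ?_
    simpa using hp.2.symm
  have hYY : (nY true).card = 0 ∨ (nY false).card = 0 ∨
      ((nY true).card ≤ 1 ∧ (nY false).card ≤ 1) := by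
    have heq : ∀ p ∈ nY true, ∀ q ∈ nY false, p = q := by
      intro p hp q hq
      by_contra hpq
      simp only [nY, Finset.mem_filter] at hp hq
      obtain ⟨i, hiS, rfl⟩ := Finset.mem_image.1 hp.1
      obtain ⟨j, hjS, rfl⟩ := Finset.mem_image.1 hq.1
      obtain ⟨b, hbU, -, h2⟩ := hc2 j hjS (y i)
      obtain ⟨a, haU, hap, h1⟩ := hc2 i hiS b
      exact aug4 hi ha hno i j l (by rintro rfl; exact hpq rfl) (by rintro rfl; exact hlS hiS)
        (by rintro rfl; exact hlS hjS) (c i) (c j) true a b ((hU _).1 haU) ((hU _).1 hbU) hap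
        h1 hp.2.symm hq.2 h2
    by_contra! hcon
    obtain ⟨p, hp⟩ := Finset.card_pos.1 (Nat.pos_of_ne_zero hcon.1)
    obtain ⟨q, hq⟩ := Finset.card_pos.1 (Nat.pos_of_ne_zero hcon.2.1)
    have h1 : (nY true).card ≤ 1 := Finset.card_le_one.2 fun a ha b hb =>
      (heq a ha q hq).trans (heq b hb q hq).symm
    have h2 : (nY false).card ≤ 1 := Finset.card_le_one.2 fun a ha b hb =>
      (heq p hp a ha).symm.trans (heq p hp b hb)
    have := hcon.2.2 h1
    omega
  rw [Finset.sum_add_distrib]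
  have a1 := hsum true
  have a2 := hsum false
  have a3 := hnU true
  have a4 := hnU false
  have a5 := hnYS true
  have a6 := hnYS false
  have a7 := hUYe true
  have a8 := hUYe false
  simp only [Bool.not_true, Bool.not_false] at a7 a8
  omega

lemma caseB [Fintype V] (s u : ℕ) (hu : 3 ≤ u) (hn : Fintype.card V = 2 * s + u) (C : Finset V)
    (hC : Mt G s C) (g : V → V → ℕ)
    (hg : ∀ p q, g p q = g q p) (hgn : ∀ p q, p ≠ q → g p q = 0 → G.Adj p q)
    (hno : ∀ C x y, Mt G s C → x ∉ C → y ∉ C → x ≠ y → 2 ≤ g x y) :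
    2 * (u * (u - 1)) + 2 * (s * (2 * u)) ≤ ∑ p, ∑ q, g p q := by
  classical
  obtain ⟨v, hi, ha, hm⟩ := hC.enum
  set U : Finset V := Cᶜ with hUdef
  have hUc : U.card = u := by
    have := hC.card
    rw [hUdef, Finset.card_compl]; omega
  have hU : ∀ p, p ∈ U ↔ ∀ i c, v i c ≠ p := by
    intro p; simp [hUdef, hm]
  have main := sum_lower g hg U Finset.univ v hi
    (fun l _ c h => (hU _).1 h l c rfl) (2 * u) 2
    (fun p hp q hq hpq => hno C p q hC (by simpa [hUdef] using hp) (by simpa [hUdef] using hq) hpq) ?_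
  · rw [hUc, Finset.card_univ, Fintype.card_fin] at main
    exact main
  intro l _
  have key : ∀ b, ∀ p ∈ U, ∀ q ∈ U, p ≠ q → g (v l b) p = 0 → 2 ≤ g (v l (!b)) q := by
    intro b p hp q hq hpq h0
    have hadj := hgn _ _ ((hU _).1 hp l b) h0
    obtain ⟨C', hC', hm'⟩ := aug1 hi ha l b p ((hU _).1 hp) hadj.symm
    refine hno C' _ _ hC' ?_ ?_ ((hU _).1 hq l _)
    · rw [hm']
      rintro (e | e | ⟨j, hj, c', e⟩)
      · exact (hU _).1 hp _ _ e
      · have := (hi _ _ _ _ e).2; simp at this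
      · exact hj (hi _ _ _ _ e).1
    · rw [hm']
      have := (hU _).1 hq
      grind
  have := sum_pair U (g (v l true)) (g (v l false)) (by omega) (key true) (key false)
  rw [hUc] at this
  exact this

end

lemma sum_edges {n : ℕ} (E : Set (Sym2 (Fin n))) (hE : E ⊆ (⊤ : SimpleGraph (Fin n)).edgeSet) :
    (open Classical in ∑ p, ∑ q, if s(p, q) ∈ E then 1 else 0) = 2 * E.ncard := by
  classical
  have h1 : (SimpleGraph.fromEdgeSet E).edgeSet = E := by
    rw [SimpleGraph.edgeSet_fromEdgeSet]
    ext e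
    constructor
    · exact fun h => h.1
    · intro h
      refine ⟨h, ?_⟩
      have := hE h
      simpa using this
  have h2 := SimpleGraph.sum_degrees_eq_twice_card_edges (SimpleGraph.fromEdgeSet E)
  have h3 : (SimpleGraph.fromEdgeSet E).edgeFinset.card = E.ncard := by
    rw [← Set.ncard_coe_finset, SimpleGraph.coe_edgeFinset, h1]
  rw [← h3]
  refine Eq.trans ?_ (h2.trans (by congr!))
  refine Finset.sum_congr rfl fun p _ => ?_
  rw [← SimpleGraph.card_neighborFinset_eq_degree, ← Finset.card_filter]
  congr 1
  ext q
  simp only [Finset.mem_filter, Finset.mem_univ, true_and, SimpleGraph.mem_neighborFinset,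
    SimpleGraph.fromEdgeSet_adj]
  constructor
  · intro h
    refine ⟨h, ?_⟩
    have := hE h
    simpa using this
  · exact fun h => h.1

lemma arith (s u t : ℕ) (hu : 2 ≤ u) (ht : t ≤ s) (h : 2 * u ≤ s + 3) :
    u * (u - 1) + 2 * (s * (2 * u - 2)) ≤
      (t + u) * (t + u - 1) + 2 * ((s - t) * (2 * u + t - 2)) := by
  obtain ⟨a, rfl⟩ := Nat.exists_eq_add_of_le ht
  obtain ⟨b, rfl⟩ := Nat.exists_eq_add_of_le hu
  have e1 : 2 + b - 1 = b + 1 := by omega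
  have e2 : 2 * (2 + b) - 2 = 2 * b + 2 := by omega
  have e3 : t + (2 + b) - 1 = t + b + 1 := by omega
  have e4 : t + a - t = a := by omega
  have e5 : 2 * (2 + b) + t - 2 = 2 * b + 2 + t := by omega
  rw [e1, e2, e3, e4, e5]
  have : 2 * b + 1 ≤ t + a := by omega
  nlinarith [Nat.mul_le_mul_left t this, Nat.zero_le (t * a)]

/-- for r < k ≤ (3r-7)/2 and
|E1|+2|E2| < min{(k+3r-4)(k-r+3)/2, (k-r+2)(k+r-1)}, the complete graph on r+k
vertices has a good matching of order r. (Inequalities are scaled by 2.) -/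
theorem stmt_12 (r k : ℕ) (hr : 1 ≤ r) (hk : r < k) (hk2 : 2 * k + 7 ≤ 3 * r)
    (E0 E1 E2 : Set (Sym2 (Fin (r + k))))
    (hpart : (⊤ : SimpleGraph (Fin (r + k))).edgeSet = E0 ∪ E1 ∪ E2)
    (h01 : Disjoint E0 E1) (h02 : Disjoint E0 E2) (h12 : Disjoint E1 E2)
    (hE : 2 * (E1.ncard + 2 * E2.ncard) <
      min ((k + 3 * r - 4) * (k - r + 3)) (2 * ((k - r + 2) * (k + r - 1)))) :
    ∃ M : Set (Sym2 (Fin (r + k))), IsMatchingOn (⊤ : SimpleGraph (Fin (r + k))) M ∧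
      M.ncard = r ∧ M ∩ E2 = ∅ ∧ (M ∩ E1).ncard ≤ 1 := by
  classical
  by_contra hcon
  have hE1 : E1 ⊆ (⊤ : SimpleGraph (Fin (r + k))).edgeSet := by
    rw [hpart]; exact fun e h => Or.inl (Or.inr h)
  have hE2 : E2 ⊆ (⊤ : SimpleGraph (Fin (r + k))).edgeSet := by
    rw [hpart]; exact fun e h => Or.inr h
  let w : Fin (r + k) → Fin (r + k) → ℕ := fun p q =>
    (if s(p, q) ∈ E1 then 1 else 0) + 2 * (if s(p, q) ∈ E2 then 1 else 0)
  have hw : ∀ p q, w p q = w q p := fun p q => by simp only [w, Sym2.eq_swap]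
  have hsum : ∑ p, ∑ q, w p q = 2 * (E1.ncard + 2 * E2.ncard) := by
    have e1 := sum_edges E1 hE1
    have e2 := sum_edges E2 hE2
    simp only [w, Finset.sum_add_distrib, ← Finset.mul_sum]
    rw [e1, e2]; ring
  let G : SimpleGraph (Fin (r + k)) :=
    { Adj := fun p q => p ≠ q ∧ w p q = 0
      symm := ⟨fun p q h => ⟨h.1.symm, (hw q p).trans h.2⟩⟩
      loopless := ⟨fun p h => h.1 rfl⟩ }
  have hGE : ∀ e ∈ G.edgeSet, e ∉ E1 ∧ e ∉ E2 := by
    intro e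
    induction e with
    | _ p q =>
      intro h
      have h : w p q = 0 := h.2
      simp only [w] at h
      constructor
      · intro h'; simp [h'] at h
      · intro h'; simp [h'] at h
  have hno : ∀ C x y, Mt G (r - 1) C → x ∉ C → y ∉ C → x ≠ y → 2 ≤ w x y := by
    intro C x y hC hx hy hxy
    by_contra hlt
    have hxy2 : s(x, y) ∉ E2 := by
      intro h; simp [w, h] at hlt
    obtain ⟨M, h1, h2, h3, h4⟩ := hC.toFinset
    apply hcon
    have hn : s(x, y) ∉ M := fun hh => hx (h3 _ hh x (by simp))
    refine ⟨↑(insert s(x, y) M), ⟨?_, ?_⟩, ?_, ?_, ?_⟩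
    · intro e he
      rcases Finset.mem_insert.1 he with rfl | he
      · simpa using hxy
      · exact SimpleGraph.edgeSet_mono le_top (h2 e he)
    · rw [Finset.coe_insert]
      refine h4.insert ?_
      intro f hf _
      constructor
      · intro v hv hv'
        have := h3 f hf v hv'
        simp at hv; grind
      · intro v hv hv'
        have := h3 f hf v hv
        simp at hv'; grind
    · rw [Set.ncard_coe_finset, Finset.card_insert_of_notMem hn, h1]; omega
    · ext e
      simp only [Set.mem_inter_iff, Set.mem_empty_iff_false, iff_false, not_and]
      intro he
      rcases Finset.mem_insert.1 he with rfl | he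
      · exact hxy2
      · exact (hGE e (h2 e he)).2
    · have : ((↑(insert s(x, y) M) : Set (Sym2 (Fin (r + k)))) ∩ E1) ⊆ {s(x, y)} := by
        rintro e ⟨he, heE⟩
        rcases Finset.mem_insert.1 he with rfl | he
        · rfl
        · exact absurd heE (hGE e (h2 e he)).1
      simpa using Set.ncard_le_ncard this
  obtain ⟨d, rfl⟩ := Nat.exists_eq_add_of_lt hk
  have hb1 := lt_of_lt_of_le hE (min_le_left _ _)
  have hb2 := lt_of_lt_of_le hE (min_le_right _ _)
  by_cases hB : ∃ C, Mt G (r - 1) C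
  · obtain ⟨C, hC⟩ := hB
    have := caseB (r - 1) (d + 3) (by omega) (by simp; omega) C hC w hw
      (fun p q h1 h2 => ⟨h1, h2⟩) hno
    rw [hsum] at this
    obtain ⟨r', rfl⟩ := Nat.exists_eq_add_of_le hr
    rw [show 1 + r' + d + 1 - (1 + r') + 2 = d + 3 by omega,
      show 1 + r' + d + 1 + (1 + r') - 1 = 2 * r' + d + 2 by omega] at hb2
    rw [show d + 3 - 1 = d + 2 by omega, show 1 + r' - 1 = r' by omega] at this
    nlinarith
  · push Not at hB
    obtain ⟨s, rfl⟩ : ∃ s, r = s + 2 := ⟨r - 2, by omega⟩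
    obtain ⟨G', hle, ⟨C, hC⟩, hno'⟩ := extend s (by simp; omega) (G := G) hB
    obtain ⟨t, ht, h1⟩ := caseA s (d + 5) (by simp; omega) C hC hno' w hw (by
      intro p q hpq hna
      by_contra h0
      exact hna (hle ⟨hpq, by omega⟩))
    rw [hsum] at h1
    have h2 := arith s (d + 5) t (by omega) ht (by omega)
    rw [show s + 2 + d + 1 - (s + 2) + 3 = d + 4 by omega,
      show s + 2 + d + 1 + 3 * (s + 2) - 4 = 4 * s + d + 5 by omega] at hb1
    rw [show d + 5 - 1 = d + 4 by omega, show 2 * (d + 5) - 2 = 2 * (d + 4) by omega] at h2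
    nlinarith
end

section
/- Let r and k be positive integers with k > r, let H be the complete graph on r+k vertices, and let (E_0, E_1, E_2) be an ordered partition of E(H). Suppose k > (3r−7)/2 and |E_1| + 2|E_2| < min{ (k+1)(k+2)/2, (k−r+2)(k+r−1) }. Then H has a matching M of order r with M ∩ E_2 = ∅ and |M ∩ E_1| ≤ 1. -/
open Finset in
/-- number of points moved -/
def mvd {V : Type*} [Fintype V] [DecidableEq V] (f : V → V) : ℕ :=
  ∑ x, if f x ≠ x then 1 else 0

/-- matching as an involution -/
def IsM {V : Type*} (A : V → V → Prop) (f : V → V) : Prop :=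
  (∀ x, f (f x) = x) ∧ ∀ x, f x ≠ x → A x (f x)

section
variable {V : Type*} [Fintype V] [DecidableEq V]

lemma isM_add {A : V → V → Prop} (f : V → V) (hf : IsM A f) (x y : V)
    (hx : f x = x) (hy : f y = y) (hxy : x ≠ y) (A' : V → V → Prop)
    (hA : ∀ a b, A a b → A' a b) (h1 : A' x y) (h2 : A' y x) :
    IsM A' (fun t => f (Equiv.swap x y t)) ∧
      mvd (fun t => f (Equiv.swap x y t)) = mvd f + 2 := by
  obtain ⟨hf1, hf2⟩ := hf
  obtain ⟨g, hg⟩ : ∃ g : V → V, g = fun t => f (Equiv.swap x y t) := ⟨_, rfl⟩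
  have gx : g x = y := by simp [hg, hy]
  have gy : g y = x := by simp [hg, hx]
  have gt : ∀ t, t ≠ x → t ≠ y → g t = f t := by
    intro t h h'
    simp [hg, Equiv.swap_apply_of_ne_of_ne h h']
  rw [← hg]
  clear hg
  refine ⟨⟨?_, ?_⟩, ?_⟩
  · intro t
    have := hf1 t
    by_cases h : t = x
    · rw [h, gx, gy]
    by_cases h' : t = y
    · rw [h', gy, gx]
    rw [gt t h h', gt, this]
    · intro h2; rw [h2, hx] at this; exact h this.symm
    · intro h2; rw [h2, hy] at this; exact h' this.symm
  · intro t ht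
    by_cases h : t = x
    · rw [h, gx]; exact h1
    by_cases h' : t = y
    · rw [h', gy]; exact h2
    rw [gt t h h'] at ht ⊢
    exact hA _ _ (hf2 t ht)
  · simp only [mvd]
    have : (2:ℕ) = ∑ t : V, ((if t = x then 1 else 0) + (if t = y then 1 else 0)) := by
      simp [Finset.sum_add_distrib]
    rw [this, ← Finset.sum_add_distrib]
    apply Finset.sum_congr rfl
    intro t _
    by_cases h : t = x
    · subst h; simp [gx, hx, hxy, hxy.symm]
    by_cases h' : t = y
    · subst h'; simp [gy, hy, hxy, hxy.symm]
    simp [gt t h h', h, h']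

lemma isM_rem {A : V → V → Prop} (f : V → V) (hf : IsM A f) (a b : V)
    (hab : f a = b) (hne : a ≠ b) :
    IsM A (fun t => f (Equiv.swap a b t)) ∧
      mvd (fun t => f (Equiv.swap a b t)) + 2 = mvd f := by
  obtain ⟨hf1, hf2⟩ := hf
  have hba : f b = a := by rw [← hab, hf1]
  obtain ⟨g, hg⟩ : ∃ g : V → V, g = fun t => f (Equiv.swap a b t) := ⟨_, rfl⟩
  have ga : g a = a := by simp [hg, hba]
  have gb : g b = b := by simp [hg, hab]
  have gt : ∀ t, t ≠ a → t ≠ b → g t = f t := by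
    intro t h h'
    simp [hg, Equiv.swap_apply_of_ne_of_ne h h']
  rw [← hg]
  clear hg
  refine ⟨⟨?_, ?_⟩, ?_⟩
  · intro t
    have := hf1 t
    by_cases h : t = a
    · rw [h, ga, ga]
    by_cases h' : t = b
    · rw [h', gb, gb]
    rw [gt t h h', gt, this]
    · intro h2; rw [h2, hab] at this; exact h' this.symm
    · intro h2; rw [h2, hba] at this; exact h this.symm
  · intro t ht
    by_cases h : t = a
    · rw [h, ga] at ht; exact absurd rfl ht
    by_cases h' : t = b
    · rw [h', gb] at ht; exact absurd rfl ht
    rw [gt t h h'] at ht ⊢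
    exact hf2 t ht
  · simp only [mvd]
    have : (2:ℕ) = ∑ t : V, ((if t = a then 1 else 0) + (if t = b then 1 else 0)) := by
      simp [Finset.sum_add_distrib]
    rw [this, ← Finset.sum_add_distrib]
    apply Finset.sum_congr rfl
    intro t _
    by_cases h : t = a
    · subst h; simp [ga, hab, hne, hne.symm]
    by_cases h' : t = b
    · subst h'; simp [gb, hba, hne, hne.symm]
    simp [gt t h h', h, h']

lemma mvd_even {A : V → V → Prop} (f : V → V) (hf : IsM A f) : Even (mvd f) := by
  induction h : mvd f using Nat.strong_induction_on generalizing f with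
  | _ c ih =>
    by_cases hc : ∃ a, f a ≠ a
    · obtain ⟨a, ha⟩ := hc
      obtain ⟨h1, h2⟩ := isM_rem f hf a (f a) rfl (Ne.symm ha)
      have := ih _ (by omega) _ h1 rfl
      rw [← h, ← h2]
      exact this.add even_two
    · push Not at hc
      have : mvd f = 0 := by simp [mvd, hc]
      rw [← h, this]
      exact Even.zero

lemma key_switch {A : V → V → Prop} (m : ℕ) (hmax : ∀ f, IsM A f → mvd f ≤ 2 * m)
    (M N : V → V) (hM : IsM A M) (hN : IsM A N) (cM : mvd M = 2 * m) (cN : mvd N = 2 * m)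
    (x z y : V) (hx : M x = x) (hz : M z = z) (hxz : x ≠ z) (hy : N y = y) :
    ∃ f, IsM A f ∧ mvd f = 2 * m ∧ f y = y ∧ (f x = x ∨ f z = z) := by
  classical
  let g : Equiv.Perm V := (Function.Involutive.toPerm M hM.1) * (Function.Involutive.toPerm N hN.1)
  let p : Equiv.Perm V := Function.Involutive.toPerm M hM.1
  let q : Equiv.Perm V := Function.Involutive.toPerm N hN.1
  have hpp : p * p = 1 := by ext t; exact hM.1 t
  have hqq : q * q = 1 := by ext t; exact hN.1 t
  have hg : g = p * q := rfl
  have hginv : g⁻¹ = q * p := by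
    rw [hg, mul_inv_rev, inv_eq_of_mul_eq_one_left hpp, inv_eq_of_mul_eq_one_left hqq]
  have hqg : q * g * q⁻¹ = g⁻¹ := by
    rw [hginv, hg, inv_eq_of_mul_eq_one_left hqq]
    simp only [mul_assoc, hqq, mul_one]
  have hq : ∀ i : ℤ, N ((g ^ i) y) = (g ^ (-i)) y := by
    intro i
    have h : q * g ^ i * q⁻¹ = g ^ (-i) := by
      rw [← conj_zpow, hqg, inv_zpow, zpow_neg]
    rw [← h]
    have : q⁻¹ y = y := by rw [inv_eq_of_mul_eq_one_left hqq]; exact hy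
    simp only [Equiv.Perm.mul_apply, this]
    rfl
  have hp : ∀ i : ℤ, M ((g ^ i) y) = (g ^ (1 - i)) y := by
    intro i
    have h : p = g * q := by rw [hg, mul_assoc, hqq, mul_one]
    have : M ((g ^ i) y) = g (N ((g ^ i) y)) := by
      change p _ = g (q _)
      rw [h]; rfl
    rw [this, hq, sub_eq_add_neg, zpow_add, zpow_one]; rfl
  let P : V → Prop := fun t => ∃ i : ℤ, (g ^ i) y = t
  have PN : ∀ t, P (N t) ↔ P t := by
    have h : ∀ t, P t → P (N t) := by
      rintro t ⟨i, rfl⟩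
      exact ⟨-i, (hq i).symm⟩
    intro t
    refine ⟨fun ht => ?_, h t⟩
    have := h _ ht
    rwa [hN.1] at this
  have PM : ∀ t, P (M t) ↔ P t := by
    have h : ∀ t, P t → P (M t) := by
      rintro t ⟨i, rfl⟩
      exact ⟨1-i, (hp i).symm⟩
    intro t
    refine ⟨fun ht => ?_, h t⟩
    have := h _ ht
    rwa [hM.1] at this
  have hone : ¬ (P x ∧ P z) := by
    rintro ⟨⟨i, hi⟩, ⟨j, hj⟩⟩
    have h1 : ∀ i : ℤ, M ((g ^ i) y) = (g ^ i) y → (g ^ (2 * i - 1)) y = y := by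
      intro i h
      rw [hp] at h
      have : (2 * i - 1) = -(1 - i) + i := by ring
      rw [this, zpow_add, Equiv.Perm.mul_apply, ← h, ← Equiv.Perm.mul_apply, ← zpow_add]
      simp
    have a1 := h1 i (by rw [hi, hx])
    have a2 := h1 j (by rw [hj, hz])
    -- period arithmetic: i - j is a combination of 2i-1, 2j-1
    have comb : ∀ (a b : ℤ), (g ^ a) y = y → (g ^ (a * b)) y = y := by
      intro a b h
      rw [zpow_mul]
      exact Equiv.Perm.zpow_apply_eq_self_of_apply_eq_self h b
    have a3 : (g ^ (i - j)) y = y := by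
      have : i - j = (2 * i - 1) * (1 - j) + (2 * j - 1) * (i - 1) := by ring
      rw [this, zpow_add, Equiv.Perm.mul_apply, comb _ _ a2, comb _ _ a1]
    apply hxz
    rw [← hi, ← hj]
    have : i = j + (i - j) := by ring
    rw [this, zpow_add, Equiv.Perm.mul_apply, a3]
  let f : V → V := fun t => if P t then N t else M t
  let f' : V → V := fun t => if P t then M t else N t
  have hf : IsM A f := by
    have h1 := hM.1
    have h2 := hN.1
    have h3 := hM.2
    have h4 := hN.2
    constructor
    · intro t
      by_cases h : P t <;> simp [f, h, PN, PM, h1, h2]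
    · intro t
      by_cases h : P t <;> simp [f, h] <;> [exact h4 t; exact h3 t]
  have hf' : IsM A f' := by
    have h1 := hM.1
    have h2 := hN.1
    have h3 := hM.2
    have h4 := hN.2
    constructor
    · intro t
      by_cases h : P t <;> simp [f', h, PN, PM, h1, h2]
    · intro t
      by_cases h : P t <;> simp [f', h] <;> [exact h3 t; exact h4 t]
  have hc : mvd f + mvd f' = mvd M + mvd N := by
    simp only [mvd]
    rw [← Finset.sum_add_distrib, ← Finset.sum_add_distrib]
    apply Finset.sum_congr rfl
    intro t _
    by_cases h : P t
    · simp only [f, f', h, if_true]; exact add_comm _ _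
    · simp only [f, f', h, if_false]
  have b1 := hmax f hf
  have b2 := hmax f' hf'
  refine ⟨f, hf, by omega, ?_, ?_⟩
  · have : P y := ⟨0, by simp⟩
    simp [f, this, hy]
  · by_cases h : P x
    · right
      have : ¬ P z := fun h' => hone ⟨h, h'⟩
      simp [f, this, hz]
    · left
      simp [f, h, hx]

open Classical in
/-- number of ordered adjacent pairs -/
noncomputable def dn {V : Type*} [Fintype V] (A : V → V → Prop) : ℕ :=
  ∑ x, ∑ y, if A x y then 1 else 0

lemma adj_not_both {A : V → V → Prop} (hs : ∀ x y, A x y → A y x) (hi : ∀ x, ¬ A x x)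
    (m : ℕ) (hmax : ∀ f, IsM A f → mvd f ≤ 2 * m) (f : V → V) (hf : IsM A f)
    (cf : mvd f = 2 * m) (x y : V) (hxy : A x y) (hx : f x = x) : f y ≠ y := by
  intro hy
  have hne : x ≠ y := by rintro rfl; exact hi _ hxy
  obtain ⟨h1, h2⟩ := isM_add f hf x y hx hy hne A (fun _ _ h => h) hxy (hs _ _ hxy)
  have := hmax _ h1
  omega

lemma eg_critical {A : V → V → Prop} (hs : ∀ x y, A x y → A y x) (hi : ∀ x, ¬ A x x)
    (m : ℕ) (hmax : ∀ f, IsM A f → mvd f ≤ 2 * m)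
    (hcrit : ∀ v, ∃ f, IsM A f ∧ mvd f = 2 * m ∧ f v = v)
    (M : V → V) (hM : IsM A M) (cM : mvd M = 2 * m) :
    dn A ≤ 4 * m ^ 2 + 2 * m := by
  classical
  have hdeg : ∀ x, (∑ y, if A x y then 1 else 0) ≤ 2 * m := by
    intro x
    obtain ⟨f, hf, cf, hx⟩ := hcrit x
    rw [← cf, mvd]
    apply Finset.sum_le_sum
    intro y _
    by_cases h : A x y
    · have := adj_not_both hs hi m hmax f hf cf x y h hx
      simp [h, this]
    · simp [h]
  have huniq : ∀ y, (∑ x, if A x y ∧ M x = x then 1 else 0) ≤ if M y ≠ y then 1 else 0 := by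
    intro y
    by_cases hy : M y = y
    · simp only [hy, ne_eq, not_true_eq_false, if_false, nonpos_iff_eq_zero]
      apply Finset.sum_eq_zero
      intro x _
      rw [if_neg]
      rintro ⟨h1, h2⟩
      exact adj_not_both hs hi m hmax M hM cM x y h1 h2 hy
    · simp only [ne_eq, hy, not_false_eq_true, if_true]
      rw [← Finset.card_filter, Finset.card_le_one]
      intro a ha b hb
      simp only [Finset.mem_filter, Finset.mem_univ, true_and] at ha hb
      by_contra hab
      obtain ⟨N, hN, cN, hNy⟩ := hcrit y
      obtain ⟨f, hf, cf, hfy, h | h⟩ :=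
        key_switch m hmax M N hM hN cM cN a b y ha.2 hb.2 hab hNy
      · exact adj_not_both hs hi m hmax f hf cf a y ha.1 h hfy
      · exact adj_not_both hs hi m hmax f hf cf b y hb.1 h hfy
  have h1 : dn A ≤ ∑ x, ((if M x ≠ x then 1 else 0) * (2 * m) +
      ∑ y, if A x y ∧ M x = x then 1 else 0) := by
    rw [dn]
    apply Finset.sum_le_sum
    intro x _
    by_cases h : M x = x
    · simp [h]
    · simpa [h] using hdeg x
  have h2 : (∑ x, ∑ y, if A x y ∧ M x = x then 1 else 0) ≤ 2 * m := by
    rw [Finset.sum_comm, ← cM, mvd]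
    exact Finset.sum_le_sum fun y _ => huniq y
  rw [Finset.sum_add_distrib, ← Finset.sum_mul] at h1
  have h3 : (∑ x, if M x ≠ x then 1 else 0) = 2 * m := cM
  rw [h3] at h1
  nlinarith

lemma isM_id (A : V → V → Prop) : IsM A id ∧ mvd (id : V → V) = 0 := by
  refine ⟨⟨fun _ => rfl, fun x h => absurd rfl h⟩, by simp [mvd]⟩

lemma eg (m : ℕ) : ∀ (A : V → V → Prop) (_ : ∀ x y, A x y → A y x) (_ : ∀ x, ¬ A x x)
    (W : Finset V) (_ : ∀ x y, A x y → x ∈ W)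
    (_ : ∀ f, IsM A f → mvd f ≤ 2 * m) (_ : 5 * m + 3 ≤ 2 * W.card),
    dn A + m * (m + 1) ≤ 2 * m * W.card := by
  classical
  induction m with
  | zero =>
    intro A hs hi W hW hmax hn
    have hall : ∀ x y, ¬ A x y := by
      intro x y hxy
      exact adj_not_both hs hi 0 hmax id (isM_id A).1 (isM_id A).2 x y hxy rfl rfl
    simp [dn, hall]
  | succ m ih =>
    intro A hs hi W hW hmax hn
    by_cases hM : ∃ M, IsM A M ∧ mvd M = 2 * (m + 1)
    swap
    · have := ih A hs hi W hW (by
        intro f hf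
        have h1 := hmax f hf
        obtain ⟨c, hc⟩ := mvd_even f hf
        have : mvd f ≠ 2 * (m + 1) := fun h => hM ⟨f, hf, h⟩
        omega) (by omega)
      nlinarith
    obtain ⟨M, hM, cM⟩ := hM
    by_cases hc : ∀ v, ∃ f, IsM A f ∧ mvd f = 2 * (m + 1) ∧ f v = v
    · have := eg_critical hs hi (m + 1) hmax hc M hM cM
      nlinarith
    push Not at hc
    obtain ⟨v, hv⟩ := hc
    have hvW : v ∈ W := hW _ _ (hM.2 v (hv M hM cM))
    have hcard := Finset.card_erase_add_one hvW
    have := ih (fun x y => A x y ∧ x ≠ v ∧ y ≠ v) (fun x y h => ⟨hs _ _ h.1, h.2.2, h.2.1⟩)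
      (fun x h => hi x h.1) (W.erase v) (fun x y h => Finset.mem_erase.2 ⟨h.2.1, hW _ _ h.1⟩)
      (by
        intro f hf
        have hfA : IsM A f := ⟨hf.1, fun x hx => (hf.2 x hx).1⟩
        have h1 := hmax f hfA
        obtain ⟨c, hc⟩ := mvd_even f hf
        have : mvd f ≠ 2 * (m + 1) := by
          intro h
          exact (hf.2 v (hv f hfA h)).2.1 rfl
        omega) (by omega)
    have hD : dn A ≤ dn (fun x y => A x y ∧ x ≠ v ∧ y ≠ v) + 2 * (W.erase v).card := by
      have e1 : (∑ x : V, ∑ y : V, if x = v ∧ y ∈ W.erase v then 1 else 0) = (W.erase v).card := by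
        rw [Finset.sum_eq_single v]
        · simp only [true_and]
          rw [← Finset.card_filter]
          congr 1
          ext t
          simp
        · intro b _ hb
          simp [hb]
        · simp
      have e2 : (∑ x : V, ∑ y : V, if y = v ∧ x ∈ W.erase v then 1 else 0) = (W.erase v).card := by
        rw [Finset.sum_comm]; exact e1
      rw [two_mul]
      nth_rewrite 1 [← e1]
      rw [← e2, dn, dn, ← Finset.sum_add_distrib, ← Finset.sum_add_distrib]
      apply Finset.sum_le_sum
      intro x _
      rw [← Finset.sum_add_distrib, ← Finset.sum_add_distrib]
      apply Finset.sum_le_sum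
      intro y _
      by_cases h : A x y
      · have hx := hW _ _ h
        have hy := hW _ _ (hs _ _ h)
        have hne : x ≠ y := by rintro rfl; exact hi _ h
        by_cases h1 : x = v
        · subst h1
          simp [h, hy, hne.symm]
        · by_cases h2 : y = v
          · subst h2
            simp [h, hx, hne]
          · simp [h, h1, h2]
      · simp [h]
    nlinarith

/-- from an involution to an edge set -/
lemma exists_edges (B : V → V → Prop) (g : V → V) (hg : IsM B g) (r : ℕ) (hc : 2 * r ≤ mvd g) :
    ∃ M : Set (Sym2 V), IsMatchingOn (⊤ : SimpleGraph V) M ∧ M.ncard = r ∧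
      ∀ e ∈ M, ∃ z, e = s(z, g z) ∧ g z ≠ z := by
  classical
  let S := Finset.univ.filter fun z => g z ≠ z
  have hS : mvd g = S.card := by rw [mvd, Finset.card_filter]
  let T := S.image fun z => s(z, g z)
  have hT : S.card ≤ 2 * T.card := by
    apply Finset.card_le_mul_card_image
    intro e he
    obtain ⟨z, hz, rfl⟩ := Finset.mem_image.1 he
    have : ({x ∈ S | s(x, g x) = s(z, g z)} : Finset V) ⊆ {z, g z} := by
      intro x hx
      have := (Finset.mem_filter.1 hx).2
      rw [Sym2.eq_iff] at this
      simp only [Finset.mem_insert, Finset.mem_singleton]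
      rcases this with h | h
      · exact Or.inl h.1
      · exact Or.inr h.1
    exact (Finset.card_le_card this).trans Finset.card_le_two
  obtain ⟨U, hUT, hU⟩ := Finset.exists_subset_card_eq (show r ≤ T.card by omega)
  have hmem : ∀ e ∈ (U : Set (Sym2 V)), ∃ z, e = s(z, g z) ∧ g z ≠ z := by
    intro e he
    obtain ⟨z, hz, rfl⟩ := Finset.mem_image.1 (hUT he)
    exact ⟨z, rfl, (Finset.mem_filter.1 hz).2⟩
  refine ⟨U, ⟨?_, ?_⟩, by rw [Set.ncard_coe_finset, hU], hmem⟩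
  · intro e he
    obtain ⟨z, rfl, hz⟩ := hmem e he
    simpa using hz.symm
  · intro e he e' he' hne v hv hv'
    obtain ⟨z, rfl, hz⟩ := hmem e he
    obtain ⟨z', rfl, hz'⟩ := hmem e' he'
    apply hne
    have h1 := hg.1 z
    have h2 := hg.1 z'
    rw [Sym2.mem_iff] at hv hv'
    rw [Sym2.eq_iff]
    rcases hv with rfl | rfl <;> rcases hv' with h | h
    · simp [h]
    · right; refine ⟨h, ?_⟩; rw [h, h2]
    · right; refine ⟨?_, h⟩; rw [← h, h1]
    · left; refine ⟨?_, h⟩; rw [← h1, h, h2]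

open Classical in
lemma dn_edges (E : Set (Sym2 V)) (hE : ∀ x, s(x, x) ∉ E) :
    dn (fun x y => s(x, y) ∈ E) = 2 * E.ncard := by
  have h := (SimpleGraph.fromEdgeSet E).sum_degrees_eq_twice_card_edges
  have h1 : E.ncard = (SimpleGraph.fromEdgeSet E).edgeFinset.card := by
    rw [← Set.ncard_coe_finset, SimpleGraph.coe_edgeFinset, SimpleGraph.edgeSet_fromEdgeSet]
    congr 1
    ext e
    induction e using Sym2.ind with
    | _ x y =>
      simp only [Set.mem_sdiff, Sym2.mem_diagSet, Sym2.mk_isDiag_iff]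
      refine ⟨fun h => ⟨h, ?_⟩, fun h => h.1⟩
      rintro rfl
      exact hE _ h
  rw [h1, dn]
  refine Eq.trans ?_ (h.trans (by congr!))
  apply Finset.sum_congr rfl
  intro x _
  rw [← SimpleGraph.card_neighborFinset_eq_degree, ← Finset.card_filter]
  congr 1
  ext y
  simp only [Finset.mem_filter, Finset.mem_univ, true_and, SimpleGraph.mem_neighborFinset,
    SimpleGraph.fromEdgeSet_adj]
  refine ⟨fun h => ⟨h, ?_⟩, fun h => h.1⟩
  rintro rfl
  exact hE _ h

/-- weight of a pair -/
lemma main_weight (r k : ℕ) (hr : 1 ≤ r) (hk : r < k) (hcard : Fintype.card V = r + k)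
    (w : V → V → ℕ) (hw : ∀ x y, w x y = w y x)
    (f : V → V) (hf : ∀ x, f (f x) = x) (cf : mvd f = 2 * (r - 1))
    (h1 : ∀ x y, f x = x → f y = y → x ≠ y → 2 ≤ w x y)
    (h2 : ∀ a s t, f a ≠ a → f s = s → f t = t → s ≠ t → w a s = 0 → 2 ≤ w (f a) t) :
    2 * ((k - r + 2) * (k + r - 1)) ≤ ∑ x, ∑ y, w x y := by
  classical
  let S := Finset.univ.filter fun x => f x = x
  let T := Finset.univ.filter fun x => f x ≠ x
  have hT : T.card = 2 * (r - 1) := by rw [← cf, mvd, Finset.card_filter]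
  have hST : S.card + T.card = r + k := by
    rw [← hcard, ← Finset.card_univ]
    exact Finset.card_filter_add_card_filter_not _
  have hS : S.card = k - r + 2 := by omega
  have mS : ∀ x, x ∈ S ↔ f x = x := by intro x; simp [S]
  have mT : ∀ x, x ∈ T ↔ f x ≠ x := by intro x; simp [T]
  have hsplit : ∀ F : V → ℕ, ∑ x, F x = ∑ x ∈ S, F x + ∑ x ∈ T, F x := by
    intro F
    exact (Finset.sum_filter_add_sum_filter_not _ _ _).symm
  -- inside S
  have hSS : S.card * (2 * (S.card - 1)) ≤ ∑ x ∈ S, ∑ y ∈ S, w x y := by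
    rw [← smul_eq_mul]
    apply Finset.card_nsmul_le_sum
    intro x hx
    rw [← Finset.card_erase_of_mem hx, mul_comm, ← smul_eq_mul]
    refine le_trans ?_ (Finset.sum_le_sum_of_subset (Finset.erase_subset x S))
    apply Finset.card_nsmul_le_sum
    intro y hy
    rw [Finset.mem_erase] at hy
    exact h1 x y ((mS x).1 hx) ((mS y).1 hy.2) hy.1.symm
  -- pairs
  have half : ∀ a, f a ≠ a → ∀ s ∈ S, w a s = 0 →
      2 * S.card ≤ ∑ t ∈ S, w a t + ∑ t ∈ S, w (f a) t := by
    intro a ha s hs h0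
    have hb : 2 * (S.card - 1) ≤ ∑ t ∈ S.erase s, w (f a) t := by
      rw [← Finset.card_erase_of_mem hs, mul_comm, ← smul_eq_mul]
      apply Finset.card_nsmul_le_sum
      intro t ht
      rw [Finset.mem_erase] at ht
      exact h2 a s t ha ((mS s).1 hs) ((mS t).1 ht.2) ht.1.symm h0
    have hb' := Finset.add_sum_erase S (fun t => w (f a) t) hs
    by_cases h3 : ∃ s' ∈ S, s' ≠ s ∧ w a s' = 0
    · obtain ⟨s', hs', hne, h0'⟩ := h3
      have := h2 a s' s ha ((mS s').1 hs') ((mS s).1 hs) hne h0'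
      omega
    · push Not at h3
      have ha1 : (S.card - 1) * 1 ≤ ∑ t ∈ S.erase s, w a t := by
        rw [← Finset.card_erase_of_mem hs, ← smul_eq_mul]
        apply Finset.card_nsmul_le_sum
        intro t ht
        rw [Finset.mem_erase] at ht
        exact Nat.one_le_iff_ne_zero.2 (h3 t ht.2 ht.1)
      have ha' := Finset.add_sum_erase S (fun t => w a t) hs
      omega
  have pair : ∀ a ∈ T, 2 * S.card ≤ ∑ t ∈ S, w a t + ∑ t ∈ S, w (f a) t := by
    intro a ha
    rw [mT] at ha
    by_cases c1 : ∃ s ∈ S, w a s = 0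
    · obtain ⟨s, hs, h0⟩ := c1
      exact half a ha s hs h0
    by_cases c2 : ∃ s ∈ S, w (f a) s = 0
    · obtain ⟨s, hs, h0⟩ := c2
      have := half (f a) (by rw [hf]; exact ha.symm) s hs h0
      rw [hf] at this
      omega
    push Not at c1 c2
    rw [← Finset.sum_add_distrib, mul_comm, ← smul_eq_mul]
    apply Finset.card_nsmul_le_sum
    intro t ht
    have := c1 t ht
    have := c2 t ht
    omega
  have hTS : T.card * (2 * S.card) ≤ 2 * ∑ x ∈ T, ∑ y ∈ S, w x y := by
    have e : ∑ x ∈ T, ∑ y ∈ S, w (f x) y = ∑ x ∈ T, ∑ y ∈ S, w x y := by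
      apply Finset.sum_nbij' f f
      · intro a ha; rw [mT] at *; rw [hf]; exact ha.symm
      · intro a ha; rw [mT] at *; rw [hf]; exact ha.symm
      · intro a _; exact hf a
      · intro a _; exact hf a
      · intro a _; rfl
    rw [two_mul (∑ x ∈ T, ∑ y ∈ S, w x y)]
    nth_rewrite 2 [← e]
    rw [← Finset.sum_add_distrib, ← smul_eq_mul]
    exact Finset.card_nsmul_le_sum _ _ _ pair
  have hTS' : ∑ x ∈ S, ∑ y ∈ T, w x y = ∑ x ∈ T, ∑ y ∈ S, w x y := by
    rw [Finset.sum_comm]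
    exact Finset.sum_congr rfl fun x _ => Finset.sum_congr rfl fun y _ => hw _ _
  have tot : ∑ x ∈ S, ∑ y ∈ S, w x y + 2 * ∑ x ∈ T, ∑ y ∈ S, w x y ≤ ∑ x, ∑ y, w x y := by
    rw [hsplit]
    simp only [hsplit (fun y => w _ y)]
    rw [Finset.sum_add_distrib, Finset.sum_add_distrib, hTS']
    omega
  rw [hS] at hSS hTS
  rw [hT] at hTS
  obtain ⟨d, rfl⟩ := Nat.exists_eq_add_of_lt hk
  obtain ⟨q, rfl⟩ := Nat.exists_eq_add_of_le hr
  have g1 : 1 + q + d + 1 - (1 + q) + 2 = d + 3 := by omega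
  have g2 : 1 + q + d + 1 + (1 + q) - 1 = 2 * q + d + 2 := by omega
  have g3 : d + 3 - 1 = d + 2 := by omega
  have g4 : 1 + q - 1 = q := by omega
  rw [g1, g3] at hSS
  rw [g1, g4] at hTS
  rw [g1, g2]
  nlinarith
end

theorem stmt_13 (r k : ℕ) (hr : 1 ≤ r) (hk : r < k) (hk2 : 3 * r < 2 * k + 7)
    (E0 E1 E2 : Set (Sym2 (Fin (r + k))))
    (hpart : (⊤ : SimpleGraph (Fin (r + k))).edgeSet = E0 ∪ E1 ∪ E2)
    (h01 : Disjoint E0 E1) (h02 : Disjoint E0 E2) (h12 : Disjoint E1 E2)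
    (hE : 2 * (E1.ncard + 2 * E2.ncard) <
      min ((k + 1) * (k + 2)) (2 * ((k - r + 2) * (k + r - 1)))) :
    ∃ M : Set (Sym2 (Fin (r + k))), IsMatchingOn (⊤ : SimpleGraph (Fin (r + k))) M ∧
      M.ncard = r ∧ M ∩ E2 = ∅ ∧ (M ∩ E1).ncard ≤ 1 := by
  classical
  by_contra hno
  have hdiag : ∀ x : Fin (r + k), s(x, x) ∉ E0 ∪ E1 ∪ E2 := by
    intro x
    rw [← hpart]
    simp
  have hall : ∀ x y : Fin (r + k), x ≠ y → s(x, y) ∈ E0 ∪ E1 ∪ E2 := by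
    intro x y h
    rw [← hpart]
    simpa using h
  have d0 : ∀ x, s(x, x) ∉ E0 := fun x h => hdiag x (Or.inl (Or.inl h))
  have d1 : ∀ x, s(x, x) ∉ E1 := fun x h => hdiag x (Or.inl (Or.inr h))
  have d2 : ∀ x, s(x, x) ∉ E2 := fun x h => hdiag x (Or.inr h)
  have n01 : ∀ e, e ∈ E0 → e ∉ E1 := fun e h h' => Set.disjoint_left.1 h01 h h'
  have n02 : ∀ e, e ∈ E0 → e ∉ E2 := fun e h h' => Set.disjoint_left.1 h02 h h'
  have n12 : ∀ e, e ∈ E1 → e ∉ E2 := fun e h h' => Set.disjoint_left.1 h12 h h'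
  let A : Fin (r + k) → Fin (r + k) → Prop := fun x y => s(x, y) ∈ E0
  have hs : ∀ x y, A x y → A y x := by
    intro x y h
    change s(y, x) ∈ E0
    rw [Sym2.eq_swap]; exact h
  have hi : ∀ x, ¬ A x x := d0
  let w : Fin (r + k) → Fin (r + k) → ℕ := fun x y =>
    (if s(x, y) ∈ E1 then 1 else 0) + 2 * (if s(x, y) ∈ E2 then 1 else 0)
  have hwsum : ∑ x, ∑ y, w x y = 2 * (E1.ncard + 2 * E2.ncard) := by
    have e1 := dn_edges E1 d1
    have e2 := dn_edges E2 d2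
    rw [dn] at e1 e2
    simp only [w, Finset.sum_add_distrib, ← Finset.mul_sum]
    rw [mul_add, ← e1, mul_left_comm, ← e2]
  -- a good involution is impossible
  have good : ∀ (e : Sym2 (Fin (r + k))) (g : Fin (r + k) → Fin (r + k)), e ∉ E2 →
      IsM (fun x y => s(x, y) ∈ E0 ∨ s(x, y) = e) g → 2 * r ≤ mvd g → False := by
    intro e g he hg hc
    obtain ⟨M, hM, hMr, hMe⟩ := exists_edges _ g hg r hc
    have hin : ∀ e' ∈ M, e' ∈ E0 ∨ e' = e := by
      intro e' he'
      obtain ⟨z, rfl, hz⟩ := hMe e' he'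
      exact hg.2 z hz
    apply hno
    refine ⟨M, hM, hMr, ?_, ?_⟩
    · rw [Set.eq_empty_iff_forall_notMem]
      rintro e' ⟨h1, h2⟩
      rcases hin e' h1 with h | h
      · exact n02 _ h h2
      · exact he (h ▸ h2)
    · have : M ∩ E1 ⊆ {e} := by
        rintro e' ⟨h1, h2⟩
        rcases hin e' h1 with h | h
        · exact absurd h2 (n01 _ h)
        · exact h
      simpa using Set.ncard_le_ncard this (Set.finite_singleton e)
  have addgood : ∀ f, IsM A f → mvd f = 2 * (r - 1) → ∀ x y, f x = x → f y = y → x ≠ y →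
      2 ≤ w x y := by
    intro f hf cf x y hx hy hxy
    by_cases h : s(x, y) ∈ E2
    · simp [w, h]
    · exfalso
      obtain ⟨a1, a2⟩ := isM_add f hf x y hx hy hxy
        (fun a b => s(a, b) ∈ E0 ∨ s(a, b) = s(x, y)) (fun a b h => Or.inl h)
        (Or.inr rfl) (Or.inr Sym2.eq_swap)
      exact good _ _ h a1 (by omega)
  by_cases hex : ∃ f, IsM A f ∧ mvd f = 2 * (r - 1)
  · obtain ⟨f, hf, cf⟩ := hex
    have := main_weight r k hr hk (by simp) w (fun x y => by simp only [w]; rw [Sym2.eq_swap])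
      f hf.1 cf (addgood f hf cf) (by
        intro a s t ha hs' ht hst h0
        have has : a ≠ s := by rintro rfl; exact ha hs'
        have hat : a ≠ t := by rintro rfl; exact ha ht
        have hbs : f a ≠ s := by
          intro h; apply has; rw [← hf.1 a, h, hs']
        have hbt : f a ≠ t := by
          intro h; apply hat; rw [← hf.1 a, h, ht]
        have h0' : A a s := by
          rcases hall a s has with (h | h) | h
          · exact h
          · simp [w, h] at h0
          · simp [w, h] at h0
        obtain ⟨a1, a2⟩ := isM_rem f hf a (f a) rfl ha.symm
        obtain ⟨b1, b2⟩ := isM_add _ a1 a s (by simp [hf.1])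
          (by simp [Equiv.swap_apply_of_ne_of_ne has.symm hbs.symm, hs']) has A
          (fun _ _ h => h) h0' (hs _ _ h0')
        refine addgood _ b1 (by omega) (f a) t ?_ ?_ hbt
        · simp [Equiv.swap_apply_of_ne_of_ne ha hbs]
        · simp [Equiv.swap_apply_of_ne_of_ne hat.symm hst.symm,
            Equiv.swap_apply_of_ne_of_ne hat.symm hbt.symm, ht])
    rw [hwsum] at this
    have := lt_min_iff.1 hE
    omega
  · -- all matchings are small
    have hsmall : ∀ c, ∀ f, IsM A f → mvd f = 2 * (r - 1) + c → False := by
      intro c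
      induction c using Nat.strong_induction_on with
      | _ c ih =>
        intro f hf hc
        rcases Nat.eq_zero_or_pos c with rfl | hpos
        · exact hex ⟨f, hf, hc⟩
        obtain ⟨c', hc'⟩ := mvd_even f hf
        have hmv : ∃ a, f a ≠ a := by
          by_contra hcon
          push Not at hcon
          have : mvd f = 0 := by simp [mvd, hcon]
          omega
        obtain ⟨a, ha⟩ := hmv
        obtain ⟨a1, a2⟩ := isM_rem f hf a (f a) rfl ha.symm
        exact ih (c - 2) (by omega) _ a1 (by omega)
    have hr2 : 2 ≤ r := by
      by_contra hlt
      have : r = 1 := by omega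
      apply hex
      refine ⟨id, (isM_id A).1, ?_⟩
      rw [(isM_id A).2, this]
    obtain ⟨m, rfl⟩ := Nat.exists_eq_add_of_le hr2
    have hmax : ∀ f, IsM A f → mvd f ≤ 2 * m := by
      intro f hf
      by_contra hlt
      obtain ⟨c', hc'⟩ := mvd_even f hf
      exact hsmall (mvd f - 2 * (2 + m - 1)) f hf (by omega)
    have hEG := eg m A hs hi Finset.univ (fun _ _ _ => Finset.mem_univ _) hmax (by
      simp only [Finset.card_univ, Fintype.card_fin]; omega)
    simp only [Finset.card_univ, Fintype.card_fin] at hEG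
    have htot : (2 + m + k) * (2 + m + k) ≤ dn A + (2 + m + k) + ∑ x, ∑ y, w x y := by
      have c1 : ∑ x : Fin (2 + m + k), ∑ y : Fin (2 + m + k), 1 = (2 + m + k) * (2 + m + k) := by
        simp
      have c2 : ∑ x : Fin (2 + m + k), ∑ y : Fin (2 + m + k), (if x = y then 1 else 0)
          = 2 + m + k := by simp
      rw [← c1]
      refine le_trans ?_ (Nat.add_le_add_right (Nat.add_le_add_left (le_of_eq c2) _) _)
      rw [dn, ← Finset.sum_add_distrib, ← Finset.sum_add_distrib]
      apply Finset.sum_le_sum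
      intro x _
      rw [← Finset.sum_add_distrib, ← Finset.sum_add_distrib]
      apply Finset.sum_le_sum
      intro y _
      by_cases hxy : x = y
      · simp [hxy]; omega
      · rcases hall x y hxy with (h | h) | h
        · simp [A, h]; omega
        · simp [w, h]; omega
        · simp [w, h]; omega
    rw [hwsum] at htot
    have := (lt_min_iff.1 hE).1
    nlinarith
end

section
/- Let k and r be positive integers with r ≥ 2, k ≤ r, r+k odd, and r+k ≥ 13. Let G be a graph with chromatic number at most r, P ⊆ V(G), and d : P → {1,...,r+k} a proper coloring of G[P]. If |D_G(P,2)| < 3(r+k−1), then d can be extended to a proper coloring of G using at most (3r+k+1)/2 colors. -/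
/-- The set of unordered pairs of distinct vertices of `P` at distance at most `m` in `G`. -/
def pairsAtMost {V : Type*} (G : SimpleGraph V) (P : Set V) (m : ℕ) : Set (Sym2 V) :=
  {e | ∃ x y, e = s(x, y) ∧ x ∈ P ∧ y ∈ P ∧ x ≠ y ∧ ∃ p : G.Walk x y, p.length ≤ m}

set_option linter.unusedSectionVars false

namespace PrecolorExt

open Finset

variable {C : Type*}

def verts (l : List (C × C)) : List C := l.flatMap (fun e => [e.1, e.2])

def wt (w : C → C → ℕ) (l : List (C × C)) : ℕ := (l.map (fun e => w e.1 e.2)).sum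

def LW (w : C → C → ℕ) (A B : List C) : ℕ := (A.map (fun a => (B.map (fun b => w a b)).sum)).sum

@[simp] lemma verts_nil : verts ([] : List (C × C)) = [] := rfl
@[simp] lemma verts_cons (e : C × C) (l : List (C × C)) :
    verts (e :: l) = e.1 :: e.2 :: verts l := by simp [verts]
@[simp] lemma wt_nil (w : C → C → ℕ) : wt w [] = 0 := rfl
@[simp] lemma wt_cons (w : C → C → ℕ) (e : C × C) (l : List (C × C)) :
    wt w (e :: l) = w e.1 e.2 + wt w l := by simp [wt]
lemma verts_length (l : List (C × C)) : (verts l).length = 2 * l.length := by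
  induction l with
  | nil => simp
  | cons e l ih => simp [ih]; omega
lemma verts_perm {l l' : List (C × C)} (h : l.Perm l') : (verts l).Perm (verts l') :=
  List.Perm.flatMap_right _ h
lemma wt_perm (w : C → C → ℕ) {l l' : List (C × C)} (h : l.Perm l') : wt w l = wt w l' :=
  (h.map _).sum_eq

@[simp] lemma LW_nil_left (w : C → C → ℕ) (B : List C) : LW w [] B = 0 := rfl
@[simp] lemma LW_cons_left (w : C → C → ℕ) (a : C) (A B : List C) :
    LW w (a :: A) B = (B.map (fun b => w a b)).sum + LW w A B := by simp [LW]
lemma LW_append_left (w : C → C → ℕ) (A A' B : List C) :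
    LW w (A ++ A') B = LW w A B + LW w A' B := by simp [LW]
lemma LW_append_right (w : C → C → ℕ) (A B B' : List C) :
    LW w A (B ++ B') = LW w A B + LW w A B' := by
  induction A with
  | nil => simp
  | cons a A ih => simp [ih]; omega
lemma LW_cons_right (w : C → C → ℕ) (A B : List C) (b : C) :
    LW w A (b :: B) = (A.map (fun a => w a b)).sum + LW w A B := by
  induction A with
  | nil => simp
  | cons a A ih => simp [ih]; omega
lemma LW_comm (w : C → C → ℕ) (hs : ∀ a b, w a b = w b a) (A B : List C) :
    LW w A B = LW w B A := by
  induction A with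
  | nil => induction B with
    | nil => rfl
    | cons b B ih => simpa using ih
  | cons a A ih => rw [LW_cons_left, LW_cons_right, ih]; simp [hs a]

lemma LW_le [Fintype C] [DecidableEq C] (w : C → C → ℕ) (L : List C) (hL : L.Nodup) :
    LW w L L ≤ ∑ a, ∑ b, w a b := by
  have h1 : ∀ f : C → ℕ, (L.map f).sum ≤ ∑ b, f b := by
    intro f
    rw [← List.sum_toFinset f hL]
    exact Finset.sum_le_sum_of_subset (Finset.subset_univ _)
  calc LW w L L ≤ (L.map (fun a => ∑ b, w a b)).sum :=
        List.sum_le_sum (fun a _ => h1 _)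
    _ ≤ _ := h1 _

lemma LW_block (w : C → C → ℕ) (hs : ∀ a b, w a b = w b a) (A B : List C) :
    LW w (A ++ B) (A ++ B) = LW w A A + 2 * LW w A B + LW w B B := by
  rw [LW_append_left, LW_append_right, LW_append_right, LW_comm w hs B A]; ring

/-- cross weights add over matching edges -/
lemma LW_verts_ge (w : C → C → ℕ) (A : List C) (k : ℕ) (l : List (C × C))
    (h : ∀ e ∈ l, k ≤ (A.map (fun a => w a e.1)).sum + (A.map (fun a => w a e.2)).sum) :
    k * l.length ≤ LW w A (verts l) := by
  induction l with
  | nil => simp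
  | cons e l ih =>
    have h1 := h e (by simp)
    have h2 := ih (fun e' he' => h e' (by simp [he']))
    rw [verts_cons, LW_cons_right, LW_cons_right, List.length_cons]
    linarith

def IsM (m : ℕ) (l : List (C × C)) : Prop := l.length = m ∧ (verts l).Nodup

lemma IsM.perm {m : ℕ} {l l' : List (C × C)} (h : IsM m l) (hp : l.Perm l') : IsM m l' :=
  ⟨hp.length_eq ▸ h.1, (verts_perm hp).nodup_iff.1 h.2⟩

variable [Fintype C] [DecidableEq C]

lemma lemma1 (m : ℕ) (hC : Fintype.card C = 2 * m + 1) (w : C → C → ℕ)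
    (hs : ∀ a b, w a b = w b a)
    (hT : ∑ a, ∑ b, w a b ≤ 12 * m - 2)
    (hmin : ∀ l, IsM m l → 2 ≤ wt w l) (e : C × C) (l : List (C × C))
    (hl : IsM m (e :: l)) : 1 ≤ wt w l := by
  by_contra h0
  have h0 : wt w l = 0 := by omega
  obtain ⟨x, y⟩ := e
  have hlen := hl.1
  have hnd := hl.2
  obtain ⟨z, hz⟩ : ∃ z, z ∉ verts ((x, y) :: l) := by
    by_contra hcon
    push Not at hcon
    have h1 := List.toFinset_card_le (verts ((x, y) :: l))
    rw [Finset.eq_univ_of_forall (fun z => List.mem_toFinset.2 (hcon z)), Finset.card_univ, hC,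
      verts_length, hlen] at h1
    omega
  simp only [verts_cons, List.nodup_cons, List.mem_cons, not_or, List.length_cons] at hnd hz hlen
  have hxy := hmin ((x, y) :: l) hl
  have hxz := hmin ((x, z) :: l) ⟨hl.1, by simp; grind⟩
  have hyz := hmin ((y, z) :: l) ⟨hl.1, by simp; grind⟩
  simp only [wt_cons, h0] at hxy hxz hyz
  have hcr : 6 * l.length ≤ LW w [x, y, z] (verts l) := by
    apply LW_verts_ge
    intro e he
    obtain ⟨p, q⟩ := e
    have hp := List.perm_cons_erase he
    set l' := l.erase (p, q)
    have hv := verts_perm hp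
    have hw := wt_perm w hp
    have hlen' := hp.length_eq
    simp only [verts_cons, wt_cons, List.length_cons] at hv hw hlen'
    have hnd' := hv.nodup_iff.1 hnd.2.2
    simp only [List.nodup_cons, List.mem_cons, not_or] at hnd'
    have hmem : ∀ a, a ∈ verts l ↔ a = p ∨ a = q ∨ a ∈ verts l' := by
      intro a; rw [hv.mem_iff]; simp
    simp only [hmem, not_or] at hnd hz
    have a1 := hmin ((x, p) :: (y, q) :: l') ⟨by simp; omega, by simp; grind⟩
    have a2 := hmin ((y, p) :: (z, q) :: l') ⟨by simp; omega, by simp; grind⟩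
    have a3 := hmin ((z, p) :: (x, q) :: l') ⟨by simp; omega, by simp; grind⟩
    simp only [wt_cons] at a1 a2 a3
    simp
    omega
  have htot := LW_le w ([x, y, z] ++ verts l) (by simp; grind)
  rw [LW_block w hs] at htot
  have : 12 ≤ LW w [x, y, z] [x, y, z] := by
    simp
    rw [hs y x, hs z x, hs z y]
    omega
  omega

def Z (w : C → C → ℕ) (U : List C) (p : C) : Finset C := U.toFinset.filter (fun x => w x p = 0)

lemma sum_add_Z (w : C → C → ℕ) (U : List C) (hU : U.Nodup) (p : C) :
    U.length ≤ (U.map (fun a => w a p)).sum + (Z w U p).card := by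
  rw [← List.sum_toFinset _ hU, ← List.toFinset_card_of_nodup hU, Z, Finset.card_filter,
    ← Finset.sum_add_distrib, Finset.card_eq_sum_ones]
  apply Finset.sum_le_sum
  intro i _
  split_ifs <;> omega

def Rich (w : C → C → ℕ) (U : List C) (e : C × C) : Prop :=
  2 ≤ (Z w U e.1).card ∨ 2 ≤ (Z w U e.2).card

open Classical in
lemma rich_ge (w : C → C → ℕ) (hs : ∀ a b, w a b = w b a) (U : List C) (l : List (C × C))
    (h : l.Pairwise (fun e e' => Rich w U e → Rich w U e' →
      1 ≤ w e.1 e'.1 + w e.1 e'.2 + w e.2 e'.1 + w e.2 e'.2)) :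
    (l.countP (fun e => decide (Rich w U e))) * (l.countP (fun e => decide (Rich w U e)) - 1 : ℤ)
     ≤ LW w (verts l) (verts l) := by
  induction l with
  | nil => simp
  | cons e l ih =>
    rw [List.pairwise_cons] at h
    have ih := ih h.2
    have hblk := LW_block w hs [e.1, e.2] (verts l)
    have hv : verts (e :: l) = [e.1, e.2] ++ verts l := by simp
    rw [hv, hblk]
    by_cases he : Rich w U e
    · have h1 : ∀ l' : List (C × C), (∀ e' ∈ l', Rich w U e' →
        1 ≤ w e.1 e'.1 + w e.1 e'.2 + w e.2 e'.1 + w e.2 e'.2) →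
        l'.countP (fun e => decide (Rich w U e)) ≤ LW w [e.1, e.2] (verts l') := by
        intro l' hl'
        induction l' with
        | nil => simp
        | cons e' l' ih' =>
          have i1 := ih' (fun a ha => hl' a (by simp [ha]))
          have i2 := hl' e' (by simp)
          rw [verts_cons, LW_cons_right, LW_cons_right, List.countP_cons]
          simp only [List.map_cons, List.map_nil, List.sum_cons, List.sum_nil, decide_eq_true_eq]
          split_ifs with hr
          · have := i2 hr; omega
          · omega
      have h2 := h1 l (fun e' he' hr => h.1 e' he' he hr)
      rw [List.countP_cons]
      simp only [he, decide_true, if_true]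
      push_cast
      have h2' : ((l.countP (fun e => decide (Rich w U e)) : ℕ) : ℤ) ≤ (LW w [e.1, e.2] (verts l) : ℤ) := by
        exact_mod_cast h2
      nlinarith
    · rw [List.countP_cons]
      simp only [he, decide_false, Bool.false_eq_true, if_false, add_zero]
      push_cast
      have a1 := Int.natCast_nonneg (LW w [e.1, e.2] [e.1, e.2])
      have a2 := Int.natCast_nonneg (LW w [e.1, e.2] (verts l))
      linarith

lemma pick (U : Finset C) (hU : U.card = 5) (a b : C) :
    ∃ c ∈ U, ∃ d ∈ U, c ≠ d ∧ c ≠ a ∧ c ≠ b ∧ d ≠ a ∧ d ≠ b := by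
  have h1 : 1 < (U \ {a, b}).card := by
    have := Finset.le_card_sdiff {a, b} U
    have h2 : ({a, b} : Finset C).card ≤ 2 := Finset.card_le_two
    omega
  obtain ⟨c, hc, d, hd, hcd⟩ := Finset.one_lt_card.1 h1
  simp at hc hd
  exact ⟨c, hc.1, d, hd.1, hcd, by tauto, by tauto, by tauto, by tauto⟩

lemma pick2 (A B : Finset C) (hA : 2 ≤ A.card) (hB : 2 ≤ B.card) :
    ∃ a ∈ A, ∃ b ∈ B, a ≠ b := by
  obtain ⟨a, ha⟩ := Finset.card_pos.1 (by omega : 0 < A.card)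
  obtain ⟨b, hb, hab⟩ := Finset.exists_mem_ne (by omega : 1 < B.card) a
  exact ⟨a, ha, b, hb, hab.symm⟩

lemma arith (m a b : ℕ) (hm : 6 ≤ m) (h : a + b + 2 = m) (T : ℕ)
    (hT : (20 : ℤ) + 2 * (5 * a + 8 * b) + a * (a - 1) ≤ T) : 12 * m ≤ T := by
  subst h
  zify
  zify at hm
  have hb : (0:ℤ) ≤ b := by positivity
  have h34 : (0 : ℤ) ≤ (a - 3) * (a - 4) := by
    rcases le_or_gt (a : ℤ) 3 with h | h
    · nlinarith
    · have : (4 : ℤ) ≤ a := by omega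
      nlinarith
  nlinarith

lemma lemma2 (m : ℕ) (hm : 6 ≤ m) (w : C → C → ℕ)
    (hs : ∀ a b, w a b = w b a)
    (hmin : ∀ (e : C × C) (l : List (C × C)), IsM m (e :: l) → 1 ≤ wt w l)
    (U : List C) (hU : U.length = 5) (l : List (C × C)) (hl : l.length + 2 = m)
    (hnd : (U ++ verts l).Nodup) (h0 : wt w l = 0) :
    12 * m ≤ ∑ a, ∑ b, w a b := by
  classical
  have hnd0 := hnd
  rw [List.nodup_append] at hnd
  obtain ⟨hUn, hln, hdis⟩ := hnd
  have hUc : U.toFinset.card = 5 := by rw [List.toFinset_card_of_nodup hUn, hU]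
  have hdis' : ∀ a ∈ U, a ∉ verts l := fun a ha hb => hdis a ha a hb rfl
  have hclique : ∀ a ∈ U, ∀ b ∈ U, a ≠ b → 1 ≤ w a b := by
    intro a ha b hb hab
    obtain ⟨c, hc, d, hd, h1⟩ := pick U.toFinset hUc a b
    simp only [List.mem_toFinset] at hc hd
    have := hmin (c, d) ((a, b) :: l) ⟨by simp; omega, by simp; grind⟩
    simpa [h0] using this
  have hUU : 20 ≤ LW w U U := by
    have h1 : LW w U U = ∑ a ∈ U.toFinset, ∑ b ∈ U.toFinset, w a b := by
      unfold LW
      simp_rw [← List.sum_toFinset _ hUn]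
    rw [h1, ← Finset.sum_product']
    calc 20 = U.toFinset.offDiag.card := by rw [Finset.offDiag_card, hUc]
      _ = ∑ x ∈ U.toFinset.offDiag, 1 := by simp
      _ ≤ ∑ x ∈ U.toFinset.offDiag, w x.1 x.2 := by
        apply Finset.sum_le_sum
        intro x hx
        simp at hx
        exact hclique _ hx.1 _ hx.2.1 hx.2.2
      _ ≤ _ := by
        apply Finset.sum_le_sum_of_subset
        intro x hx
        simp at hx
        simp [hx.1, hx.2.1]
  have hZ : ∀ a p, a ∈ Z w U p ↔ a ∈ U ∧ w a p = 0 := by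
    intro a p; simp [Z]
  have hcross : ∀ e ∈ l, (5 ≤ (U.map (fun a => w a e.1)).sum + (U.map (fun a => w a e.2)).sum) ∧
      (¬ Rich w U e → 8 ≤ (U.map (fun a => w a e.1)).sum + (U.map (fun a => w a e.2)).sum) := by
    rintro ⟨p, q⟩ he
    have hp := List.perm_cons_erase he
    set l' := l.erase (p, q)
    have hv := verts_perm hp
    have hw := wt_perm w hp
    have hlen' := hp.length_eq
    simp only [verts_cons, wt_cons, List.length_cons] at hv hw hlen'
    have hnd' := hv.nodup_iff.1 hln
    simp only [List.nodup_cons, List.mem_cons, not_or] at hnd'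
    have hmem : ∀ a, a ∈ verts l ↔ a = p ∨ a = q ∨ a ∈ verts l' := by
      intro a; rw [hv.mem_iff]; simp
    simp only [hmem, not_or] at hdis'
    have key : ∀ a ∈ Z w U p, ∀ b ∈ Z w U q, a = b := by
      intro a ha b hb
      by_contra hab
      rw [hZ] at ha hb
      obtain ⟨c, hc, d, hd, h1⟩ := pick U.toFinset hUc a b
      simp only [List.mem_toFinset] at hc hd
      have b1 := hdis' a ha.1
      have b2 := hdis' b hb.1
      have b3 := hdis' c hc
      have b4 := hdis' d hd
      have := hmin (c, d) ((a, p) :: (b, q) :: l') ⟨by simp; omega, by simp; grind⟩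
      simp only [wt_cons] at this
      omega
    have s1 := sum_add_Z w U hUn p
    have s2 := sum_add_Z w U hUn q
    have k1 : 2 ≤ (Z w U p).card → (Z w U q).card = 0 := by
      intro h2
      rw [Finset.card_eq_zero, Finset.eq_empty_iff_forall_notMem]
      intro b hb
      obtain ⟨a, ha, hab⟩ := Finset.exists_mem_ne (by omega : 1 < (Z w U p).card) b
      exact hab (key a ha b hb)
    have k2 : 2 ≤ (Z w U q).card → (Z w U p).card = 0 := by
      intro h2
      rw [Finset.card_eq_zero, Finset.eq_empty_iff_forall_notMem]
      intro b hb
      obtain ⟨a, ha, hab⟩ := Finset.exists_mem_ne (by omega : 1 < (Z w U q).card) b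
      exact hab (key b hb a ha).symm
    have k3 : (Z w U p).card ≤ 5 := hUc ▸ Finset.card_filter_le _ _
    have k4 : (Z w U q).card ≤ 5 := hUc ▸ Finset.card_filter_le _ _
    simp only [Rich]
    omega
  have hcount : ∀ l' : List (C × C), (∀ e ∈ l',
      (5 ≤ (U.map (fun a => w a e.1)).sum + (U.map (fun a => w a e.2)).sum) ∧
      (¬ Rich w U e → 8 ≤ (U.map (fun a => w a e.1)).sum + (U.map (fun a => w a e.2)).sum)) →
      8 * l'.length ≤ LW w U (verts l') + 3 * l'.countP (fun e => decide (Rich w U e)) := by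
    intro l' hl'
    induction l' with
    | nil => simp
    | cons e l' ih =>
      have i1 := ih (fun a ha => hl' a (by simp [ha]))
      have i2 := hl' e (by simp)
      rw [verts_cons, LW_cons_right, LW_cons_right, List.countP_cons, List.length_cons]
      simp only [decide_eq_true_eq]
      split_ifs with hr
      · have := i2.1; omega
      · have := i2.2 hr; omega
  have hpw : l.Pairwise (fun e e' => Rich w U e → Rich w U e' →
      1 ≤ w e.1 e'.1 + w e.1 e'.2 + w e.2 e'.1 + w e.2 e'.2) := by
    rw [List.pairwise_iff_forall_sublist]
    rintro ⟨p, q⟩ ⟨p', q'⟩ hsub hr hr'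
    obtain ⟨l', hp⟩ := hsub.exists_perm_append
    have hv := verts_perm hp
    have hw := wt_perm w hp
    have hlen' := hp.length_eq
    simp only [verts_cons, wt_cons, List.length_cons, List.cons_append, List.nil_append]
      at hv hw hlen'
    have hnd' := hv.nodup_iff.1 hln
    have hU' : ∀ a ∈ U, a ∉ p :: q :: p' :: q' :: verts l' := by
      intro a ha; rw [← hv.mem_iff]; exact hdis' a ha
    have aug : ∀ p q p' q' : C, (p :: q :: p' :: q' :: verts l').Nodup →
        (∀ a ∈ U, a ∉ p :: q :: p' :: q' :: verts l') →
        2 ≤ (Z w U p).card → 2 ≤ (Z w U p').card → 1 ≤ w q q' := by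
      intro p q p' q' hn hu hZp hZp'
      obtain ⟨a, ha, b, hb, hab⟩ := pick2 _ _ hZp hZp'
      rw [hZ] at ha hb
      obtain ⟨c, hc, d, hd, h1⟩ := pick U.toFinset hUc a b
      simp only [List.mem_toFinset] at hc hd
      have b1 := hu a ha.1
      have b2 := hu b hb.1
      have b3 := hu c hc
      have b4 := hu d hd
      simp only [List.nodup_cons, List.mem_cons, not_or] at hn b1 b2 b3 b4
      have := hmin (c, d) ((a, p) :: (b, p') :: (q, q') :: l') ⟨by simp; omega, by simp; grind⟩
      simp only [wt_cons] at this
      omega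
    have hnd1 : (q :: p :: p' :: q' :: verts l').Nodup := by simp at hnd' ⊢; grind
    have hnd2 : (p :: q :: q' :: p' :: verts l').Nodup := by simp at hnd' ⊢; grind
    have hnd3 : (q :: p :: q' :: p' :: verts l').Nodup := by simp at hnd' ⊢; grind
    have hU1 : ∀ a ∈ U, a ∉ q :: p :: p' :: q' :: verts l' := by simp at hU' ⊢; grind
    have hU2 : ∀ a ∈ U, a ∉ p :: q :: q' :: p' :: verts l' := by simp at hU' ⊢; grind
    have hU3 : ∀ a ∈ U, a ∉ q :: p :: q' :: p' :: verts l' := by simp at hU' ⊢; grind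
    rcases hr with hr | hr <;> rcases hr' with hr' | hr'
    · have := aug p q p' q' hnd' hU' hr hr'; simp only; omega
    · have := aug p q q' p' hnd2 hU2 hr hr'; simp only; omega
    · have := aug q p p' q' hnd1 hU1 hr hr'; simp only; omega
    · have := aug q p q' p' hnd3 hU3 hr hr'; simp only; omega
  have hrich := rich_ge w hs U l hpw
  have hc := hcount l hcross
  have htot := LW_le w (U ++ verts l) hnd0
  rw [LW_block w hs] at htot
  have hle : l.countP (fun e => decide (Rich w U e)) ≤ l.length := List.countP_le_length
  obtain ⟨b, hb⟩ := Nat.exists_eq_add_of_le hle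
  apply arith m (l.countP (fun e => decide (Rich w U e))) b hm (by omega) _ _
  · zify at hc hUU
    have htot : (LW w U U : ℤ) + 2 * LW w U (verts l) + LW w (verts l) (verts l)
      ≤ (∑ a, ∑ b, w a b : ℕ) := by exact_mod_cast htot
    have : (l.length : ℤ) = l.countP (fun e => decide (Rich w U e)) + b := by exact_mod_cast hb
    linarith

/-- rotational near-perfect matchings -/
def rot (m : ℕ) (s : ZMod (2 * m + 1)) : List (ZMod (2 * m + 1) × ZMod (2 * m + 1)) :=
  (List.range m).map (fun i => (s + ((i + 1 : ℕ) : ZMod (2 * m + 1)), s - ((i + 1 : ℕ) : ZMod (2 * m + 1))))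

lemma cast_inj (m i j : ℕ) (hi : i < 2 * m + 1) (hj : j < 2 * m + 1)
    (h : (i : ZMod (2 * m + 1)) = j) : i = j := by
  have := congrArg ZMod.val h
  rwa [ZMod.val_natCast_of_lt hi, ZMod.val_natCast_of_lt hj] at this

lemma rot_nodup (m : ℕ) (s : ZMod (2 * m + 1)) : (verts (rot m s)).Nodup := by
  have hne : ∀ i j : ℕ, i < m → j < m →
      ((i + 1 : ℕ) : ZMod (2 * m + 1)) ≠ - ((j + 1 : ℕ) : ZMod (2 * m + 1)) := by
    intro i j hi hj h
    have h1 : (((i + 1) + (j + 1) : ℕ) : ZMod (2 * m + 1)) = (0 : ℕ) := by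
      rw [Nat.cast_add, h]; simp
    have := cast_inj m _ _ (by omega) (by omega) h1
    omega
  have hne2 : ∀ i j : ℕ, i < m → j < m →
      ((i + 1 : ℕ) : ZMod (2 * m + 1)) = ((j + 1 : ℕ) : ZMod (2 * m + 1)) → i = j := by
    intro i j hi hj h
    have := cast_inj m _ _ (by omega) (by omega) h
    omega
  unfold verts rot
  rw [List.flatMap_map, List.nodup_flatMap]
  constructor
  · intro i hi
    rw [List.mem_range] at hi
    have := hne i i hi hi
    simp only [List.nodup_cons, List.mem_singleton, List.not_mem_nil, not_false_eq_true,
      List.nodup_nil, and_true]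
    intro h
    apply this
    rw [sub_eq_add_neg] at h
    exact add_left_cancel h
  · refine List.Pairwise.imp_of_mem ?_ List.nodup_range
    intro i j hi hj hij
    rw [List.mem_range] at hi hj
    simp only [Function.onFun, List.disjoint_left, List.mem_cons, List.not_mem_nil, or_false]
    rintro a (rfl | rfl) (h | h)
    · exact hij (hne2 _ _ hi hj (add_left_cancel h))
    · rw [sub_eq_add_neg] at h
      exact hne _ _ hi hj (add_left_cancel h)
    · rw [sub_eq_add_neg] at h
      exact hne _ _ hj hi (add_left_cancel h).symm
    · exact hij (hne2 _ _ hi hj (sub_right_injective h))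

lemma exists_le_two (m : ℕ) (hm : 1 ≤ m) (w : ZMod (2 * m + 1) → ZMod (2 * m + 1) → ℕ)
    (hs : ∀ a b, w a b = w b a) (hT : ∑ a, ∑ b, w a b ≤ 12 * m - 2) :
    ∃ l, IsM m l ∧ wt w l ≤ 2 := by
  by_contra hcon
  push Not at hcon
  have h3 : ∀ s, 3 ≤ wt w (rot m s) := fun s =>
    hcon _ ⟨by simp [rot], rot_nodup m s⟩
  let F : ZMod (2 * m + 1) → ℕ := fun δ => ∑ s, w (s + δ) (s - δ)
  have hF : ∀ δ, F (-δ) = F δ := by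
    intro δ
    apply Finset.sum_congr rfl
    intro s _
    rw [hs]; simp [sub_eq_add_neg]
  have h2 : IsUnit (2 : ZMod (2 * m + 1)) := by
    have := (ZMod.isUnit_iff_coprime 2 (2 * m + 1)).2 (by simp)
    exact_mod_cast this
  have hFT : ∑ δ, F δ ≤ ∑ a, ∑ b, w a b := by
    rw [← Finset.sum_product', ← Finset.sum_product']
    let g : ZMod (2 * m + 1) × ZMod (2 * m + 1) → ZMod (2 * m + 1) × ZMod (2 * m + 1) :=
      fun x => (x.2 + x.1, x.2 - x.1)
    have hg : Function.Injective g := by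
      rintro ⟨a, b⟩ ⟨c, d⟩ h
      simp only [g, Prod.mk.injEq] at h
      have e1 : 2 * b = 2 * d := by linear_combination h.1 + h.2
      have e2 : b = d := h2.mul_left_cancel e1
      subst e2
      simpa using h.1
    calc _ = ∑ x ∈ (univ ×ˢ univ).map ⟨g, hg⟩, w x.1 x.2 := by
          rw [Finset.sum_map]; rfl
      _ ≤ _ := Finset.sum_le_sum_of_subset (by simp)
  have hL : ((verts (rot m 0)).map F).sum ≤ ∑ δ, F δ := by
    rw [← List.sum_toFinset _ (rot_nodup m 0)]
    exact Finset.sum_le_sum_of_subset (Finset.subset_univ _)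
  have hL2 : ∀ l : List ℕ, ((verts (l.map (fun i => ((0 : ZMod (2 * m + 1)) + ((i + 1 : ℕ) : ZMod (2 * m + 1)), (0 : ZMod (2 * m + 1)) - ((i + 1 : ℕ) : ZMod (2 * m + 1)))))).map F).sum
      = 2 * ∑ s, wt w (l.map (fun i => (s + ((i + 1 : ℕ) : ZMod (2 * m + 1)), s - ((i + 1 : ℕ) : ZMod (2 * m + 1))))) := by
    intro l
    induction l with
    | nil => simp
    | cons i l ih =>
      rw [List.map_cons, verts_cons, List.map_cons, List.map_cons, List.sum_cons, List.sum_cons, ih]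
      simp only [List.map_cons, wt_cons, Finset.sum_add_distrib, zero_add, zero_sub, hF]
      simp only [F]
      ring
  have hL3 := hL2 (List.range m)
  have h4 : 3 * (2 * m + 1) ≤ ∑ s, wt w (rot m s) := by
    calc 3 * (2 * m + 1) = ∑ s : ZMod (2 * m + 1), 3 := by simp [ZMod.card]; ring
      _ ≤ _ := Finset.sum_le_sum (fun s _ => h3 s)
  unfold rot at hL h4
  rw [hL3] at hL
  omega

lemma exists_pos (w : C → C → ℕ) (l : List (C × C)) (h : 1 ≤ wt w l) :
    ∃ e l', l.Perm (e :: l') ∧ 1 ≤ w e.1 e.2 := by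
  by_contra hcon
  push Not at hcon
  have : wt w l = 0 := by
    unfold wt
    rw [List.sum_eq_zero_iff]
    intro x hx
    obtain ⟨e, he, rfl⟩ := List.mem_map.1 hx
    have := hcon e _ (List.perm_cons_erase he)
    omega
  omega

theorem comb (m : ℕ) (hm : 6 ≤ m) (w : ZMod (2 * m + 1) → ZMod (2 * m + 1) → ℕ)
    (hs : ∀ a b, w a b = w b a) (hT : ∑ a, ∑ b, w a b ≤ 12 * m - 2) :
    ∃ e l, IsM m (e :: l) ∧ w e.1 e.2 ≤ 1 ∧ ∀ e' ∈ l, w e'.1 e'.2 = 0 := by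
  have hz : ∀ l, wt w l = 0 → ∀ e' ∈ l, w e'.1 e'.2 = 0 := by
    intro l h e he
    have := wt_perm w (List.perm_cons_erase he)
    simp only [wt_cons] at this
    omega
  by_cases hg : ∃ l, IsM m l ∧ wt w l ≤ 1
  · obtain ⟨l, hl, hw⟩ := hg
    by_cases h1 : 1 ≤ wt w l
    · obtain ⟨e, l', hp, he⟩ := exists_pos w l h1
      have hwp := wt_perm w hp
      simp only [wt_cons] at hwp
      exact ⟨e, l', hl.perm hp, by omega, hz _ (by omega)⟩
    · cases l with
      | nil => have := hl.1; simp at this; omega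
      | cons e l =>
        simp only [wt_cons] at h1
        exact ⟨e, l, hl, by omega, hz _ (by omega)⟩
  · exfalso
    push Not at hg
    have hC : Fintype.card (ZMod (2 * m + 1)) = 2 * m + 1 := ZMod.card _
    have hmin : ∀ l, IsM m l → 2 ≤ wt w l := fun l hl => hg l hl
    have hl1 := lemma1 m hC w hs hT hmin
    obtain ⟨l, hl, hw⟩ := exists_le_two m (by omega) w hs hT
    have hw2 := hmin l hl
    obtain ⟨e1, l1, hp1, he1⟩ := exists_pos w l (by omega)
    have hM1 := hl.perm hp1
    obtain ⟨e2, l2, hp2, he2⟩ := exists_pos w l1 (hl1 _ _ hM1)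
    have hM2 : IsM m (e1 :: e2 :: l2) := hM1.perm (hp2.cons e1)
    have hwt1 := wt_perm w hp1
    have hwt2 := wt_perm w hp2
    simp only [wt_cons] at hwt1 hwt2
    obtain ⟨u, hu⟩ : ∃ z, z ∉ verts (e1 :: e2 :: l2) := by
      by_contra hcon
      push Not at hcon
      have h1 := List.toFinset_card_le (verts (e1 :: e2 :: l2))
      rw [Finset.eq_univ_of_forall (fun z => List.mem_toFinset.2 (hcon z)), Finset.card_univ, hC,
        verts_length, hM2.1] at h1
      omega
    have := lemma2 m hm w hs hl1 [u, e1.1, e1.2, e2.1, e2.2] rfl l2 (by simpa using hM2.1)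
      (by
        have h2 := hM2.2
        simp only [verts_cons] at h2 hu
        simp only [List.cons_append, List.nil_append]
        exact List.nodup_cons.2 ⟨hu, h2⟩) (by omega)
    omega

lemma combE (m : ℕ) (hm : 6 ≤ m) (w : ZMod (2 * m + 1) → ZMod (2 * m + 1) → ℕ)
    (hs : ∀ a b, w a b = w b a) (hT : ∑ a, ∑ b, w a b ≤ 12 * m - 2) :
    ∃ E : ℕ → ZMod (2 * m + 1) × ZMod (2 * m + 1),
      w (E 0).1 (E 0).2 ≤ 1 ∧ (∀ i, 0 < i → i < m → w (E i).1 (E i).2 = 0) ∧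
      (∀ i < m, (E i).1 ≠ (E i).2) ∧
      (∀ i < m, ∀ j < m, i ≠ j → List.Disjoint [(E i).1, (E i).2] [(E j).1, (E j).2]) := by
  obtain ⟨e, l, ⟨hlen, hnd⟩, he, hl⟩ := comb m hm w hs hT
  unfold verts at hnd
  rw [List.nodup_flatMap] at hnd
  have hget : ∀ i (hi : i < m), (e :: l).getD i e = (e :: l)[i]'(by omega) := by
    intro i hi
    rw [List.getD_eq_getElem]
  refine ⟨fun i => (e :: l).getD i e, by simpa using he, ?_, ?_, ?_⟩
  · intro i h0 hi
    apply hl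
    simp only [hget i hi]
    obtain ⟨j, rfl⟩ : ∃ j, i = j + 1 := ⟨i - 1, by omega⟩
    rw [List.getElem_cons_succ]
    exact List.getElem_mem _
  · intro i hi
    have := hnd.1 ((e :: l).getD i e) (by rw [hget i hi]; exact List.getElem_mem _)
    simpa using this
  · have key : ∀ i < m, ∀ j < m, i < j → List.Disjoint [((e :: l).getD i e).1, ((e :: l).getD i e).2]
        [((e :: l).getD j e).1, ((e :: l).getD j e).2] := by
      intro i hi j hj hij
      have := List.pairwise_iff_getElem.1 hnd.2 i j (by omega) (by omega) hij
      rw [hget i hi, hget j hj]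
      exact this
    intro i hi j hj hij
    rcases lt_or_gt_of_ne hij with h | h
    · exact key i hi j hj h
    · exact (key j hj i hi h).symm

end PrecolorExt

/-- r+k odd, r+k ≥ 13, k ≤ r, |D_G(P,2)| < 3(r+k-1): any (r+k)-precoloring
of P extends to a coloring of G with at most (3r+k+1)/2 colors
(colors c with 2c ≤ 3r+k+1). -/
theorem stmt_17 {V : Type*} [Fintype V] (k r : ℕ) (hk : 1 ≤ k) (hr : 2 ≤ r)
    (hkr : k ≤ r) (hodd : Odd (r + k)) (h13 : 13 ≤ r + k)
    (G : SimpleGraph V) (hχ : G.chromaticNumber ≤ r) (P : Set V)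
    (d : V → ℕ) (hd : ∀ x ∈ P, ∀ y ∈ P, G.Adj x y → d x ≠ d y)
    (hdr : ∀ x ∈ P, d x ∈ Finset.Icc 1 (r + k))
    (hD : (pairsAtMost G P 2).ncard < 3 * (r + k - 1)) :
    ∃ f : V → ℕ, (∀ u v, G.Adj u v → f u ≠ f v) ∧
      (∀ v, 1 ≤ f v ∧ 2 * f v ≤ 3 * r + k + 1) ∧ ∀ x ∈ P, f x = d x := by
  classical
  obtain ⟨m, hmrk⟩ := hodd
  have hm6 : 6 ≤ m := by omega
  have hmr : m < r := by omega
  have hrk : r + k - 1 = 2 * m := by omega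
  rw [hrk] at hD
  have hcol := SimpleGraph.chromaticNumber_le_iff_colorable.1 hχ
  obtain ⟨c⟩ := hcol
  let γ : V → ZMod (2 * m + 1) := fun x => ((d x - 1 : ℕ) : ZMod (2 * m + 1))
  have hγ : ∀ x ∈ P, (γ x).val + 1 = d x := by
    intro x hx
    have := hdr x hx
    rw [Finset.mem_Icc] at this
    simp only [γ]
    rw [ZMod.val_natCast_of_lt (by omega)]
    omega
  let D : Finset (Sym2 V) := (pairsAtMost G P 2).toFinset
  have hDc : D.card < 6 * m := by
    rw [Set.ncard_eq_toFinset_card'] at hD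
    simp only [D]
    omega
  let w : ZMod (2 * m + 1) → ZMod (2 * m + 1) → ℕ :=
    fun a b => (D.filter (fun z => Sym2.map γ z = s(a, b))).card
  have hs : ∀ a b, w a b = w b a := by
    intro a b; simp only [w, Sym2.eq_swap]
  have hT : ∑ a, ∑ b, w a b ≤ 12 * m - 2 := by
    have h1 : ∑ a, ∑ b, w a b ≤ 2 * D.card := by
      simp only [w, Finset.card_filter]
      rw [← Finset.sum_product', Finset.sum_comm, mul_comm 2 D.card, ← smul_eq_mul D.card 2]
      apply Finset.sum_le_card_nsmul
      intro z _
      rw [← Finset.card_filter]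
      induction hz : Sym2.map γ z using Sym2.ind with
      | _ p q =>
        calc _ ≤ ({(p, q), (q, p)} : Finset _).card := by
              apply Finset.card_le_card
              intro x hx
              simp only [Finset.mem_filter, Sym2.eq_iff] at hx
              simp only [Finset.mem_insert, Finset.mem_singleton, Prod.ext_iff]
              rcases hx.2 with h | h
              · left; exact ⟨h.1.symm, h.2.symm⟩
              · right; exact ⟨h.2.symm, h.1.symm⟩
          _ ≤ 2 := Finset.card_le_two
    omega
  obtain ⟨E, hE0, hE1, hEne, hEd⟩ := PrecolorExt.combE m hm6 w hs hT
  obtain ⟨i0, hi0⟩ : ∃ i0 : Fin r, ∀ x y, s(x, y) ∈ D → s(γ x, γ y) = s((E 0).1, (E 0).2) →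
      c x = i0 ∨ c y = i0 := by
    by_cases hne : ∃ z, z ∈ D.filter (fun z => Sym2.map γ z = s((E 0).1, (E 0).2))
    · obtain ⟨z, hz⟩ := hne
      induction z using Sym2.ind with
      | _ x0 y0 =>
        refine ⟨c x0, fun x y hxy hg => ?_⟩
        have h2 : s(x, y) ∈ D.filter (fun z => Sym2.map γ z = s((E 0).1, (E 0).2)) := by
          rw [Finset.mem_filter]; exact ⟨hxy, by simpa using hg⟩
        have h3 := Finset.card_le_one.1 hE0 _ h2 _ hz
        rw [Sym2.eq_iff] at h3
        rcases h3 with h | h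
        · left; rw [h.1]
        · right; rw [h.2]
    · refine ⟨⟨0, by omega⟩, fun x y hxy hg => ?_⟩
      exact absurd ⟨s(x, y), by rw [Finset.mem_filter]; exact ⟨hxy, by simpa using hg⟩⟩ hne
  let κ : V → ℕ := fun v => (Equiv.swap i0 (⟨0, by omega⟩ : Fin r) (c v)).val
  have hκr : ∀ v, κ v < r := fun v => Fin.is_lt _
  have hκ : ∀ u v, G.Adj u v → κ u ≠ κ v := by
    intro u v huv h
    exact c.valid huv (Equiv.injective _ (Fin.ext h))
  have hκ0 : ∀ v, c v = i0 → κ v = 0 := by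
    intro v hv
    simp [κ, hv]
  let ch : V → ZMod (2 * m + 1) := fun v =>
    if ∃ x ∈ P, G.Adj v x ∧ γ x = (E (κ v)).1 then (E (κ v)).2 else (E (κ v)).1
  have hch : ∀ v, ch v ∈ [(E (κ v)).1, (E (κ v)).2] := by
    intro v; simp only [ch]; split_ifs <;> simp
  have hchP : ∀ v x, κ v < m → x ∈ P → G.Adj v x → ch v ≠ γ x := by
    intro v x hv hx hvx h
    simp only [ch] at h
    split_ifs at h with hex
    · obtain ⟨y, hy, hvy, hyE⟩ := hex
      have hyx : y ≠ x := by
        rintro rfl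
        exact hEne _ hv (hyE.symm.trans h.symm)
      have hDm : s(y, x) ∈ D := by
        simp only [D, Set.mem_toFinset]
        refine ⟨y, x, rfl, hy, hx, hyx, ?_⟩
        exact ⟨SimpleGraph.Walk.cons hvy.symm (SimpleGraph.Walk.cons hvx SimpleGraph.Walk.nil),
          by simp⟩
      have hmap : s(γ y, γ x) = s((E (κ v)).1, (E (κ v)).2) := by rw [hyE, h]
      by_cases h0 : κ v = 0
      · rw [h0] at hmap
        rcases hi0 y x hDm hmap with h1 | h1
        · exact hκ v y hvy (h0.trans (hκ0 y h1).symm)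
        · exact hκ v x hvx (h0.trans (hκ0 x h1).symm)
      · have := hE1 (κ v) (by omega) hv
        simp only [w, Finset.card_eq_zero] at this
        have hmem : s(y, x) ∈ D.filter (fun z => Sym2.map γ z = s((E (κ v)).1, (E (κ v)).2)) := by
          rw [Finset.mem_filter]; exact ⟨hDm, by simpa using hmap⟩
        rw [this] at hmem
        simp at hmem
    · exact hex ⟨x, hx, hvx, h.symm⟩
  have hval : ∀ a : ZMod (2 * m + 1), a.val < 2 * m + 1 := fun a => ZMod.val_lt a
  let f : V → ℕ := fun v => if v ∈ P then d v else
    if κ v < m then (ch v).val + 1 else m + 2 + κ v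
  have hPN : ∀ u v, G.Adj u v → u ∈ P → v ∉ P → f u ≠ f v := by
    intro u v huv hu hv
    simp only [f, hu, hv, if_true, if_false]
    rw [← hγ u hu]
    split_ifs with h
    · intro h1
      exact hchP v u h hu huv.symm (ZMod.val_injective _ (by omega))
    · have := hval (γ u)
      omega
  refine ⟨f, ?_, ?_, ?_⟩
  · intro u v huv
    by_cases hu : u ∈ P <;> by_cases hv : v ∈ P
    · simp only [f, hu, hv, if_true]
      exact hd u hu v hv huv
    · exact hPN u v huv hu hv
    · exact (hPN v u huv.symm hv hu).symm
    · simp only [f, hu, hv, if_false]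
      have hne := hκ u v huv
      have h1 := hval (ch u)
      have h2 := hval (ch v)
      split_ifs with a b b
      · intro h
        have h3 : ch u = ch v := ZMod.val_injective _ (by omega)
        exact hEd _ a _ b hne (hch u) (h3 ▸ hch v)
      · omega
      · omega
      · omega
  · intro v
    simp only [f]
    have h1 := hval (ch v)
    have h2 := hκr v
    split_ifs with a b
    · have := hdr v a
      rw [Finset.mem_Icc] at this
      omega
    · omega
    · omega
  · intro x hx
    simp [f, hx]
end

section
/- Let r and k be positive integers with k > r ≥ 2, G a graph with chromatic number at most r, P ⊆ V(G), and d : P → {1,...,r+k} a proper coloring of G[P]. If |D_G(P,2)| < min{ (k+1)(k+2)/2, (k−r+2)(k+r−1) } and k > (3r−7)/2, then d can be extended to a proper (r+k)-coloring of G (using no new colors beyond those available to d). -/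
/-- `PMat J A`: the finite set `A` is perfectly matched by the relation `J`. -/
inductive PMat_s19 {C : Type*} [DecidableEq C] (J : C → C → Prop) : Finset C → Prop
  | nil : PMat_s19 J ∅
  | cons (A : Finset C) (x y : C) (hA : PMat_s19 J A) (hx : x ∉ A) (hy : y ∉ A) (hxy : x ≠ y)
      (hJ : J x y) : PMat_s19 J (insert x (insert y A))

section PMatSection
variable {C : Type*} [DecidableEq C] {J : C → C → Prop}

theorem PMat_s19.union {A B : Finset C} (hA : PMat_s19 J A) (hB : PMat_s19 J B) (h : Disjoint A B) :
    PMat_s19 J (A ∪ B) := by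
  induction hA with
  | nil => simpa using hB
  | cons A x y hA hx hy hxy hJ ih =>
    rw [Finset.disjoint_insert_left, Finset.disjoint_insert_left] at h
    have := PMat_s19.cons (A ∪ B) x y (ih h.2.2) (by simp [hx, h.1]) (by simp [hy, h.2.1]) hxy hJ
    simpa [Finset.insert_union] using this

theorem PMat_s19.even {A : Finset C} (hA : PMat_s19 J A) : ∃ p, A.card = 2 * p := by
  induction hA with
  | nil => exact ⟨0, rfl⟩
  | cons A x y hA hx hy hxy hJ ih =>
    obtain ⟨p, hp⟩ := ih
    refine ⟨p + 1, ?_⟩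
    rw [Finset.card_insert_of_notMem (by simp [hx, hxy]), Finset.card_insert_of_notMem hy]
    omega

theorem PMat_s19.sub {A : Finset C} (hA : PMat_s19 J A) :
    ∀ m, 2 * m ≤ A.card → ∃ B, PMat_s19 J B ∧ B.card = 2 * m := by
  induction hA with
  | nil => 
    intro m hm
    exact ⟨∅, PMat_s19.nil, by simp at hm; simp [hm]⟩
  | cons A x y hA hx hy hxy hJ ih =>
    intro m hm
    have hc : (insert x (insert y A)).card = A.card + 2 := by
      rw [Finset.card_insert_of_notMem (by simp [hx, hxy]), Finset.card_insert_of_notMem hy]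
    by_cases h : 2 * m ≤ A.card
    · exact ih m h
    · obtain ⟨p, hp⟩ := hA.even
      exact ⟨_, PMat_s19.cons A x y hA hx hy hxy hJ, by omega⟩

theorem PMat_s19.sum_le (w : C → ℕ) (c : ℕ) {R : Finset C} (hR : PMat_s19 J R) :
    (∀ x ∈ R, ∀ y ∈ R, x ≠ y → J x y → PMat_s19 J ((R.erase x).erase y) → c ≤ w x + w y) →
    R.card * c ≤ 2 * ∑ x ∈ R, w x := by
  induction hR with
  | nil => simp
  | cons A x y hA hx hy hxy hJ ih =>
    intro H
    have hx' : x ∉ insert y A := by simp [hx, hxy]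
    have h1 := ih (by
      intro a ha b hb hab hJab hp
      apply H a (by simp [ha]) b (by simp [hb]) hab hJab
      have := PMat_s19.cons _ x y hp (by simp [hx]) (by simp [hy]) hxy hJ
      convert this using 1
      ext z
      simp only [Finset.mem_erase, Finset.mem_insert]
      grind)
    have h2 := H x (by simp) y (by simp) hxy hJ (by
      convert hA using 1
      ext z
      simp only [Finset.mem_erase, Finset.mem_insert]
      grind)
    rw [Finset.card_insert_of_notMem hx', Finset.card_insert_of_notMem hy,
      Finset.sum_insert hx', Finset.sum_insert hy]
    nlinarith

theorem PMat_s19.owner {ι : Type*} [DecidableEq ι] [Nonempty ι] {A : Finset C} (hA : PMat_s19 J A) :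
    ∀ I : Finset ι, A.card = 2 * I.card →
      ∃ o : C → ι, ∀ i ∈ I, ∃ x ∈ A, ∃ y ∈ A, x ≠ y ∧ J x y ∧ o x = i ∧ o y = i := by
  induction hA with
  | nil =>
    intro I hI
    have : I = ∅ := by simpa using hI
    subst this
    exact ⟨fun _ => Classical.arbitrary ι, by simp⟩
  | cons A x y hA hx hy hxy hJ ih =>
    intro I hI
    rw [Finset.card_insert_of_notMem (by simp [hx, hxy]), Finset.card_insert_of_notMem hy] at hI
    obtain ⟨i, hi⟩ : I.Nonempty := by
      rw [← Finset.card_pos]; omega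
    obtain ⟨o, ho⟩ := ih (I.erase i) (by rw [Finset.card_erase_of_mem hi]; omega)
    refine ⟨fun z => if z = x ∨ z = y then i else o z, fun j hj => ?_⟩
    by_cases hji : j = i
    · exact ⟨x, by simp, y, by simp, hxy, hJ, by simp [hji], by simp [hji]⟩
    · obtain ⟨a, ha, b, hb, hab, hJab, h1, h2⟩ := ho j (by simp [hji, hj])
      have : a ≠ x := by rintro rfl; exact hx ha
      have : a ≠ y := by rintro rfl; exact hy ha
      have : b ≠ x := by rintro rfl; exact hx hb
      have : b ≠ y := by rintro rfl; exact hy hb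
      exact ⟨a, by simp [ha], b, by simp [hb], hab, hJab, by simp_all, by simp_all⟩

/-- Intermediate state of the closure procedure. -/
structure PState (J : C → C → Prop) [Fintype C] (s : ℕ) (U T R : Finset C) : Prop where
  dUT : Disjoint U T
  dUR : Disjoint U R
  dTR : Disjoint T R
  cov : ∀ z, z ∈ U ∨ z ∈ T ∨ z ∈ R
  card : T.card = U.card + s
  pm : PMat_s19 J R
  miss : ∀ a ∈ T, ∀ b ∈ T, a ≠ b → ∃ A, A ⊆ U ∪ T ∧ a ∉ A ∧ b ∉ A ∧ PMat_s19 J A ∧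
    A.card = 2 * U.card

theorem PState.step [Fintype C] {s : ℕ} {U T R : Finset C} (h : PState J s U T R)
    {x y a a' : C} (hx : x ∈ R) (hy : y ∈ R) (hxy : x ≠ y) (hJ : J x y)
    (hp : PMat_s19 J ((R.erase x).erase y)) (ha : a ∈ T) (ha' : a' ∈ T) (haa : a ≠ a')
    (hxa : J x a) (hxa' : J x a') :
    PState J s (insert x U) (insert y T) ((R.erase x).erase y) := by
  obtain ⟨dUT, dUR, dTR, cov, card, pm, miss⟩ := h
  rw [Finset.disjoint_left] at dUT dUR dTR
  have hxU : x ∉ U := fun h => dUR h hx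
  have hyU : y ∉ U := fun h => dUR h hy
  have hxT : x ∉ T := fun h => dTR h hx
  have hyT : y ∉ T := fun h => dTR h hy
  have key : ∀ b ∈ T, ∃ A, A ⊆ insert x U ∪ insert y T ∧ y ∉ A ∧ b ∉ A ∧ PMat_s19 J A ∧
      A.card = 2 * (insert x U).card := by
    intro b hb
    obtain ⟨e, he, heb, hxe⟩ : ∃ e ∈ T, e ≠ b ∧ J x e := by
      by_cases hab : a = b
      · exact ⟨a', ha', by rw [← hab]; exact haa.symm, hxa'⟩
      · exact ⟨a, ha, hab, hxa⟩
    obtain ⟨A, hA, heA, hbA, hpA, hc⟩ := miss e he b hb heb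
    have hxA : x ∉ A := fun h => by
      have := hA h
      simp [hxU, hxT] at this
    have hyA : y ∉ A := fun h => by
      have := hA h
      simp [hyU, hyT] at this
    have hxe' : x ≠ e := by rintro rfl; exact hxT he
    refine ⟨insert x (insert e A), ?_, ?_, ?_, PMat_s19.cons A x e hpA hxA heA hxe' hxe, ?_⟩
    · intro z hz
      simp only [Finset.mem_insert, Finset.mem_union] at hz ⊢
      rcases hz with rfl | rfl | hz
      · simp
      · simp [he]
      · have := hA hz
        simp only [Finset.mem_union] at this
        tauto
    · have : y ≠ e := by rintro rfl; exact hyT he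
      simp [hxy.symm, this, hyA]
    · have : b ≠ x := by rintro rfl; exact hxT hb
      simp [this, heb.symm, hbA]
    · rw [Finset.card_insert_of_notMem (by simp [hxA, hxe']), Finset.card_insert_of_notMem heA,
        Finset.card_insert_of_notMem hxU]
      omega
  refine ⟨?_, ?_, ?_, ?_, ?_, hp, ?_⟩
  · rw [Finset.disjoint_left]; intro z; simp only [Finset.mem_insert]; grind
  · rw [Finset.disjoint_left]; intro z; simp only [Finset.mem_insert, Finset.mem_erase]; grind
  · rw [Finset.disjoint_left]; intro z; simp only [Finset.mem_insert, Finset.mem_erase]; grind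
  · intro z; have := cov z; simp only [Finset.mem_insert, Finset.mem_erase]; grind
  · rw [Finset.card_insert_of_notMem hxU, Finset.card_insert_of_notMem hyT]; omega
  · intro b hb c hc hbc
    rw [Finset.mem_insert] at hb hc
    rcases hb with rfl | hb
    · rcases hc with rfl | hc
      · exact absurd rfl hbc
      · exact key c hc
    · rcases hc with rfl | hc
      · obtain ⟨A, h1, h2, h3, h4⟩ := key b hb
        exact ⟨A, h1, h3, h2, h4⟩
      · obtain ⟨A, hA, hbA, hcA, hpA, hcard⟩ := miss b hb c hc hbc
        have hxA : x ∉ A := fun h => by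
          have := hA h
          simp [hxU, hxT] at this
        have hyA : y ∉ A := fun h => by
          have := hA h
          simp [hyU, hyT] at this
        refine ⟨insert x (insert y A), ?_, ?_, ?_, PMat_s19.cons A x y hpA hxA hyA hxy hJ, ?_⟩
        · intro z hz
          simp only [Finset.mem_insert, Finset.mem_union] at hz ⊢
          rcases hz with rfl | rfl | hz
          · simp
          · simp
          · have := hA hz
            simp only [Finset.mem_union] at this
            tauto
        · have h1 : b ≠ x := by rintro rfl; exact hxT hb
          have h2 : b ≠ y := by rintro rfl; exact hyT hb
          simp [h1, h2, hbA]
        · have h1 : c ≠ x := by rintro rfl; exact hxT hc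
          have h2 : c ≠ y := by rintro rfl; exact hyT hc
          simp [h1, h2, hcA]
        · rw [Finset.card_insert_of_notMem (by simp [hxA, hxy]),
            Finset.card_insert_of_notMem hyA, Finset.card_insert_of_notMem hxU]
          omega

theorem PState.close [Fintype C] {s : ℕ} (N : ℕ) : ∀ {U T R : Finset C}, R.card ≤ N →
    PState J s U T R → ∃ U T R : Finset C, PState J s U T R ∧
      ∀ x ∈ R, ∀ y ∈ R, x ≠ y → J x y → PMat_s19 J ((R.erase x).erase y) →
        ∀ a ∈ T, ∀ a' ∈ T, J x a → J x a' → a = a' := by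
  induction N with
  | zero =>
    intro U T R hR h
    refine ⟨U, T, R, h, ?_⟩
    have : R = ∅ := by simpa using hR
    simp [this]
  | succ N ih =>
    intro U T R hR h
    by_cases H : ∀ x ∈ R, ∀ y ∈ R, x ≠ y → J x y → PMat_s19 J ((R.erase x).erase y) →
        ∀ a ∈ T, ∀ a' ∈ T, J x a → J x a' → a = a'
    · exact ⟨U, T, R, h, H⟩
    · push Not at H
      obtain ⟨x, hx, y, hy, hxy, hJ, hp, a, ha, a', ha', h1, h2, haa⟩ := H
      refine ih ?_ (h.step hx hy hxy hJ hp ha ha' haa h1 h2)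
      have := Finset.card_erase_lt_of_mem hx
      have := Finset.card_erase_le (s := R.erase x) (a := y)
      omega

theorem PState.joint [Fintype C] {s : ℕ} {U T R : Finset C} (h : PState J s U T R)
    {a b : C} (ha : a ∈ T) (hb : b ∈ T) (hab : a ≠ b) :
    ∃ B, PMat_s19 J B ∧ a ∉ B ∧ b ∉ B ∧ B.card = 2 * U.card + R.card := by
  obtain ⟨A, hA, haA, hbA, hpA, hc⟩ := h.miss a ha b hb hab
  have hd : Disjoint A R := (Finset.disjoint_union_left.2 ⟨h.dUR, h.dTR⟩).mono_left hA
  refine ⟨A ∪ R, hpA.union h.pm hd, ?_, ?_, ?_⟩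
  · simp [haA, Finset.disjoint_left.1 h.dTR ha]
  · simp [hbA, Finset.disjoint_left.1 h.dTR hb]
  · rw [Finset.card_union_of_disjoint hd, hc]

end PMatSection

theorem sum_erase_lower {C : Type*} [DecidableEq C] (T : Finset C) (g : C → ℕ) (a : C) (c : ℕ)
    (h : ∀ b ∈ T, b ≠ a → c ≤ g b) : (T.card - 1) * c ≤ ∑ b ∈ T, g b := by
  calc (T.card - 1) * c ≤ (T.erase a).card * c :=
        Nat.mul_le_mul_right _ Finset.pred_card_le_card_erase
    _ ≤ ∑ b ∈ T.erase a, g b := by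
        rw [← smul_eq_mul]
        apply Finset.card_nsmul_le_sum
        intro b hb
        rw [Finset.mem_erase] at hb
        exact h b hb.2 hb.1
    _ ≤ ∑ b ∈ T, g b := Finset.sum_le_sum_of_subset (Finset.erase_subset _ _)

theorem total_lower {C : Type*} [DecidableEq C] [Fintype C] (W : C → C → ℕ)
    (hW : ∀ a b, W a b = W b a) (T R : Finset C) (hd : Disjoint T R) (q m : ℕ)
    (hT : ∀ a ∈ T, ∀ b ∈ T, a ≠ b → q ≤ W a b)
    (hR : m ≤ 2 * ∑ x ∈ R, ∑ y ∈ T, W x y) :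
    T.card * ((T.card - 1) * q) + m ≤ ∑ x, ∑ y, W x y := by
  have h1 : T.card * ((T.card - 1) * q) ≤ ∑ x ∈ T, ∑ y ∈ T, W x y := by
    rw [← smul_eq_mul]
    apply Finset.card_nsmul_le_sum
    intro x hx
    exact sum_erase_lower T _ x q (fun b hb hbx => hT x hx b hb hbx.symm)
  have h2 : ∑ x ∈ T, ∑ y ∈ R, W x y = ∑ x ∈ R, ∑ y ∈ T, W x y := by
    rw [Finset.sum_comm]
    exact Finset.sum_congr rfl fun x _ => Finset.sum_congr rfl fun y _ => hW y x
  have h3 : ∑ x ∈ T ∪ R, ∑ y ∈ T, W x y + ∑ x ∈ T, ∑ y ∈ R, W x y ≤ ∑ x, ∑ y, W x y := by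
    calc _ ≤ ∑ x ∈ T ∪ R, ∑ y ∈ T, W x y + ∑ x ∈ T ∪ R, ∑ y ∈ R, W x y := by
          gcongr; exact Finset.subset_union_left
      _ = ∑ x ∈ T ∪ R, ∑ y ∈ T ∪ R, W x y := by
          rw [← Finset.sum_add_distrib]
          exact Finset.sum_congr rfl fun x _ => (Finset.sum_union hd).symm
      _ ≤ ∑ x ∈ T ∪ R, ∑ y, W x y := by
          gcongr; exact Finset.subset_univ _
      _ ≤ _ := Finset.sum_le_sum_of_subset (Finset.subset_univ _)
  rw [Finset.sum_union hd] at h3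
  omega

theorem arithA (r k u p τ : ℕ) (hk2 : 3 * r < 2 * k + 7) (h1 : u + p + 2 ≤ r)
    (hn : u + τ + 2 * p = r + k) :
    (k + 1) * (k + 2) ≤ τ * (τ - 1) + 4 * p * (τ - 1) := by
  obtain ⟨j, hj⟩ := Nat.exists_eq_add_of_le h1
  obtain ⟨t, rfl⟩ : ∃ t, τ = t + 1 := ⟨τ - 1, by omega⟩
  have : t + p = k + 1 + j := by omega
  simp only [Nat.add_sub_cancel]
  zify at *
  have ht : (t : ℤ) = k + 1 + j - p := by linarith
  have h5 : (0:ℤ) ≤ 2 * k + 1 + 2 * j - 3 * p := by linarith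
  have h6 := mul_nonneg (Int.natCast_nonneg p) h5
  have h7 : (0:ℤ) ≤ j * (2 * k + 3 + j) := by positivity
  rw [ht]
  nlinarith

theorem arithB (r k u p τ : ℕ) (hk : r < k) (hr : 2 ≤ r) (h1 : u + p + 1 = r)
    (hn : u + τ + 2 * p = r + k) :
    2 * ((k - r + 2) * (k + r - 1)) ≤ τ * ((τ - 1) * 2) + 4 * p * τ := by
  obtain ⟨e, rfl⟩ := Nat.exists_eq_add_of_lt hk
  obtain ⟨t, rfl⟩ : ∃ t, τ = t + 1 := ⟨τ - 1, by omega⟩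
  have e1 : r + e + 1 - r + 2 = e + 3 := by omega
  have e2 : r + e + 1 + r - 1 = 2 * r + e := by omega
  rw [e1, e2]
  simp only [Nat.add_sub_cancel]
  have ht : t = u + e + 2 := by omega
  subst ht
  subst h1
  nlinarith [Nat.zero_le (u * u), Nat.zero_le (u * p), Nat.zero_le (u*e)]

theorem comb_main {C : Type*} [DecidableEq C] [Fintype C] (r k : ℕ) (hr : 2 ≤ r) (hk : r < k)
    (hk2 : 3 * r < 2 * k + 7) (hC : Fintype.card C = r + k) (W : C → C → ℕ)
    (hW : ∀ a b, W a b = W b a)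
    (hD : ∑ x, ∑ y, W x y < min ((k + 1) * (k + 2)) (2 * ((k - r + 2) * (k + r - 1)))) :
    ∃ A : Finset C, PMat_s19 (fun a b => W a b = 0) A ∧ A.card = 2 * (r - 1) ∧
      ∃ a b, a ≠ b ∧ a ∉ A ∧ b ∉ A ∧ W a b ≤ 1 := by
  by_contra hcon
  have hcon' : ∀ A : Finset C, PMat_s19 (fun a b => W a b = 0) A → A.card = 2 * (r - 1) →
      ∀ a b, a ≠ b → a ∉ A → b ∉ A → 2 ≤ W a b := by
    intro A h1 h2 a b h3 h4 h5
    by_contra h6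
    exact hcon ⟨A, h1, h2, a, b, h3, h4, h5, by omega⟩
  clear hcon
  rw [lt_min_iff] at hD
  -- a maximum matching
  obtain ⟨M, hM, hmax⟩ : ∃ M : Finset C, PMat_s19 (fun a b => W a b = 0) M ∧
      ∀ B : Finset C, PMat_s19 (fun a b => W a b = 0) B → B.card ≤ M.card := by
    classical
    obtain ⟨M, hM, h⟩ := Finset.exists_max_image
      (Finset.univ.filter fun A : Finset C => PMat_s19 (fun a b => W a b = 0) A) Finset.card
      ⟨∅, by simp [PMat_s19.nil]⟩
    refine ⟨M, by simpa using hM, fun B hB => h B (by simpa using hB)⟩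
  obtain ⟨ν, hν⟩ := hM.even
  have hνr : ν ≤ r - 1 := by
    by_contra hlt
    obtain ⟨B, hB, hBc⟩ := hM.sub r (by omega)
    cases hB with
    | nil => simp at hBc; omega
    | cons A x y hA hx hy hxy hJ =>
      rw [Finset.card_insert_of_notMem (by simp [hx, hxy]),
        Finset.card_insert_of_notMem hy] at hBc
      have := hcon' A hA (by omega) x y hxy hx hy
      omega
  have hst : PState (fun a b => W a b = 0) (r + k - 2 * ν) ∅ Mᶜ M := by
    refine ⟨by simp, by simp, disjoint_compl_left, ?_, ?_, hM, ?_⟩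
    · intro z; by_cases h : z ∈ M <;> simp [h]
    · rw [Finset.card_compl, hC, hν]; simp
    · intro a _ b _ _
      exact ⟨∅, by simp, by simp, by simp, PMat_s19.nil, by simp⟩
  obtain ⟨U, T, R, h, hcl⟩ := PState.close M.card le_rfl hst
  obtain ⟨p, hp⟩ := h.pm.even
  have hn : U.card + T.card + 2 * p = r + k := by
    rw [← hC, ← hp, ← Finset.card_union_of_disjoint h.dUT, ← Finset.card_union_of_disjoint
      (Finset.disjoint_union_left.2 ⟨h.dUR, h.dTR⟩), ← Finset.card_univ]
    congr 1
    ext z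
    have := h.cov z
    simp only [Finset.mem_union, Finset.mem_univ, iff_true]
    tauto
  have hcT := h.card
  have hup : U.card + p = ν := by omega
  have hJs : ∀ a b, W a b = 0 → W b a = 0 := fun a b hab => by rw [hW]; exact hab
  -- each end of a pair has at most one neighbour
  have hone : ∀ x ∈ R, ∀ y ∈ R, x ≠ y → W x y = 0 →
      PMat_s19 (fun a b => W a b = 0) ((R.erase x).erase y) →
      T.card - 1 ≤ ∑ z ∈ T, W x z := by
    intro x hx y hy hxy hJ hpm
    by_cases hex : ∃ a ∈ T, W x a = 0
    · obtain ⟨a, ha, hxa⟩ := hex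
      have := sum_erase_lower T (W x) a 1 (by
        intro b hb hba
        by_contra h0
        exact hba (hcl x hx y hy hxy hJ hpm b hb a ha (by omega) hxa))
      omega
    · push Not at hex
      have := sum_erase_lower T (W x) x 1 (by
        intro b hb _
        have := hex b hb
        omega)
      omega
  rcases Nat.lt_or_ge ν (r - 1) with hlt | hge
  · -- no matching of size r - 1
    have hT : ∀ a ∈ T, ∀ b ∈ T, a ≠ b → 1 ≤ W a b := by
      intro a ha b hb hab
      by_contra h0
      obtain ⟨B, hB, haB, hbB, hBc⟩ := h.joint ha hb hab
      have := hmax _ (PMat_s19.cons B a b hB haB hbB hab (by omega))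
      rw [Finset.card_insert_of_notMem (by simp [haB, hab]),
        Finset.card_insert_of_notMem hbB] at this
      omega
    have hR := h.pm.sum_le (fun x => ∑ z ∈ T, W x z) (2 * (T.card - 1)) (by
      intro x hx y hy hxy hJ hpm
      have h1 := hone x hx y hy hxy hJ hpm
      have h2 := hone y hy x hx hxy.symm (hJs _ _ hJ) (by rwa [Finset.erase_right_comm])
      omega)
    have h3 := total_lower W hW T R h.dTR 1 _ hT hR
    have h4 := arithA r k U.card p T.card hk2 (by omega) hn
    rw [hp] at h3
    have h5 : 2 * p * (2 * (T.card - 1)) = 4 * p * (T.card - 1) := by ring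
    rw [mul_one] at h3
    omega
  · have hνe : ν = r - 1 := by omega
    have hT : ∀ a ∈ T, ∀ b ∈ T, a ≠ b → 2 ≤ W a b := by
      intro a ha b hb hab
      obtain ⟨B, hB, haB, hbB, hBc⟩ := h.joint ha hb hab
      exact hcon' B hB (by omega) a b hab haB hbB
    have hpair : ∀ x ∈ R, ∀ y ∈ R, x ≠ y → W x y = 0 →
      PMat_s19 (fun a b => W a b = 0) ((R.erase x).erase y) → (∃ a ∈ T, W x a = 0) →
      2 * T.card ≤ ∑ z ∈ T, W x z + ∑ z ∈ T, W y z := by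
      intro x hx y hy hxy hJ hpm ⟨a, ha, hxa⟩
      have h1 := hone x hx y hy hxy hJ hpm
      have h2 := sum_erase_lower T (W y) a 2 (by
        intro b hb hba
        obtain ⟨A, hA, haA, hbA, hpA, hc⟩ := h.miss a ha b hb hba.symm
        have hd : Disjoint A R := (Finset.disjoint_union_left.2 ⟨h.dUR, h.dTR⟩).mono_left hA
        have hd' : Disjoint A ((R.erase x).erase y) :=
          hd.mono_right ((Finset.erase_subset _ _).trans (Finset.erase_subset _ _))
        have hxA : x ∉ A := fun hh => Finset.disjoint_left.1 hd hh hx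
        have hyA : y ∉ A := fun hh => Finset.disjoint_left.1 hd hh hy
        have haR : a ∉ R := Finset.disjoint_left.1 h.dTR ha
        have hbR : b ∉ R := Finset.disjoint_left.1 h.dTR hb
        have hxna : x ≠ a := by rintro rfl; exact haR hx
        have hyna : y ≠ a := by rintro rfl; exact haR hy
        have hxnb : b ≠ x := by rintro rfl; exact hbR hx
        have hynb : y ≠ b := by rintro rfl; exact hbR hy
        have hx1 : x ∉ A ∪ (R.erase x).erase y := by simp [hxA]
        have ha1 : a ∉ A ∪ (R.erase x).erase y := by simp [haA, haR]
        have hm := PMat_s19.cons _ x a (hpA.union hpm hd') hx1 ha1 hxna hxa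
        refine hcon' _ hm ?_ y b hynb ?_ ?_
        · rw [Finset.card_insert_of_notMem (by simp only [Finset.mem_insert]; tauto),
            Finset.card_insert_of_notMem ha1, Finset.card_union_of_disjoint hd',
            Finset.card_erase_of_mem (by simp [hy, hxy.symm]), Finset.card_erase_of_mem hx]
          have : 1 < R.card := Finset.one_lt_card.2 ⟨x, hx, y, hy, hxy⟩
          omega
        · simp [hxy.symm, hyna, hyA]
        · simp [hxnb, hba, hbA, hbR])
      omega
    have hR := h.pm.sum_le (fun x => ∑ z ∈ T, W x z) (2 * T.card) (by
      intro x hx y hy hxy hJ hpm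
      by_cases hex : ∃ a ∈ T, W x a = 0
      · exact hpair x hx y hy hxy hJ hpm hex
      by_cases hey : ∃ a ∈ T, W y a = 0
      · have := hpair y hy x hx hxy.symm (hJs _ _ hJ) (by rwa [Finset.erase_right_comm]) hey
        omega
      · push Not at hex hey
        have h1 := Finset.card_nsmul_le_sum T (fun z => W x z) 1 (fun z hz => by have := hex z hz; omega)
        have h2 := Finset.card_nsmul_le_sum T (fun z => W y z) 1 (fun z hz => by have := hey z hz; omega)
        simp only [smul_eq_mul, mul_one] at h1 h2
        omega)
    have h3 := total_lower W hW T R h.dTR 2 _ hT hR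
    have h4 := arithB r k U.card p T.card hk hr (by omega) hn
    rw [hp] at h3
    have h5 : 2 * p * (2 * T.card) = 4 * p * T.card := by ring
    omega

/-- k > r ≥ 2, k > (3r-7)/2 and
|D_G(P,2)| < min{(k+1)(k+2)/2, (k-r+2)(k+r-1)} (stated scaled by 2): any
(r+k)-precoloring of P extends to an (r+k)-coloring of G. -/
theorem stmt_19 {V : Type*} [Fintype V] (r k : ℕ) (hr : 2 ≤ r) (hk : r < k)
    (hk2 : 3 * r < 2 * k + 7)
    (G : SimpleGraph V) (hχ : G.chromaticNumber ≤ r) (P : Set V)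
    (d : V → ℕ) (hd : ∀ x ∈ P, ∀ y ∈ P, G.Adj x y → d x ≠ d y)
    (hdr : ∀ x ∈ P, d x ∈ Finset.Icc 1 (r + k))
    (hD : 2 * (pairsAtMost G P 2).ncard <
      min ((k + 1) * (k + 2)) (2 * ((k - r + 2) * (k + r - 1)))) :
    ∃ f : V → ℕ, (∀ u v, G.Adj u v → f u ≠ f v) ∧
      (∀ v, f v ∈ Finset.Icc 1 (r + k)) ∧ ∀ x ∈ P, f x = d x := by
  classical
  obtain ⟨c⟩ : G.Colorable r := SimpleGraph.chromaticNumber_le_iff_colorable.1 hχ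
  -- ordered close pairs
  let O : Finset (V × V) := Finset.univ.filter fun q =>
    q.1 ∈ P ∧ q.2 ∈ P ∧ q.1 ≠ q.2 ∧ ∃ w : G.Walk q.1 q.2, w.length ≤ 2
  have hOsymm : ∀ x y, (x, y) ∈ O → (y, x) ∈ O := by
    intro x y hxy
    simp only [O, Finset.mem_filter, Finset.mem_univ, true_and] at hxy ⊢
    obtain ⟨h1, h2, h3, w, hw⟩ := hxy
    exact ⟨h2, h1, h3.symm, w.reverse, by simpa using hw⟩
  have hOcard : O.card ≤ 2 * (pairsAtMost G P 2).ncard := by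
    rw [Set.ncard_eq_toFinset_card']
    have := Finset.card_le_mul_card_image_of_maps_to (s := O)
      (t := (pairsAtMost G P 2).toFinset) (f := fun q => s(q.1, q.2)) (by
        intro q hq
        simp only [O, Finset.mem_filter, Finset.mem_univ, true_and] at hq
        simp only [Finset.mem_coe, Set.mem_toFinset]
        exact ⟨q.1, q.2, rfl, hq⟩) 2 (by
        intro e _
        induction e using Sym2.ind with
        | _ x y =>
          calc _ ≤ ({(x, y), (y, x)} : Finset (V × V)).card := by
                apply Finset.card_le_card
                rintro ⟨a, b⟩ hab
                simp only [Finset.mem_filter, Sym2.eq_iff] at hab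
                simp only [Finset.mem_insert, Finset.mem_singleton, Prod.mk.injEq]
                exact hab.2
            _ ≤ 2 := Finset.card_le_two)
    exact this
  let C := {z : ℕ // z ∈ Finset.Icc 1 (r + k)}
  let _ : Fintype C := inferInstanceAs (Fintype {z : ℕ // z ∈ Finset.Icc 1 (r + k)})
  let W : C → C → ℕ := fun a b => (O.filter fun q => d q.1 = a.1 ∧ d q.2 = b.1).card
  have hWs : ∀ a b, W a b = W b a := by
    intro a b
    apply Finset.card_bij (fun q _ => q.swap)
    · rintro ⟨x, y⟩ h
      simp only [Finset.mem_filter, Prod.swap_prod_mk] at h ⊢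
      exact ⟨hOsymm _ _ h.1, h.2.2, h.2.1⟩
    · intro a _ b _ h
      exact Prod.swap_injective h
    · rintro ⟨x, y⟩ h
      refine ⟨(y, x), ?_, rfl⟩
      simp only [Finset.mem_filter] at h ⊢
      exact ⟨hOsymm _ _ h.1, h.2.2, h.2.1⟩
  have hWsum : ∑ a, ∑ b, W a b ≤ O.card := by
    rw [← Fintype.sum_prod_type' (f := W)]
    simp only [W]
    rw [← Finset.card_biUnion]
    · apply Finset.card_le_card
      intro q hq
      simp only [Finset.mem_biUnion, Finset.mem_filter] at hq
      obtain ⟨_, _, h, _⟩ := hq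
      exact h
    · rintro ⟨a, b⟩ _ ⟨a', b'⟩ _ hne
      rw [Function.onFun, Finset.disjoint_left]
      intro q hq hq'
      simp only [Finset.mem_filter] at hq hq'
      apply hne
      ext
      · exact hq.2.1.symm.trans hq'.2.1
      · exact hq.2.2.symm.trans hq'.2.2
  have hCc : Fintype.card C = r + k := by
    have : Fintype.card {z : ℕ // z ∈ Finset.Icc 1 (r + k)} = r + k := by
      rw [Fintype.card_coe]; simp
    exact this
  obtain ⟨A, hA, hAc, a, b, hab, haA, hbA, hWab⟩ :=
    comb_main r k hr hk hk2 hCc W hWs (by omega)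
  -- a vertex seeing two colors
  have hsee : ∀ (v p q : V) (x y : C), x ≠ y → p ∈ P → q ∈ P → G.Adj v p → G.Adj v q →
      d p = x.1 → d q = y.1 → (p, q) ∈ O.filter fun q => d q.1 = x.1 ∧ d q.2 = y.1 := by
    intro v p q x y hxy hp hq hvp hvq hpx hqy
    simp only [O, Finset.mem_filter, Finset.mem_univ, true_and]
    refine ⟨⟨hp, hq, ?_, ?_⟩, hpx, hqy⟩
    · rintro rfl
      exact hxy (Subtype.ext (hpx.symm.trans hqy))
    · exact ⟨SimpleGraph.Walk.cons hvp.symm (SimpleGraph.Walk.cons hvq SimpleGraph.Walk.nil),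
        by simp⟩
  haveI : Nonempty (Fin r) := ⟨⟨0, by omega⟩⟩
  -- special class
  obtain ⟨j, hj⟩ : ∃ j : Fin r, ∀ v, c v = j → ∀ p ∈ P, ∀ q ∈ P, G.Adj v p → G.Adj v q →
      d p = a.1 → d q = b.1 → False := by
    by_cases hne : (O.filter fun q => d q.1 = a.1 ∧ d q.2 = b.1).Nonempty
    · obtain ⟨⟨x, y⟩, hxy⟩ := hne
      refine ⟨c x, fun v hv p hp q hq hvp hvq hpa hqb => ?_⟩
      have := Finset.card_le_one.1 hWab _ (hsee v p q a b hab hp hq hvp hvq hpa hqb) _ hxy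
      rw [Prod.mk.injEq] at this
      obtain ⟨rfl, rfl⟩ := this
      exact c.valid hvp hv
    · refine ⟨Classical.arbitrary _, fun v hv p hp q hq hvp hvq hpa hqb => ?_⟩
      exact hne ⟨_, hsee v p q a b hab hp hq hvp hvq hpa hqb⟩
  obtain ⟨o, ho⟩ := hA.owner (Finset.univ.erase j) (by
    rw [Finset.card_erase_of_mem (Finset.mem_univ _), Finset.card_univ, Fintype.card_fin, hAc])
  let o' : C → Fin r := fun z => if z ∈ A then o z else j
  have hex : ∀ v, ∃ z : C, o' z = c v ∧ ∀ p ∈ P, G.Adj v p → d p ≠ z.1 := by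
    intro v
    by_cases hv : c v = j
    · by_contra hno
      push Not at hno
      obtain ⟨p, hp, hvp, hpa⟩ := hno a (by simp [o', haA, hv])
      obtain ⟨q, hq, hvq, hqb⟩ := hno b (by simp [o', hbA, hv])
      exact hj v hv p hp q hq hvp hvq hpa hqb
    · obtain ⟨x, hx, y, hy, hxy, hJ, hox, hoy⟩ := ho (c v) (by simp [hv])
      by_contra hno
      push Not at hno
      obtain ⟨p, hp, hvp, hpa⟩ := hno x (by simp [o', hx, hox])
      obtain ⟨q, hq, hvq, hqb⟩ := hno y (by simp [o', hy, hoy])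
      have h1 := hsee v p q x y hxy hp hq hvp hvq hpa hqb
      have h2 : (O.filter fun q => d q.1 = x.1 ∧ d q.2 = y.1) = ∅ := Finset.card_eq_zero.1 hJ
      rw [h2] at h1
      simp at h1
  choose g hg1 hg2 using hex
  refine ⟨fun v => if v ∈ P then d v else (g v).1, ?_, ?_, ?_⟩
  · intro u v huv
    by_cases hu : u ∈ P <;> by_cases hv : v ∈ P <;> simp only [hu, hv, if_true, if_false]
    · exact hd u hu v hv huv
    · exact hg2 v u hu huv.symm
    · exact (hg2 u v hv huv).symm
    · intro he
      apply c.valid huv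
      rw [← hg1 u, ← hg1 v, Subtype.ext he]
  · intro v
    by_cases hv : v ∈ P
    · simp only [hv, if_true]; exact hdr v hv
    · simp only [hv, if_false]; exact (g v).2
  · intro x hx
    simp [hx]
end
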